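/- arXiv:2210.09700 — 3 statements merged into one kernel-verified Lean document; each statement's English description precedes it below -/
import Mathlib

section
/- Let d, ℓ, g be positive integers. Suppose a : {1,...,p} → ℤ>0 and b : {1,...,q} → ℤ>0 are partitions of d (i.e. a₁ + ⋯ + a_p = d and b₁ + ⋯ + b_q = d), and m : {1,...,ℓ} → ℤ>0 satisfies m₁ + ⋯ + m_ℓ = p + q − 2 + 2g and mᵢ + 1 ≤ d for every i. Then there exist ℓ + 2 permutations τ₁, τ₂, σ₁, …, σ_ℓ in the symmetric group S_d such that: (1) τ₁ τ₂ σ₁ ⋯ σ_ℓ = id; (2) the cycle type of τ₁ (as a partition of d, counting each fixed point as a part equal to 1) is (a₁, …, a_p), the cycle type of τ₂ is (b₁, …, b_q), and for each i the permutation σᵢ is a single cycle of length mᵢ + 1 (its cycle type is (mᵢ+1, 1, …, 1)); (3) the subgroup of S_d generated by τ₁, τ₂, σ₁, …, σ_ℓ acts transitively on {1, 2, …, d}. -/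
/-- The cycle type of a permutation of `Fin n`, as a partition of `n`:
the lengths of the cycles in the disjoint cycle decomposition, counting
each fixed point as a part equal to `1`. -/
def fullCycleType {n : ℕ} (σ : Equiv.Perm (Fin n)) : Multiset ℕ :=
  σ.cycleType + Multiset.replicate (n - σ.support.card) 1

section Helpers

open Equiv Equiv.Perm


theorem sc_map {X Y : Type*} {τ : Perm X} {τ' : Perm Y} (F : X → Y)
    (h : ∀ x, SameCycle τ' (F x) (F (τ x))) {x y : X} (hxy : SameCycle τ x y) :
    SameCycle τ' (F x) (F y) := by
  obtain ⟨k, rfl⟩ := hxy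
  induction k using Int.induction_on with
  | zero => exact SameCycle.refl _ _
  | succ n ih =>
    refine ih.trans ?_
    have := h ((τ ^ (n : ℤ)) x)
    rwa [← Perm.mul_apply, ← zpow_one_add, add_comm] at this
  | pred n ih =>
    refine ih.trans ?_
    have := h ((τ ^ (-(n : ℤ) - 1)) x)
    rw [← Perm.mul_apply, ← zpow_one_add] at this
    rw [show 1 + (-(n : ℤ) - 1) = -n by ring] at this
    exact this.symm

theorem sc_step {X : Type*} (τ : Perm X) (x : X) : SameCycle τ x (τ x) := ⟨1, by simp⟩

/-- `f` labels the cycles of `τ`. -/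
structure IsLab {X I : Type*} (τ : Perm X) (f : X → I) : Prop where
  inv : ∀ x, f (τ x) = f x
  same : ∀ x y, f x = f y → SameCycle τ x y
  surj : Function.Surjective f

theorem IsLab.inverse {X I : Type*} {τ : Perm X} {f : X → I} (h : IsLab τ f) :
    IsLab τ⁻¹ f where
  inv x := by
    have := h.inv (τ⁻¹ x)
    simpa using this.symm
  same x y e := (h.same x y e).inv
  surj := h.surj

theorem IsLab.ins_right {X I : Type*} [DecidableEq X] {τ : Perm X} {f : X → I} (h : IsLab τ f)
    (y : X) :
    IsLab (optionCongr τ * swap none (some y)) (fun o => o.elim (f y) f) := by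
  have hn : (optionCongr τ * swap none (some y)) none = some (τ y) := by simp
  have hy : (optionCongr τ * swap none (some y)) (some y) = none := by simp
  have hz : ∀ z, z ≠ y → (optionCongr τ * swap none (some y)) (some z) = some (τ z) := by
    intro z hz
    rw [Perm.mul_apply, swap_apply_of_ne_of_ne (by simp) (by simpa using hz)]
    simp
  set T := optionCongr τ * swap none (some y) with hT
  have step : ∀ z, SameCycle T (some z) (some (τ z)) := by
    intro z
    by_cases e : z = y
    · subst e
      refine ⟨2, ?_⟩
      rw [show (2 : ℤ) = 1 + 1 by norm_num, zpow_add, zpow_one, Perm.mul_apply, hy, hn]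
    · rw [← hz z e]; exact sc_step _ _
  have key : ∀ z w, f z = f w → SameCycle T (some z) (some w) := fun z w e =>
    sc_map (τ := τ) some step (h.same z w e)
  have hny : SameCycle T none (some y) := by
    have := sc_step T (some y)
    rw [hy] at this
    exact this.symm
  refine ⟨?_, ?_, ?_⟩
  · rintro (_ | z)
    · rw [hn]; simp [h.inv]
    · by_cases e : z = y
      · subst e; rw [hy]; simp
      · rw [hz z e]; simp [h.inv]
  · rintro (_ | z) (_ | w) e
    · exact SameCycle.refl _ _
    · exact hny.trans (key _ _ e)
    · exact (hny.trans (key _ _ e.symm)).symm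
    · exact key _ _ e
  · intro i
    obtain ⟨x, rfl⟩ := h.surj i
    exact ⟨some x, rfl⟩

theorem swap_mul_oc {X : Type*} [DecidableEq X] (τ : Perm X) (w : X) :
    swap none (some w) * optionCongr τ = optionCongr τ * swap none (some (τ⁻¹ w)) := by
  have := Equiv.mul_swap_eq_swap_mul (optionCongr τ) none (some (τ⁻¹ w))
  rw [this]; simp

theorem IsLab.ins_left {X I : Type*} [DecidableEq X] {τ : Perm X} {f : X → I} (h : IsLab τ f)
    (w : X) :
    IsLab (swap none (some w) * optionCongr τ) (fun o => o.elim (f w) f) := by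
  rw [swap_mul_oc, ← h.inverse.inv w]
  exact h.ins_right _

theorem IsLab.leaf {X I : Type*} {τ : Perm X} {f : X → I} (h : IsLab τ f) :
    IsLab (optionCongr τ) (Option.map f) := by
  refine ⟨?_, ?_, ?_⟩
  · rintro (_ | z)
    · simp
    · simp [h.inv]
  · rintro (_ | z) (_ | w) e
    · exact SameCycle.refl _ _
    · simp at e
    · simp at e
    · exact sc_map (τ := τ) some (fun x => by simpa using sc_step (optionCongr τ) (some x))
        (h.same z w (by simpa using e))
  · rintro (_ | i)
    · exact ⟨none, rfl⟩
    · obtain ⟨x, rfl⟩ := h.surj i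
      exact ⟨some x, rfl⟩

theorem IsLab.sum {X I Y K : Type*} {τ : Perm X} {f : X → I} {ρ : Perm Y} {g : Y → K}
    (h : IsLab τ f) (h' : IsLab ρ g) : IsLab (Perm.sumCongr τ ρ) (Sum.map f g) := by
  refine ⟨?_, ?_, ?_⟩
  · rintro (z | z)
    · simp [h.inv]
    · simp [h'.inv]
  · rintro (z | z) (w | w) e
    · exact sc_map (τ := τ) Sum.inl
        (fun x => by simpa using sc_step (Perm.sumCongr τ ρ) (Sum.inl x))
        (h.same z w (by simpa using e))
    · simp at e
    · simp at e
    · exact sc_map (τ := ρ) Sum.inr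
        (fun x => by simpa using sc_step (Perm.sumCongr τ ρ) (Sum.inr x))
        (h'.same z w (by simpa using e))
  · exact Sum.map_surjective.2 ⟨h.surj, h'.surj⟩

theorem IsLab.congr {X I Y : Type*} {τ : Perm X} {f : X → I} (h : IsLab τ f) (e : X ≃ Y) :
    IsLab (e.permCongr τ) (f ∘ e.symm) := by
  refine ⟨?_, ?_, ?_⟩
  · intro x; simp [h.inv]
  · intro x y hxy
    have := sc_map (τ := τ) (τ' := e.permCongr τ) e
      (fun x => by simpa using sc_step (e.permCongr τ) (e x)) (h.same _ _ hxy)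
    simpa using this
  · exact h.surj.comp e.symm.surjective

/-- `Q` is a single cycle on `s` (trivial when `s` is a singleton). -/
def Cyc {X : Type*} (Q : Perm X) (s : Finset X) : Prop :=
  (∀ x, x ∉ s → Q x = x) ∧ ∀ x ∈ s, ∀ y ∈ s, SameCycle Q x y

theorem Cyc.inverse {X : Type*} {Q : Perm X} {s : Finset X} (h : Cyc Q s) : Cyc Q⁻¹ s :=
  ⟨fun x hx => by rw [Perm.inv_eq_iff_eq, h.1 x hx], fun x hx y hy => (h.2 x hx y hy).inv⟩

theorem Cyc.ins_right {X : Type*} [DecidableEq X] {Q : Perm X} {s : Finset X} (h : Cyc Q s)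
    {x y : X} (hx : x ∉ s) (hy : y ∈ s) : Cyc (Q * swap x y) (insert x s) := by
  have hxy : x ≠ y := fun e => hx (e ▸ hy)
  have h1 : (Q * swap x y) y = x := by simp [h.1 x hx]
  have h2 : (Q * swap x y) x = Q y := by simp
  have h3 : ∀ z, z ≠ x → z ≠ y → (Q * swap x y) z = Q z := fun z a b => by
    rw [Perm.mul_apply, swap_apply_of_ne_of_ne a b]
  set T := Q * swap x y with hT
  have step : ∀ z, SameCycle T z (Q z) := by
    intro z
    by_cases e1 : z = x
    · subst e1; rw [h.1 z hx]
    by_cases e2 : z = y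
    · subst e2
      refine ⟨2, ?_⟩
      rw [show (2 : ℤ) = 1 + 1 by norm_num, zpow_add, zpow_one, Perm.mul_apply, h1, h2]
    · rw [← h3 z e1 e2]; exact sc_step _ _
  have hyx : SameCycle T y x := by
    have := sc_step T y
    rwa [h1] at this
  have key : ∀ z ∈ insert x s, SameCycle T y z := by
    intro z hz
    rcases Finset.mem_insert.1 hz with rfl | hz
    · exact hyx
    · exact sc_map (τ := Q) id step (h.2 y hy z hz)
  refine ⟨?_, fun z hz w hw => (key z hz).symm.trans (key w hw)⟩
  intro z hz
  rw [Finset.mem_insert, not_or] at hz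
  rw [h3 z hz.1 (fun e => hz.2 (e ▸ hy)), h.1 z hz.2]

theorem Cyc.ins_left {X : Type*} [DecidableEq X] {Q : Perm X} {s : Finset X} (h : Cyc Q s)
    {x y : X} (hx : x ∉ s) (hy : y ∈ s) : Cyc (swap x y * Q) (insert x s) := by
  have := (h.inverse.ins_right hx hy).inverse
  simpa using this

theorem Cyc.option {X : Type*} {Q : Perm X} {s : Finset X} (h : Cyc Q s) :
    Cyc (optionCongr Q) (s.map Function.Embedding.some) := by
  constructor
  · rintro (_ | x) hx
    · simp
    · have : x ∉ s := by simpa using hx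
      simp [h.1 x this]
  · intro x hx y hy
    obtain ⟨x, hx', rfl⟩ := Finset.mem_map.1 hx
    obtain ⟨y, hy', rfl⟩ := Finset.mem_map.1 hy
    exact sc_map (τ := Q) some (fun x => by simpa using sc_step (optionCongr Q) (some x))
        (h.2 x hx' y hy')

theorem Cyc.apply_mem {X : Type*} {Q : Perm X} {s : Finset X} (h : Cyc Q s) {y : X}
    (hy : y ∈ s) : Q y ∈ s := by
  by_contra hc
  have := h.1 _ hc
  have := Q.injective this
  exact hc (this.symm ▸ hy)

theorem three_aux {X : Type*} [DecidableEq X] {Q : Perm X} {y : X} {n a b : ℕ}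
    (hn : Function.minimalPeriod Q y = n) (ha : 0 < a) (hab : a < b) (hb : b < n) {w v : X}
    (hw : Q^[a] y = w) (hv : Q^[b] y = v) (k : ℕ) (hk : k < n) :
    SameCycle (swap y v * swap y w * Q) y (Q^[k] y) := by
  have inj : ∀ i j, i < n → j < n → (Q^[i] y = Q^[j] y) → i = j := by
    intro i j hi hj e
    exact (Function.iterate_eq_iterate_iff_of_lt_minimalPeriod (hn ▸ hi) (hn ▸ hj)).1 e
  have hyw : y ≠ w := fun e => by
    have := inj 0 a (by omega) (by omega) (by simpa [hw] using e); omega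
  have hyv : y ≠ v := fun e => by
    have := inj 0 b (by omega) (by omega) (by simpa [hv] using e); omega
  have hwv : w ≠ v := fun e => by
    have := inj a b (by omega) (by omega) (by rw [hw, hv, e]); omega
  set T := swap y v * swap y w * Q with hT
  have arc : ∀ k, k + 1 < n → k + 1 ≠ a → k + 1 ≠ b →
      SameCycle T (Q^[k] y) (Q^[k+1] y) := by
    intro k h1 h2 h3
    have : T (Q^[k] y) = Q^[k+1] y := by
      rw [hT, Perm.mul_apply, Perm.mul_apply, ← Function.iterate_succ_apply' Q k y]
      have n1 : Q^[k+1] y ≠ y := fun e => by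
        have := inj (k+1) 0 h1 (by omega) e; omega
      have n2 : Q^[k+1] y ≠ w := fun e => by
        have := inj (k+1) a h1 (by omega) (e.trans hw.symm); omega
      have n3 : Q^[k+1] y ≠ v := fun e => by
        have := inj (k+1) b h1 (by omega) (e.trans hv.symm); omega
      rw [Nat.succ_eq_add_one, swap_apply_of_ne_of_ne n1 n2, swap_apply_of_ne_of_ne n1 n3]
    rw [← this]; exact sc_step _ _
  have ja : SameCycle T (Q^[a-1] y) v := by
    have : T (Q^[a-1] y) = v := by
      rw [hT, Perm.mul_apply, Perm.mul_apply, ← Function.iterate_succ_apply' Q (a-1) y,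
        Nat.succ_eq_add_one, Nat.sub_add_cancel ha, hw]
      simp
    rw [← this]; exact sc_step _ _
  have jb : SameCycle T (Q^[b-1] y) y := by
    have : T (Q^[b-1] y) = y := by
      rw [hT, Perm.mul_apply, Perm.mul_apply, ← Function.iterate_succ_apply' Q (b-1) y,
        Nat.succ_eq_add_one, Nat.sub_add_cancel (by omega), hv,
        swap_apply_of_ne_of_ne hyv.symm hwv.symm]
      simp
    nth_rewrite 2 [← this]; exact sc_step _ _
  have s1 : ∀ k, k < a → SameCycle T y (Q^[k] y) := by
    intro k
    induction k with
    | zero => intro _; exact SameCycle.refl _ _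
    | succ k ih => intro h; exact (ih (by omega)).trans (arc k (by omega) (by omega) (by omega))
  have s2 : ∀ j, a + j < b → SameCycle T w (Q^[a+j] y) := by
    intro j
    induction j with
    | zero => intro _; rw [add_zero, hw]
    | succ k ih =>
      intro h
      exact (ih (by omega)).trans (arc (a+k) (by omega) (by omega) (by omega))
  have s3 : ∀ j, b + j < n → SameCycle T v (Q^[b+j] y) := by
    intro j
    induction j with
    | zero => intro _; rw [add_zero, hv]
    | succ k ih =>
      intro h
      exact (ih (by omega)).trans (arc (b+k) (by omega) (by omega) (by omega))
  have yv : SameCycle T y v := (s1 (a-1) (by omega)).trans ja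
  have yw : SameCycle T y w := by
    have := (s2 (b-1-a) (by omega))
    rw [show a + (b-1-a) = b-1 by omega] at this
    exact (this.trans jb).symm
  rcases lt_or_ge k a with h | h
  · exact s1 k h
  rcases lt_or_ge k b with h' | h'
  · have := s2 (k-a) (by omega)
    rw [show a + (k-a) = k by omega] at this
    exact yw.trans this
  · have := s3 (k-b) (by omega)
    rw [show b + (k-b) = k by omega] at this
    exact yv.trans this

theorem Cyc.three {X : Type*} [Fintype X] [DecidableEq X] {Q : Perm X} {s : Finset X}
    (h : Cyc Q s) {y w v : X} (hy : y ∈ s) (hw : w ∈ s) (hv : v ∈ s) (hyw : y ≠ w)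
    (hyv : y ≠ v) (hwv : w ≠ v) :
    Cyc (swap y v * swap y w * Q) s ∨ Cyc (swap y w * swap y v * Q) s := by
  have hper : y ∈ Function.periodicPts Q := by
    refine ⟨orderOf Q, orderOf_pos Q, ?_⟩
    rw [Function.IsPeriodicPt, Function.IsFixedPt, Perm.iterate_eq_pow, pow_orderOf_eq_one]
    rfl
  have hpos : 0 < Function.minimalPeriod Q y := Function.minimalPeriod_pos_of_mem_periodicPts hper
  have ex : ∀ z ∈ s, ∃ k < Function.minimalPeriod Q y, Q^[k] y = z := by
    intro z hz
    obtain ⟨i, -, hi⟩ := (h.2 y hy z hz).exists_pow_eq'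
    refine ⟨i % Function.minimalPeriod Q y, Nat.mod_lt _ hpos, ?_⟩
    rw [Function.iterate_mod_minimalPeriod_eq, Perm.iterate_eq_pow, hi]
  obtain ⟨a, ha, haw⟩ := ex w hw
  obtain ⟨b, hb, hbv⟩ := ex v hv
  have ha0 : 0 < a := Nat.pos_of_ne_zero (fun e => hyw (by subst e; simpa using haw))
  have hb0 : 0 < b := Nat.pos_of_ne_zero (fun e => hyv (by subst e; simpa using hbv))
  have out : ∀ w v, w ∈ s → v ∈ s → ∀ x, x ∉ s → (swap y v * swap y w * Q) x = x := by
    intro w v hw hv x hx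
    have n1 : x ≠ y := fun e => hx (e ▸ hy)
    have n2 : x ≠ w := fun e => hx (e ▸ hw)
    have n3 : x ≠ v := fun e => hx (e ▸ hv)
    rw [Perm.mul_apply, Perm.mul_apply, h.1 x hx, swap_apply_of_ne_of_ne n1 n2,
      swap_apply_of_ne_of_ne n1 n3]
  have fin : ∀ T : Perm X, (∀ k < Function.minimalPeriod Q y, SameCycle T y (Q^[k] y)) →
      ∀ x ∈ s, ∀ z ∈ s, SameCycle T x z := by
    intro T hT x hx z hz
    obtain ⟨i, hi, rfl⟩ := ex x hx
    obtain ⟨j, hj, rfl⟩ := ex z hz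
    exact (hT i hi).symm.trans (hT j hj)
  rcases lt_trichotomy a b with hab | hab | hab
  · left
    exact ⟨out w v hw hv, fin _ (three_aux rfl ha0 hab hb haw hbv)⟩
  · subst hab; exact absurd (haw.symm.trans hbv) hwv
  · right
    exact ⟨out v w hv hw, fin _ (three_aux rfl hb0 hab ha hbv haw)⟩

open Classical in
/-- size of the fibre of a labelling -/
noncomputable def fc {X I : Type} [Fintype X] (f : X → I) (i : I) : ℕ :=
  ∑ x, if f x = i then 1 else 0

/-- multiset of fibre sizes -/
noncomputable def ty {X I : Type} [Fintype X] [Fintype I] (f : X → I) : Multiset ℕ :=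
  Finset.univ.val.map (fc f)

theorem fc_ins {X I : Type} [Fintype X] (f : X → I) (i : I) :
    fc (fun o : Option X => o.elim i f) i = fc f i + 1 := by
  simp only [fc, Fintype.sum_option]; simp [add_comm, -Finset.sum_boole]
  exact Finset.sum_congr rfl fun x _ => by split_ifs <;> simp_all

theorem fc_ins_ne {X I : Type} [Fintype X] (f : X → I) {i j : I} (h : j ≠ i) :
    fc (fun o : Option X => o.elim i f) j = fc f j := by
  simp only [fc, Fintype.sum_option]; simp [h.symm, -Finset.sum_boole]
  exact Finset.sum_congr rfl fun x _ => by split_ifs <;> simp_all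

theorem ty_eq_cons {X I : Type} [Fintype X] [Fintype I] [DecidableEq I] (f : X → I) (i : I) :
    ty f = fc f i ::ₘ (Finset.univ.erase i).val.map (fc f) := by
  rw [ty, ← Multiset.map_cons (fc f), Finset.erase_val, Multiset.cons_erase]
  simp

theorem ty_ins {X I : Type} [Fintype X] [Fintype I] (f : X → I) (i : I) {A : Multiset ℕ}
    (h : ty f = fc f i ::ₘ A) :
    ty (fun o : Option X => o.elim i f) = (fc f i + 1) ::ₘ A := by
  classical
  rw [ty_eq_cons f i, Multiset.cons_inj_right] at h
  rw [ty_eq_cons _ i, fc_ins, ← h]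
  congr 1
  apply Multiset.map_congr rfl
  intro j hj
  exact fc_ins_ne f (Finset.ne_of_mem_erase hj)

theorem ty_leaf {X I : Type} [Fintype X] [Fintype I] (f : X → I) :
    ty (Option.map f) = 1 ::ₘ ty f := by
  have h1 : fc (Option.map f) none = 1 := by simp only [fc, Fintype.sum_option]; simp
  have h2 : ∀ i, fc (Option.map f) (some i) = fc f i := by
    intro i; simp only [fc, Fintype.sum_option]; simp [-Finset.sum_boole]
    exact Finset.sum_congr rfl fun x _ => by split_ifs <;> simp_all
  rw [ty, ty]
  simp only [univ_option, Finset.insertNone]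
  simp [h1, h2]

theorem ty_sum {X I Y K : Type} [Fintype X] [Fintype I] [Fintype Y] [Fintype K]
    (f : X → I) (g : Y → K) : ty (Sum.map f g) = ty f + ty g := by
  have h1 : ∀ i, fc (Sum.map f g) (Sum.inl i) = fc f i := by
    intro i; simp only [fc, Fintype.sum_sum_type]; simp [-Finset.sum_boole]
    exact Finset.sum_congr rfl fun x _ => by split_ifs <;> simp_all
  have h2 : ∀ i, fc (Sum.map f g) (Sum.inr i) = fc g i := by
    intro i; simp only [fc, Fintype.sum_sum_type]; simp [-Finset.sum_boole]
    exact Finset.sum_congr rfl fun x _ => by split_ifs <;> simp_all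
  rw [ty, ty, ty, ← Finset.univ_disjSum_univ, Finset.val_disjSum, Multiset.disjSum]
  simp [h1, h2]

theorem exists_of_ty {X I : Type} [Fintype X] [Fintype I] {f : X → I} {u : ℕ} {A : Multiset ℕ}
    (h : ty f = u ::ₘ A) : ∃ i, fc f i = u := by
  have : u ∈ ty f := by rw [h]; simp
  simpa [ty] using this

theorem exists_two_of_ty {X I : Type} [Fintype X] [Fintype I] {f : X → I} {u v : ℕ}
    {A : Multiset ℕ} (h : ty f = u ::ₘ v ::ₘ A) : ∃ i j, i ≠ j ∧ fc f i = u ∧ fc f j = v := by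
  classical
  obtain ⟨i, hi⟩ := exists_of_ty h
  rw [ty_eq_cons f i, hi, Multiset.cons_inj_right] at h
  have : v ∈ Multiset.map (fc f) (Finset.univ.erase i).val := by rw [h]; simp
  obtain ⟨j, hj, hj'⟩ := Multiset.mem_map.1 this
  exact ⟨i, j, (Finset.ne_of_mem_erase hj).symm, hi, hj'⟩

theorem ty_sum_eq {X I : Type} [Fintype X] [Fintype I] (f : X → I) :
    (ty f).sum = Fintype.card X := by
  classical
  change ∑ i, fc f i = _
  simp only [fc]
  rw [Finset.sum_comm]
  simp

/-- A pair of permutations with labelled cycles whose product is a single cycle on `s`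
meeting every cycle of both. -/
structure Cfg (X I J : Type) where
  t1 : Perm X
  t2 : Perm X
  f1 : X → I
  f2 : X → J
  s : Finset X
  h1 : IsLab t1 f1
  h2 : IsLab t2 f2
  cyc : Cyc (t2 * t1) s
  m1 : ∀ i, ∃ x ∈ s, f1 x = i
  m2 : ∀ j, ∃ x ∈ s, f2 x = j

def Sol (a b : Multiset ℕ) (n : ℕ) : Prop :=
  ∃ (X I J : Type) (_ : Fintype X) (_ : Fintype I) (_ : Fintype J) (C : Cfg X I J),
    ty C.f1 = a ∧ ty C.f2 = b ∧ C.s.card = n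

def SolAdj (a b : Multiset ℕ) (u v n : ℕ) : Prop :=
  ∃ (X I J : Type) (_ : Fintype X) (_ : Fintype I) (_ : Fintype J) (C : Cfg X I J),
    ty C.f1 = a ∧ ty C.f2 = b ∧ C.s.card = n ∧
      ∃ z, fc C.f1 (C.f1 z) = u ∧ fc C.f2 (C.f2 z) = v

theorem SolAdj.sol {a b u v n} (h : SolAdj a b u v n) : Sol a b n := by
  obtain ⟨X, I, J, _, _, _, C, h1, h2, h3, -⟩ := h
  exact ⟨X, I, J, _, _, _, C, h1, h2, h3⟩

def Cfg.symm {X I J : Type} (C : Cfg X I J) : Cfg X J I where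
  t1 := C.t2⁻¹
  t2 := C.t1⁻¹
  f1 := C.f2
  f2 := C.f1
  s := C.s
  h1 := C.h2.inverse
  h2 := C.h1.inverse
  cyc := by rw [← mul_inv_rev]; exact C.cyc.inverse
  m1 := C.m2
  m2 := C.m1

theorem Sol.symm {a b n} (h : Sol a b n) : Sol b a n := by
  obtain ⟨X, I, J, _, _, _, C, h1, h2, h3⟩ := h
  exact ⟨X, J, I, _, _, _, C.symm, h2, h1, h3⟩

theorem SolAdj.symm {a b u v n} (h : SolAdj a b u v n) : SolAdj b a v u n := by
  obtain ⟨X, I, J, _, _, _, C, h1, h2, h3, z, h4, h5⟩ := h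
  exact ⟨X, J, I, _, _, _, C.symm, h2, h1, h3, z, h5, h4⟩

theorem sol_one_adj : SolAdj {1} {1} 1 1 1 := by
  have hl : IsLab (1 : Perm Unit) (id : Unit → Unit) :=
    ⟨fun _ => rfl, fun _ _ _ => SameCycle.refl _ _, Function.surjective_id⟩
  refine ⟨Unit, Unit, Unit, inferInstance, inferInstance, inferInstance,
    ⟨1, 1, id, id, {()}, hl, hl, ?_, ?_, ?_⟩, ?_, ?_, ?_, (), ?_, ?_⟩
  · exact ⟨fun _ _ => rfl, fun _ _ _ _ => SameCycle.refl _ _⟩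
  · simp
  · simp
  all_goals simp [ty, fc]

theorem SolAdj.r1 {A B : Multiset ℕ} {u v n : ℕ} (h : SolAdj (u ::ₘ A) (v ::ₘ B) u v n) :
    SolAdj ((u + 1) ::ₘ A) ((v + 1) ::ₘ B) (u + 1) (v + 1) n := by
  classical
  obtain ⟨X, I, J, _, _, _, C, h1, h2, h3, z, rfl, rfl⟩ := h
  have e1 : C.f1 (C.t1⁻¹ z) = C.f1 z := C.h1.inverse.inv z
  have e2 : C.f2 (C.t2 z) = C.f2 z := C.h2.inv z
  refine ⟨Option X, I, J, inferInstance, inferInstance, inferInstance,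
    ⟨optionCongr C.t1 * swap none (some (C.t1⁻¹ z)), swap none (some (C.t2 z)) * optionCongr C.t2,
      fun o => o.elim (C.f1 z) C.f1, fun o => o.elim (C.f2 z) C.f2,
      C.s.map Function.Embedding.some, ?_, ?_, ?_, ?_, ?_⟩, ?_, ?_, ?_, none, ?_, ?_⟩
  · rw [← e1]; exact C.h1.ins_right _
  · rw [← e2]; exact C.h2.ins_left _
  · have : swap none (some (C.t2 z)) * optionCongr C.t2 *
        (optionCongr C.t1 * swap none (some (C.t1⁻¹ z))) = optionCongr (C.t2 * C.t1) := by
      rw [swap_mul_oc]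
      have := swap_mul_oc C.t1 z
      rw [← this]
      ext1 o
      simp
    rw [this]
    exact C.cyc.option
  · intro i
    obtain ⟨x, hx, rfl⟩ := C.m1 i
    exact ⟨some x, by simpa using hx, rfl⟩
  · intro i
    obtain ⟨x, hx, rfl⟩ := C.m2 i
    exact ⟨some x, by simpa using hx, rfl⟩
  · exact ty_ins _ _ h1
  · exact ty_ins _ _ h2
  · simpa using h3
  · exact fc_ins _ _
  · exact fc_ins _ _

theorem Sol.r2 {A B : Multiset ℕ} {u n : ℕ} (h : Sol (u ::ₘ A) B n) :
    SolAdj ((u + 1) ::ₘ A) (1 ::ₘ B) (u + 1) 1 (n + 1) := by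
  classical
  obtain ⟨X, I, J, _, _, _, C, h1, h2, h3⟩ := h
  obtain ⟨i, rfl⟩ := exists_of_ty h1
  obtain ⟨y, hy, rfl⟩ := C.m1 i
  refine ⟨Option X, I, Option J, inferInstance, inferInstance, inferInstance,
    ⟨optionCongr C.t1 * swap none (some y), optionCongr C.t2,
      fun o => o.elim (C.f1 y) C.f1, Option.map C.f2,
      insert none (C.s.map Function.Embedding.some), ?_, ?_, ?_, ?_, ?_⟩, ?_, ?_, ?_, none, ?_, ?_⟩
  · exact C.h1.ins_right _
  · exact C.h2.leaf
  · have : optionCongr C.t2 * (optionCongr C.t1 * swap none (some y))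
        = optionCongr (C.t2 * C.t1) * swap none (some y) := by
      ext1 o
      simp
    rw [this]
    exact C.cyc.option.ins_right (by simp) (by simpa using hy)
  · intro i
    obtain ⟨x, hx, rfl⟩ := C.m1 i
    exact ⟨some x, by simpa using hx, rfl⟩
  · rintro (_ | i)
    · exact ⟨none, by simp, rfl⟩
    obtain ⟨x, hx, rfl⟩ := C.m2 i
    exact ⟨some x, by simpa using hx, rfl⟩
  · exact ty_ins _ _ h1
  · rw [ty_leaf, h2]
  · rw [Finset.card_insert_of_notMem (by simp), Finset.card_map, h3]
  · exact fc_ins _ _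
  · simp [fc]

theorem oc_mul {X : Type} (f g : Perm X) :
    optionCongr (f * g) = optionCongr f * optionCongr g := by
  ext1 o
  rcases o with _ | o <;> simp

theorem oc_swap {X : Type} [DecidableEq X] (x y : X) :
    optionCongr (swap x y) = swap (some x) (some y) := by
  ext1 o
  rcases o with _ | o
  · exact (swap_apply_of_ne_of_ne (a := some x) (b := some y) (x := none) (by simp) (by simp)).symm
  · simp only [optionCongr_apply, Option.map_some, swap_apply_def, Option.some.injEq]
    split_ifs <;> rfl

theorem swap_id1 {X : Type} [DecidableEq X] (Q : Perm X) {x1 x2 y w : X} (h1 : Q x1 = x1)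
    (h2 : Q x2 = x2) (h : x1 ≠ x2) (hy1 : y ≠ x1) (hy2 : y ≠ x2) (hw1 : w ≠ x1) (hw2 : w ≠ x2) :
    swap x2 w * swap x1 w * Q * swap x1 y * swap x2 x1 = swap x1 w * (Q * swap x2 y) := by
  have e1 : swap x2 w * swap x1 w = swap x1 w * swap x1 x2 := by
    ext1 z; simp only [Perm.mul_apply, swap_apply_def]; grind
  have e2 : swap x1 x2 * Q = Q * swap x1 x2 := by
    rw [mul_swap_eq_swap_mul, h1, h2]
  have e3 : swap x1 x2 * (swap x1 y * swap x2 x1) = swap x2 y := by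
    ext1 z; simp only [Perm.mul_apply, swap_apply_def]; grind
  rw [e1, mul_assoc (swap x1 w), e2, mul_assoc, mul_assoc, mul_assoc, e3]

theorem swap_id2 {X : Type} [DecidableEq X] {x1 x2 y v w : X}
    (h : x1 ≠ x2) (hy1 : y ≠ x1) (hy2 : y ≠ x2) (hw1 : w ≠ x1) (hw2 : w ≠ x2)
    (hv1 : v ≠ x1) (hv2 : v ≠ x2) (hyv : y ≠ v) (hyw : y ≠ w) (hvw : v ≠ w) :
    swap x2 v * swap x1 w * swap x1 y * swap x2 y =
      swap x2 w * swap x1 y * swap y w * swap y v := by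
  ext1 z; simp only [Perm.mul_apply, swap_apply_def]; grind

theorem swap_id3 {X : Type} [DecidableEq X] {x1 x2 v w : X}
    (h : x1 ≠ x2) (hw1 : w ≠ x1) (hw2 : w ≠ x2)
    (hv1 : v ≠ x1) (hv2 : v ≠ x2) (hvw : v ≠ w) :
    swap x2 v * swap x1 w * swap x1 v * swap x2 v = swap x1 x2 * swap x2 w := by
  ext1 z; simp only [Perm.mul_apply, swap_apply_def]; grind

/-- the double insertion -/
theorem Cfg.double {X I J : Type} [Fintype X] [Fintype I] [Fintype J] [DecidableEq X]
    (C : Cfg X I J) (y : X) (w : X) (y2 : Option X) (w2 : Option X) {a b : Multiset ℕ} {n : ℕ}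
    (hn : C.s.card = n)
    (hy2 : y2.elim (C.f1 y) C.f1 = C.f1 y)
    (ha : ty (fun o : Option (Option X) => o.elim (C.f1 y) fun o => o.elim (C.f1 y) C.f1) = a)
    (hb : ty (fun o : Option (Option X) => o.elim (w2.elim (C.f2 w) C.f2)
      fun o => o.elim (C.f2 w) C.f2) = b)
    (hc : Cyc (swap none (some w2) * optionCongr (swap none (some w) * optionCongr (C.t2 * C.t1) *
      swap none (some y)) * swap none (some y2))
      (insert none ((insert none (C.s.map Function.Embedding.some)).map
        Function.Embedding.some))) :
    ∃ D : Cfg (Option (Option X)) I J, ty D.f1 = a ∧ ty D.f2 = b ∧ D.s.card = n + 2 ∧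
      D.f1 = (fun o : Option (Option X) => o.elim (C.f1 y) fun o => o.elim (C.f1 y) C.f1) ∧
      D.f2 = (fun o : Option (Option X) => o.elim (w2.elim (C.f2 w) C.f2)
      fun o => o.elim (C.f2 w) C.f2) := by
  classical
  refine ⟨⟨optionCongr (optionCongr C.t1 * swap none (some y)) * swap none (some y2),
    swap none (some w2) * optionCongr (swap none (some w) * optionCongr C.t2),
    (fun o : Option (Option X) => o.elim (C.f1 y) fun o => o.elim (C.f1 y) C.f1),
    (fun o : Option (Option X) => o.elim (w2.elim (C.f2 w) C.f2)
      fun o => o.elim (C.f2 w) C.f2),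
    (insert none ((insert none (C.s.map Function.Embedding.some)).map
        Function.Embedding.some)), ?_, ?_, ?_, ?_, ?_⟩, ha, hb, ?_, rfl, rfl⟩
  · have := (C.h1.ins_right y).ins_right y2
    simpa only [hy2] using this
  · exact (C.h2.ins_left w).ins_left w2
  · convert hc using 1
    simp only [oc_mul, mul_assoc]
  · intro i
    obtain ⟨x, hx, rfl⟩ := C.m1 i
    exact ⟨some (some x), by simpa using hx, rfl⟩
  · intro i
    obtain ⟨x, hx, rfl⟩ := C.m2 i
    exact ⟨some (some x), by simpa using hx, rfl⟩
  · rw [Finset.card_insert_of_notMem (by simp), Finset.card_map,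
      Finset.card_insert_of_notMem (by simp), Finset.card_map, hn]

theorem Sol.r3 {A B : Multiset ℕ} {u v n : ℕ} (h : Sol (u ::ₘ A) (v ::ₘ B) n) :
    SolAdj ((u + 2) ::ₘ A) ((v + 2) ::ₘ B) (u + 2) (v + 2) (n + 2) := by
  classical
  obtain ⟨X, I, J, _, _, _, C, h1, h2, h3⟩ := h
  obtain ⟨i, rfl⟩ := exists_of_ty h1
  obtain ⟨j, rfl⟩ := exists_of_ty h2
  obtain ⟨y, hy, rfl⟩ := C.m1 i
  obtain ⟨w, hw, rfl⟩ := C.m2 j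
  have k1 := ty_ins _ _ h1
  have k2 := ty_ins _ _ h2
  rw [← fc_ins] at k1 k2
  have k1 := ty_ins _ _ k1
  have k2 := ty_ins _ _ k2
  rw [fc_ins] at k1 k2
  obtain ⟨D, d1, d2, d3, d4, d5⟩ := C.double y w none (some w) h3 rfl k1 k2 (by
    have : swap none (some (some w)) * optionCongr (swap none (some w) * optionCongr (C.t2 * C.t1) *
      swap none (some y)) * swap none (some none) =
      swap (some none) (some (some w)) * (optionCongr (optionCongr (C.t2 * C.t1)) *
        swap none (some (some y))) := by
      simp only [oc_mul, oc_swap]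
      have := swap_id1 (optionCongr (optionCongr C.t2) * optionCongr (optionCongr C.t1))
        (x1 := some none) (x2 := none) (y := some (some y)) (w := some (some w))
        (by simp) (by simp) (by simp) (by simp) (by simp) (by simp) (by simp)
      simpa only [mul_assoc] using this
    rw [this]
    rw [Finset.map_insert, Finset.insert_comm]
    refine Cyc.ins_left (Cyc.ins_right C.cyc.option.option ?_ ?_) ?_ ?_ <;> simp [hy, hw])
  refine ⟨_, I, J, inferInstance, inferInstance, inferInstance, D, d1, d2, d3, none, ?_, ?_⟩
  · rw [d4]
    exact (fc_ins _ _).trans (by rw [fc_ins])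
  · rw [d5]
    exact (fc_ins _ _).trans (congrArg (· + 1) (fc_ins _ _))

theorem Cfg.r3core {X I J : Type} [Fintype X] [Fintype I] [Fintype J] [DecidableEq X]
    (C : Cfg X I J) {y v w : X} (hy : y ∈ C.s) (hv : v ∈ C.s) (hw : w ∈ C.s)
    (hvw : C.f2 v ≠ C.f2 w) {A B : Multiset ℕ}
    (h1 : ty C.f1 = fc C.f1 (C.f1 y) ::ₘ A)
    (h2 : ty C.f2 = fc C.f2 (C.f2 v) ::ₘ fc C.f2 (C.f2 w) ::ₘ B)
    (hc : (C.t2 * C.t1) y = v ∨ ((C.t2 * C.t1) y ≠ v ∧ (C.t2 * C.t1) y ≠ w ∧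
      Cyc (swap ((C.t2 * C.t1) y) w * swap ((C.t2 * C.t1) y) v * (C.t2 * C.t1)) C.s)) :
    ∃ D : Cfg (Option (Option X)) I J, ty D.f1 = (fc C.f1 (C.f1 y) + 2) ::ₘ A ∧
      ty D.f2 = (fc C.f2 (C.f2 v) + 1) ::ₘ (fc C.f2 (C.f2 w) + 1) ::ₘ B ∧
      D.s.card = C.s.card + 2 ∧
      (∃ z, fc D.f1 (D.f1 z) = fc C.f1 (C.f1 y) + 2 ∧
        fc D.f2 (D.f2 z) = fc C.f2 (C.f2 v) + 1) ∧
      (∃ z, fc D.f1 (D.f1 z) = fc C.f1 (C.f1 y) + 2 ∧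
        fc D.f2 (D.f2 z) = fc C.f2 (C.f2 w) + 1) := by
  have nvw : v ≠ w := fun e => hvw (by rw [e])
  have k1 := ty_ins _ _ h1
  rw [← fc_ins] at k1
  have k1 := ty_ins _ _ k1
  rw [fc_ins] at k1
  rw [Multiset.cons_swap] at h2
  have k2 := ty_ins _ _ h2
  rw [Multiset.cons_swap, ← fc_ins_ne C.f2 hvw] at k2
  have k2 := ty_ins _ _ k2
  rw [fc_ins_ne _ hvw] at k2
  have hcyc : Cyc (swap none (some (some v)) * optionCongr (swap none (some w) *
      optionCongr (C.t2 * C.t1) * swap none (some y)) * swap none (some (some y)))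
      (insert none ((insert none (C.s.map Function.Embedding.some)).map
        Function.Embedding.some)) := by
    have e : swap none (some (some v)) * optionCongr (swap none (some w) *
      optionCongr (C.t2 * C.t1) * swap none (some y)) * swap none (some (some y)) =
      swap none (some (some v)) * swap (some none) (some (some w)) *
      swap (some none) (some (some ((C.t2 * C.t1) y))) *
      swap none (some (some ((C.t2 * C.t1) y))) * optionCongr (optionCongr (C.t2 * C.t1)) := by
      rw [oc_mul, oc_mul, oc_swap, oc_swap]
      simp only [mul_assoc]
      congr 2
      have a1 := mul_swap_eq_swap_mul (optionCongr (optionCongr (C.t2 * C.t1)))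
        (some none) (some (some y))
      have a2 := mul_swap_eq_swap_mul (optionCongr (optionCongr (C.t2 * C.t1)))
        none (some (some y))
      rw [← mul_assoc, a1, mul_assoc, a2]
      simp
    rw [e, Finset.map_insert]
    rcases hc with hc | ⟨n1, n2, hc⟩
    · rw [hc, swap_id3 (by simp) (by simp) (by simp) (by simp) (by simp) (by simpa using nvw),
        mul_assoc, Finset.insert_comm]
      refine Cyc.ins_left (Cyc.ins_left C.cyc.option.option ?_ ?_) ?_ ?_ <;> simp [hw]
    · rw [swap_id2 (by simp) (by simp) (by simp) (by simp) (by simp) (by simp) (by simp)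
        (by simpa using n1) (by simpa using n2) (by simpa using nvw)]
      have := hc.option.option
      rw [oc_mul, oc_mul, oc_mul, oc_mul, oc_swap, oc_swap, oc_swap, oc_swap] at this
      simp only [mul_assoc] at this ⊢
      have hq := C.cyc.apply_mem hy
      refine Cyc.ins_left (Cyc.ins_left this ?_ ?_) ?_ ?_
      · simp
      · simpa using hq
      · simp
      · simpa using hw
  obtain ⟨D, d1, d2, d3, d4, d5⟩ := C.double y w (some y) (some v) rfl rfl k1 k2 hcyc
  have q1 : ∀ z : Option (Option X), D.f1 z = C.f1 y →
      fc D.f1 (D.f1 z) = fc C.f1 (C.f1 y) + 2 := by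
    intro z hz
    rw [hz, d4]
    exact (fc_ins _ _).trans (congrArg (· + 1) (fc_ins _ _))
  refine ⟨D, d1, d2, d3, ⟨none, q1 _ (by rw [d4]; rfl), ?_⟩, ⟨some none, q1 _ (by rw [d4]; rfl), ?_⟩⟩
  · rw [d5]
    exact (fc_ins _ _).trans (congrArg (· + 1) (fc_ins_ne _ hvw))
  · rw [d5]
    exact (fc_ins_ne _ hvw.symm).trans (fc_ins _ _)

theorem Sol.r3' {A B : Multiset ℕ} {u v w n : ℕ} (h : Sol (u ::ₘ A) (v ::ₘ w ::ₘ B) n) :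
    SolAdj ((u + 2) ::ₘ A) ((v + 1) ::ₘ (w + 1) ::ₘ B) (u + 2) (v + 1) (n + 2) := by
  classical
  obtain ⟨X, I, J, _, _, _, C, h1, h2, rfl⟩ := h
  obtain ⟨i, rfl⟩ := exists_of_ty h1
  obtain ⟨j, k, hjk, rfl, rfl⟩ := exists_two_of_ty h2
  obtain ⟨y, hy, rfl⟩ := C.m1 i
  obtain ⟨v, hv, rfl⟩ := C.m2 j
  obtain ⟨w, hw, rfl⟩ := C.m2 k
  have nvw : v ≠ w := fun e => hjk (by rw [e])
  have hq := C.cyc.apply_mem hy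
  have L := C.r3core hy hv hw hjk h1 h2
  have R := C.r3core hy hw hv hjk.symm h1 (h2.trans (Multiset.cons_swap _ _ _))
  have L' : ((C.t2 * C.t1) y = v ∨ ((C.t2 * C.t1) y ≠ v ∧ (C.t2 * C.t1) y ≠ w ∧
      Cyc (swap ((C.t2 * C.t1) y) w * swap ((C.t2 * C.t1) y) v * (C.t2 * C.t1)) C.s)) ∨
      ((C.t2 * C.t1) y = w ∨ ((C.t2 * C.t1) y ≠ w ∧ (C.t2 * C.t1) y ≠ v ∧
      Cyc (swap ((C.t2 * C.t1) y) v * swap ((C.t2 * C.t1) y) w * (C.t2 * C.t1)) C.s)) := by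
    by_cases e1 : (C.t2 * C.t1) y = v
    · exact Or.inl (Or.inl e1)
    by_cases e2 : (C.t2 * C.t1) y = w
    · exact Or.inr (Or.inl e2)
    rcases C.cyc.three hq hv hw e1 e2 nvw with h | h
    · exact Or.inl (Or.inr ⟨e1, e2, h⟩)
    · exact Or.inr (Or.inr ⟨e2, e1, h⟩)
  rcases L' with h | h
  · obtain ⟨D, d1, d2, d3, d4, d5⟩ := L h
    exact ⟨_, I, J, inferInstance, inferInstance, inferInstance, D, d1, d2, d3, d4⟩
  · obtain ⟨D, d1, d2, d3, d4, d5⟩ := R h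
    exact ⟨_, I, J, inferInstance, inferInstance, inferInstance, D, d1,
      d2.trans (Multiset.cons_swap _ _ _), d3, d5⟩

def PosM (a : Multiset ℕ) : Prop := ∀ x ∈ a, 0 < x

theorem PosM.card_le {a : Multiset ℕ} (h : PosM a) : a.card ≤ a.sum := by
  have := Multiset.card_nsmul_le_sum (s := a) (a := 1) (fun x hx => h x hx)
  simpa using this

theorem two_card_le {a : Multiset ℕ} (h : ∀ x ∈ a, 2 ≤ x) : a.card * 2 ≤ a.sum := by
  have := Multiset.card_nsmul_le_sum (s := a) (a := 2) (fun x hx => h x hx)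
  simpa using this

theorem sum_le_two {a : Multiset ℕ} {k : ℕ} (h : ∀ x ∈ a, x ≤ k) : a.sum ≤ a.card * k := by
  have := Multiset.sum_le_card_nsmul a k (fun x hx => h x hx)
  simpa using this

theorem posM_cons {u : ℕ} {A : Multiset ℕ} : PosM (u ::ₘ A) ↔ 0 < u ∧ PosM A := by
  simp [PosM]

def FullP (d : ℕ) : Prop := ∀ (a b : Multiset ℕ) (g : ℕ), PosM a → PosM b → a.sum = d →
  b.sum = d → 0 < d → a.card + b.card + 2 * g = d + 1 → Sol a b d

theorem full_one {d : ℕ} (ih : ∀ d' < d, FullP d') {a b : Multiset ℕ} {g : ℕ} (pa : PosM a)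
    (pb : PosM b) (sa : a.sum = d) (sb : b.sum = d) (hd : 0 < d)
    (hc : a.card + b.card + 2 * g = d + 1) (h1 : 1 ∈ b) : Sol a b d := by
  obtain ⟨B, rfl⟩ := Multiset.exists_cons_of_mem h1
  simp only [Multiset.sum_cons, Multiset.card_cons, posM_cons] at *
  by_cases hB : B = 0
  · subst hB
    simp only [Multiset.sum_zero, Multiset.card_zero] at *
    obtain rfl : d = 1 := by omega
    have ca : a.card = 1 := by
      have : a ≠ 0 := by rintro rfl; simp at sa
      have := Multiset.card_pos.2 this
      omega
    obtain ⟨x, rfl⟩ := Multiset.card_eq_one.1 ca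
    simp only [Multiset.sum_singleton] at sa
    subst sa
    exact sol_one_adj.sol
  · have cB := Multiset.card_pos.2 hB
    have : ∃ u ∈ a, 2 ≤ u := by
      by_contra hcon
      push Not at hcon
      have := sum_le_two (k := 1) (fun x hx => Nat.lt_succ_iff.1 (hcon x hx))
      omega
    obtain ⟨u, hu, hu2⟩ := this
    obtain ⟨A, rfl⟩ := Multiset.exists_cons_of_mem hu
    simp only [Multiset.sum_cons, Multiset.card_cons, posM_cons] at *
    have cl := pb.2.card_le
    have := ih (d - 1) (by omega) ((u - 1) ::ₘ A) B g (posM_cons.2 ⟨by omega, pa.2⟩) pb.2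
      (by simp; omega) (by omega) (by omega) (by simp; omega)
    have := this.r2.sol
    rwa [show u - 1 + 1 = u by omega, show d - 1 + 1 = d by omega] at this

theorem full_three {d : ℕ} (ih : ∀ d' < d, FullP d') {a b : Multiset ℕ} {g : ℕ}
    (pa : ∀ x ∈ a, 2 ≤ x)
    (pb : ∀ x ∈ b, 2 ≤ x) (sa : a.sum = d) (sb : b.sum = d)
    (hc : a.card + b.card + 2 * g = d + 1) {u : ℕ} (hu : u ∈ a) (hu3 : 3 ≤ u) : Sol a b d := by
  have c1 := two_card_le pa
  have c2 := two_card_le pb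
  have hg : 1 ≤ g := by omega
  obtain ⟨A, rfl⟩ := Multiset.exists_cons_of_mem hu
  have pA : PosM A := fun x hx => by
    have := pa x (Multiset.mem_cons_of_mem hx); omega
  have hud : u ≤ d := by simp at sa; omega
  by_cases hv : ∃ v ∈ b, 3 ≤ v
  · obtain ⟨v, hv, hv3⟩ := hv
    obtain ⟨B, rfl⟩ := Multiset.exists_cons_of_mem hv
    have pB : PosM B := fun x hx => by
      have := pb x (Multiset.mem_cons_of_mem hx); omega
    simp only [Multiset.sum_cons, Multiset.card_cons] at sa sb hc
    have := ih (d - 2) (by omega) ((u - 2) ::ₘ A) ((v - 2) ::ₘ B) (g - 1)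
      (posM_cons.2 ⟨by omega, pA⟩) (posM_cons.2 ⟨by omega, pB⟩)
      (by simp; omega) (by simp; omega) (by omega) (by simp; omega)
    have := this.r3.sol
    rwa [show u - 2 + 2 = u by omega, show v - 2 + 2 = v by omega,
      show d - 2 + 2 = d by omega] at this
  · push Not at hv
    have hb2 : ∀ x ∈ b, x = 2 := fun x hx => by
      have := hv x hx; have := pb x hx; omega
    have := Multiset.eq_replicate_card.2 hb2
    have hs : b.sum = b.card * 2 := by rw [this]; simp
    obtain ⟨q, hq⟩ : ∃ q, b.card = q + 2 := ⟨b.card - 2, by omega⟩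
    rw [hq] at this
    subst this
    simp only [Multiset.replicate_succ]
    simp only [Multiset.sum_cons, Multiset.card_cons, Multiset.sum_replicate,
      Multiset.card_replicate, smul_eq_mul] at sa sb hc
    have := ih (d - 2) (by omega) ((u - 2) ::ₘ A) (1 ::ₘ 1 ::ₘ Multiset.replicate q 2) (g - 1)
      (posM_cons.2 ⟨by omega, pA⟩)
      (posM_cons.2 ⟨by omega, posM_cons.2 ⟨by omega, fun x hx => by
        rw [Multiset.eq_of_mem_replicate hx]; omega⟩⟩)
      (by simp; omega) (by simp; omega) (by omega) (by simp; omega)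
    have := this.r3'.sol
    rwa [show u - 2 + 2 = u by omega, show d - 2 + 2 = d by omega] at this

theorem sol_full (d : ℕ) : FullP d := by
  induction d using Nat.strong_induction_on with
  | _ d ih =>
    intro a b g pa pb sa sb hd hc
    by_cases h1 : 1 ∈ b
    · exact full_one ih pa pb sa sb hd hc h1
    by_cases h2 : 1 ∈ a
    · exact (full_one (g := g) ih pb pa sb sa hd (by omega) h2).symm
    have ta : ∀ x ∈ a, 2 ≤ x := fun x hx => by
      have := pa x hx
      have : x ≠ 1 := fun e => h2 (e ▸ hx)
      omega
    have tb : ∀ x ∈ b, 2 ≤ x := fun x hx => by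
      have := pb x hx
      have : x ≠ 1 := fun e => h1 (e ▸ hx)
      omega
    by_cases h3 : ∃ u ∈ a, 3 ≤ u
    · obtain ⟨u, hu, hu3⟩ := h3
      exact full_three ih ta tb sa sb hc hu hu3
    by_cases h4 : ∃ u ∈ b, 3 ≤ u
    · obtain ⟨u, hu, hu3⟩ := h4
      exact (full_three (g := g) ih tb ta sb sa (by omega) hu hu3).symm
    push Not at h3 h4
    have c1 := two_card_le ta
    have c2 := two_card_le tb
    have c3 := sum_le_two (k := 2) (fun x hx => Nat.lt_succ_iff.1 (h3 x hx))
    have c4 := sum_le_two (k := 2) (fun x hx => Nat.lt_succ_iff.1 (h4 x hx))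
    omega

theorem SolAdj.r1n {A B : Multiset ℕ} {u v n : ℕ} (h : SolAdj (u ::ₘ A) (v ::ₘ B) u v n) (k : ℕ) :
    SolAdj ((u + k) ::ₘ A) ((v + k) ::ₘ B) (u + k) (v + k) n := by
  induction k with
  | zero => exact h
  | succ k ih => exact ih.r1

theorem Sol.addLeaf {A B : Multiset ℕ} {u n : ℕ} (h : Sol (u ::ₘ A) B n) {y : ℕ} (hy : 0 < y) :
    Sol ((u + y) ::ₘ A) (y ::ₘ B) (n + 1) := by
  have := (h.r2.r1n (y - 1)).sol
  rwa [show u + 1 + (y - 1) = u + y by omega, show 1 + (y - 1) = y by omega] at this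

theorem Sol.addLeaf' {A B : Multiset ℕ} {u n : ℕ} (h : Sol B (u ::ₘ A) n) {y : ℕ} (hy : 0 < y) :
    Sol (y ::ₘ B) ((u + y) ::ₘ A) (n + 1) :=
  (h.symm.addLeaf hy).symm

theorem sol_single {y : ℕ} (hy : 0 < y) : Sol {y} {y} 1 := by
  have := (SolAdj.r1n (A := 0) (B := 0) sol_one_adj (y - 1)).sol
  rwa [show 1 + (y - 1) = y by omega] at this

theorem sol_star (a : Multiset ℕ) (pa : PosM a) (ha : a ≠ 0) : Sol a {a.sum} a.card := by
  induction a using Multiset.induction with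
  | empty => exact absurd rfl ha
  | cons x a ih =>
    rw [posM_cons] at pa
    by_cases h : a = 0
    · subst h; simpa using sol_single pa.1
    · have := Sol.addLeaf' (A := 0) (ih pa.2 h) pa.1
      simpa [add_comm] using this

theorem sol_chain (y : ℕ) (hy : 0 < y) (p : ℕ) :
    Sol (y ::ₘ Multiset.replicate p (y + 2)) (y ::ₘ Multiset.replicate p (y + 2)) (2 * p + 1) := by
  induction p with
  | zero => simpa using sol_single hy
  | succ p ih =>
    have := (ih.addLeaf' (y := 2) (by omega)).addLeaf hy
    rw [Multiset.replicate_succ, Multiset.cons_swap y]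
    rw [add_comm 2 y] at this
    convert this using 1
    · rw [Multiset.cons_swap]
    · omega

/-- genus zero, to `(d-1,1)` -/
theorem sol_hook {a : Multiset ℕ} {d : ℕ} (pa : PosM a) (sa : a.sum = d) (hc : a.card < d) :
    Sol a {d - 1, 1} (a.card + 1) := by
  have : ∃ u ∈ a, 2 ≤ u := by
    by_contra hcon
    push Not at hcon
    have := sum_le_two (k := 1) (fun x hx => Nat.lt_succ_iff.1 (hcon x hx))
    omega
  obtain ⟨u, hu, hu2⟩ := this
  obtain ⟨A, rfl⟩ := Multiset.exists_cons_of_mem hu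
  rw [posM_cons] at pa
  have := (sol_star ((u - 1) ::ₘ A) (posM_cons.2 ⟨by omega, pa.2⟩) (by simp)).r2.sol
  simp only [Multiset.sum_cons, Multiset.card_cons] at *
  rw [show u - 1 + 1 = u by omega, show u - 1 + A.sum = d - 1 by omega] at this
  convert this using 1
  exact Multiset.cons_swap _ _ _

/-- the one-cycle statement -/
def OneP (d : ℕ) : Prop := ∀ (a b : Multiset ℕ) (g n : ℕ), PosM a → PosM b → a.sum = d →
  b.sum = d → 0 < d → 1 ≤ g → a.card + b.card + 2 * g = n + 1 → n ≤ d → Sol a b n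

def AdjP (d : ℕ) : Prop := ∀ (A B : Multiset ℕ) (u v g n : ℕ), PosM (u ::ₘ A) → PosM (v ::ₘ B) →
  (u ::ₘ A).sum = d → (v ::ₘ B).sum = d → v < u → 1 ≤ g →
  (u ::ₘ A).card + (v ::ₘ B).card + 2 * g = n + 1 → n ≤ d → SolAdj (u ::ₘ A) (v ::ₘ B) u v n

theorem adj_step {d : ℕ} (ih : ∀ d' < d, OneP d' ∧ AdjP d') : AdjP d := by
  intro A B u v g n pa pb sa sb huv hg hc hn
  rw [posM_cons] at pa pb
  simp only [Multiset.sum_cons, Multiset.card_cons] at sa sb hc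
  have cA := pa.2.card_le
  have cB := pb.2.card_le
  by_cases hv1 : v = 1
  · subst hv1
    have := (ih (d - 1) (by omega)).1 ((u - 1) ::ₘ A) B g (n - 1)
      (posM_cons.2 ⟨by omega, pa.2⟩) pb.2 (by simp; omega) (by omega) (by omega) hg
      (by simp; omega) (by omega)
    have := this.r2
    rwa [show u - 1 + 1 = u by omega, show n - 1 + 1 = n by omega] at this
  by_cases hnd : n < d
  · have := (ih (d - 1) (by omega)).2 A B (u - 1) (v - 1) g n
      (posM_cons.2 ⟨by omega, pa.2⟩) (posM_cons.2 ⟨by omega, pb.2⟩)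
      (by simp; omega) (by simp; omega) (by omega) hg
      (by simp; omega) (by omega)
    have := this.r1
    rwa [show u - 1 + 1 = u by omega, show v - 1 + 1 = v by omega] at this
  obtain rfl : n = d := by omega
  by_cases hv2 : v = 2
  · subst hv2
    have : ∃ w ∈ B, 2 ≤ w := by
      by_contra hcon
      push Not at hcon
      have := sum_le_two (k := 1) (fun x hx => Nat.lt_succ_iff.1 (hcon x hx))
      omega
    obtain ⟨w, hw, hw2⟩ := this
    obtain ⟨B, rfl⟩ := Multiset.exists_cons_of_mem hw
    simp only [Multiset.sum_cons, Multiset.card_cons, posM_cons] at sb hc pb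
    have := sol_full (n - 2) ((u - 2) ::ₘ A) (1 ::ₘ (w - 1) ::ₘ B) (g - 1)
      (posM_cons.2 ⟨by omega, pa.2⟩)
      (posM_cons.2 ⟨by omega, posM_cons.2 ⟨by omega, pb.2.2⟩⟩)
      (by simp; omega) (by simp; omega) (by omega) (by simp; omega)
    have := this.r3'
    rwa [show u - 2 + 2 = u by omega, show w - 1 + 1 = w by omega,
      show n - 2 + 2 = n by omega] at this
  · have := sol_full (n - 2) ((u - 2) ::ₘ A) ((v - 2) ::ₘ B) (g - 1)
      (posM_cons.2 ⟨by omega, pa.2⟩) (posM_cons.2 ⟨by omega, pb.2⟩)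
      (by simp; omega) (by simp; omega) (by omega) (by simp; omega)
    have := this.r3
    rwa [show u - 2 + 2 = u by omega, show v - 2 + 2 = v by omega,
      show n - 2 + 2 = n by omega] at this

theorem one_step {d : ℕ} (ih : ∀ d' < d, OneP d' ∧ AdjP d') : OneP d := by
  intro a b g n pa pb sa sb hd hg hc hn
  by_cases h1 : ∃ u ∈ a, ∃ v ∈ b, u ≠ v
  · obtain ⟨u, hu, v, hv, huv⟩ := h1
    obtain ⟨A, rfl⟩ := Multiset.exists_cons_of_mem hu
    obtain ⟨B, rfl⟩ := Multiset.exists_cons_of_mem hv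
    rcases lt_or_gt_of_ne huv with h | h
    · exact (adj_step ih B A v u g n pb pa sb sa h hg (by omega) hn).sol.symm
    · exact (adj_step ih A B u v g n pa pb sa sb h hg hc hn).sol
  push Not at h1
  have ha : a ≠ 0 := by rintro rfl; simp at sa; omega
  have hb : b ≠ 0 := by rintro rfl; simp at sb; omega
  obtain ⟨x, hx⟩ := Multiset.exists_mem_of_ne_zero ha
  obtain ⟨y, hy⟩ := Multiset.exists_mem_of_ne_zero hb
  have eb : b = Multiset.replicate b.card x :=
    Multiset.eq_replicate_card.2 fun z hz => (h1 x hx z hz).symm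
  have ea : a = Multiset.replicate a.card x :=
    Multiset.eq_replicate_card.2 fun z hz => (h1 z hz y hy).trans (h1 x hx y hy).symm
  have hx0 := pa x hx
  have ca := Multiset.card_pos.2 ha
  have s1 : a.card * x = d := by rw [← sa]; conv_rhs => rw [ea]
                                 simp
  have s2 : b.card * x = d := by rw [← sb]; conv_rhs => rw [eb]
                                 simp
  have hpq : a.card = b.card := Nat.eq_of_mul_eq_mul_right hx0 (s1.trans s2.symm)
  have hx3 : 3 ≤ x := by
    by_contra hlt
    have : a.card * x ≤ a.card * 2 := Nat.mul_le_mul_left _ (by omega)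
    omega
  rw [← hpq] at eb hc
  obtain ⟨p, hp⟩ : ∃ p, a.card = p + 1 := ⟨a.card - 1, by omega⟩
  obtain ⟨y, rfl⟩ : ∃ y, x = y + 2 := ⟨x - 2, by omega⟩
  rw [hp] at ea eb hc s1
  rw [ea, eb, Multiset.replicate_succ]
  have key : Sol (y ::ₘ Multiset.replicate p (y + 2)) (y ::ₘ Multiset.replicate p (y + 2))
      (n - 2) := by
    by_cases hg1 : g = 1
    · have := sol_chain y (by omega) p
      rwa [show 2 * p + 1 = n - 2 by omega] at this
    · have pp : PosM (y ::ₘ Multiset.replicate p (y + 2)) :=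
        posM_cons.2 ⟨by omega, fun x hx => by
        rw [Multiset.eq_of_mem_replicate hx]; omega⟩
      have hs : (y ::ₘ Multiset.replicate p (y + 2)).sum = d - 2 := by
        simp; rw [← s1]; ring_nf; omega
      exact (ih (d - 2) (by omega)).1 _ _ (g - 1) (n - 2) pp pp hs hs (by omega) (by omega)
        (by simp; omega) (by omega)
  have := key.r3.sol
  rwa [show n - 2 + 2 = n by omega] at this

theorem one_adj (d : ℕ) : OneP d ∧ AdjP d := by
  induction d using Nat.strong_induction_on with
  | _ d ih => exact ⟨one_step ih, adj_step ih⟩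

theorem IsLab.eq_iff {X I : Type} {τ : Perm X} {f : X → I} (h : IsLab τ f) {x y : X} :
    f x = f y ↔ SameCycle τ x y := by
  refine ⟨h.same x y, ?_⟩
  intro hs
  have := sc_map (τ := τ) (τ' := (1 : Perm I)) f (fun x => by rw [h.inv]) hs
  exact sameCycle_one.1 this

theorem fc_eq_card {X I : Type} [Fintype X] (f : X → I) (i : I) (s : Finset X)
    (hs : ∀ x, x ∈ s ↔ f x = i) : fc f i = s.card := by
  classical
  rw [fc, Finset.sum_boole]
  simp only [Nat.cast_id]
  congr 1
  ext x
  simp [hs]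

theorem IsLab.full {d : ℕ} {I : Type} [Fintype I] {τ : Perm (Fin d)} {f : Fin d → I}
    (h : IsLab τ f) : fullCycleType τ = ty f := by
  classical
  choose r hr using h.surj
  have hsup : ∀ i, r i ∈ τ.support → fc f i = (τ.cycleOf (r i)).support.card := by
    intro i hi
    apply fc_eq_card
    intro x
    rw [mem_support_cycleOf_iff, ← h.eq_iff, hr]
    simp only [hi, and_true, eq_comm]
  have hfix : ∀ i, r i ∉ τ.support → fc f i = 1 := by
    intro i hi
    rw [fc_eq_card f i {r i}]
    · simp
    intro x
    rw [Finset.mem_singleton]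
    constructor
    · rintro rfl; exact hr i
    · intro e
      have : SameCycle τ (r i) x := h.same _ _ (by rw [hr, e])
      obtain ⟨k, rfl⟩ := this
      rw [zpow_apply_eq_self_of_apply_eq_self (notMem_support.1 hi)]
  have hC : τ.cycleFactorsFinset = (Finset.univ.filter fun i => r i ∈ τ.support).image
      (fun i => τ.cycleOf (r i)) := by
    ext c
    simp only [Finset.mem_image, Finset.mem_filter, Finset.mem_univ, true_and]
    constructor
    · intro hc
      obtain ⟨h1, h2⟩ := mem_cycleFactorsFinset_iff.1 hc
      obtain ⟨x, hx, -⟩ := h1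
      have hx' : x ∈ c.support := mem_support.2 hx
      have e := cycle_is_cycleOf hx' hc
      have hs : SameCycle τ (r (f x)) x := h.same _ _ (hr _)
      refine ⟨f x, ?_, ?_⟩
      · rw [mem_support, Ne, hs.apply_eq_self_iff, ← Ne, ← mem_support]
        exact mem_cycleFactorsFinset_support_le hc hx'
      · rw [e]; exact hs.cycleOf_eq
    · rintro ⟨i, hi, rfl⟩
      exact cycleOf_mem_cycleFactorsFinset_iff.2 hi
  have hT : τ.cycleType = (Finset.univ.filter fun i => r i ∈ τ.support).val.map (fc f) := by
    rw [cycleType_def, hC, Finset.image_val_of_injOn, Multiset.map_map]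
    · apply Multiset.map_congr rfl
      intro i hi
      exact (hsup i (by simpa using hi)).symm
    · intro i hi j hj e
      simp only [Finset.coe_filter, Finset.mem_univ, true_and, Set.mem_ofPred_eq] at hi hj
      have : r i ∈ (τ.cycleOf (r i)).support := by
        rw [mem_support_cycleOf_iff]; exact ⟨SameCycle.refl _ _, hi⟩
      simp only at e
      rw [e, mem_support_cycleOf_iff, ← h.eq_iff, hr, hr] at this
      exact this.1.symm
  have hF : (Finset.univ.filter fun i => ¬ r i ∈ τ.support).val.map (fc f) =
      Multiset.replicate (Finset.univ.filter fun i => ¬ r i ∈ τ.support).card 1 := by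
    rw [Multiset.eq_replicate]
    refine ⟨by rw [Multiset.card_map]; rfl, ?_⟩
    intro b hb
    obtain ⟨i, hi, rfl⟩ := Multiset.mem_map.1 hb
    exact hfix i (by simpa using hi)
  have hty : ty f = τ.cycleType +
      Multiset.replicate (Finset.univ.filter fun i => ¬ r i ∈ τ.support).card 1 := by
    rw [hT, ← hF, ← Multiset.map_add, ty, Finset.filter_val, Finset.filter_val,
      Multiset.filter_add_not]
  have hs := ty_sum_eq f
  rw [hty, Multiset.sum_add, sum_cycleType] at hs
  simp at hs
  rw [fullCycleType, hty]
  congr 2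
  simp
  omega

theorem ty_congr {X I Y : Type} [Fintype X] [Fintype Y] [Fintype I] (f : X → I) (e : X ≃ Y) :
    ty (f ∘ e.symm) = ty f := by
  classical
  rw [ty, ty]
  congr 1
  ext i
  simp only [fc]
  exact Equiv.sum_comp e.symm (fun x => if f x = i then 1 else 0)

theorem fct_inv {d : ℕ} (τ : Perm (Fin d)) : fullCycleType τ⁻¹ = fullCycleType τ := by
  simp [fullCycleType, cycleType_inv, support_inv]

theorem fct_conj {d : ℕ} (τ k : Perm (Fin d)) :
    fullCycleType (k * τ * k⁻¹) = fullCycleType τ := by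
  simp only [fullCycleType, cycleType_conj, card_support_conj]

theorem fct_isConj {d : ℕ} {α β : Perm (Fin d)} (h : fullCycleType α = fullCycleType β) :
    ∃ k : Perm (Fin d), k * α * k⁻¹ = β := by
  have key : ∀ σ : Perm (Fin d), (fullCycleType σ).filter (2 ≤ ·) = σ.cycleType := by
    intro σ
    rw [fullCycleType, Multiset.filter_add, Multiset.filter_eq_self.2, Multiset.filter_eq_nil.2,
      add_zero]
    · intro a ha; rw [Multiset.eq_of_mem_replicate ha]; omega
    · intro a ha; exact two_le_of_mem_cycleType ha
  have : α.cycleType = β.cycleType := by rw [← key, ← key, h]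
  exact isConj_iff.1 (isConj_iff_cycleType_eq.2 this)

theorem Cyc.isCycle {X : Type} [Fintype X] [DecidableEq X] {Q : Perm X} {s : Finset X}
    (h : Cyc Q s) (h2 : 2 ≤ s.card) : Q.IsCycle ∧ Q.support = s := by
  have hne : ∀ x ∈ s, Q x ≠ x := by
    intro x hx e
    obtain ⟨y, hy, hxy⟩ := Finset.exists_mem_ne (s := s) (by omega) x
    obtain ⟨k, rfl⟩ := h.2 x hx y hy
    exact hxy (zpow_apply_eq_self_of_apply_eq_self e k)
  have hs : Q.support = s := by
    ext x
    rw [mem_support]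
    refine ⟨fun hx => ?_, hne x⟩
    by_contra hc
    exact hx (h.1 x hc)
  refine ⟨?_, hs⟩
  obtain ⟨x, hx⟩ := Finset.card_pos.1 (show 0 < s.card by omega)
  refine ⟨x, hne x hx, fun y hy => h.2 x hx y ?_⟩
  rw [← hs, mem_support]; exact hy

theorem Cyc.congr {X Y : Type} {Q : Perm X} {s : Finset X} (h : Cyc Q s) (e : X ≃ Y) :
    Cyc (e.permCongr Q) (s.map e.toEmbedding) := by
  refine ⟨?_, ?_⟩
  · intro y hy
    simp only [Finset.mem_map_equiv] at hy
    simp [h.1 _ hy]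
  · intro x hx y hy
    simp only [Finset.mem_map_equiv] at hx hy
    have := sc_map (τ := Q) (τ' := e.permCongr Q) e
      (fun x => by simpa using sc_step (e.permCongr Q) (e x)) (h.2 _ hx _ hy)
    simpa using this

theorem Cyc.sum {X Y : Type} {Q : Perm X} {s : Finset X} (h : Cyc Q s) :
    Cyc (Perm.sumCongr Q (1 : Perm Y)) (s.map Function.Embedding.inl) := by
  refine ⟨?_, ?_⟩
  · rintro (x | y) hx
    · simp only [Finset.mem_map, Function.Embedding.inl_apply, Sum.inl.injEq, exists_eq_right] at hx
      simp [h.1 _ hx]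
    · simp
  · intro x hx y hy
    obtain ⟨x, hx', rfl⟩ := Finset.mem_map.1 hx
    obtain ⟨y, hy', rfl⟩ := Finset.mem_map.1 hy
    exact sc_map (τ := Q) (τ' := Perm.sumCongr Q (1 : Perm Y)) Sum.inl
      (fun x => by simpa using sc_step (Perm.sumCongr Q (1 : Perm Y)) (Sum.inl x)) (h.2 _ hx' _ hy')

theorem lab_exists (C : Multiset ℕ) (pc : PosM C) : ∃ (Y K : Type) (_ : Fintype Y) (_ : Fintype K)
    (ρ : Perm Y) (g : Y → K), IsLab ρ g ∧ ty g = C := by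
  induction C using Multiset.induction with
  | empty =>
    refine ⟨Empty, Empty, inferInstance, inferInstance, 1, id, ⟨nofun, nofun, nofun⟩, ?_⟩
    simp [ty]
  | cons x C ih =>
    rw [posM_cons] at pc
    obtain ⟨Y, K, _, _, ρ, g, h1, h2⟩ := ih pc.2
    obtain ⟨X, I, J, _, _, _, D, h3, h4, -⟩ := sol_single pc.1
    refine ⟨X ⊕ Y, I ⊕ K, inferInstance, inferInstance, _, _, D.h1.sum h1, ?_⟩
    rw [ty_sum, h2, h3]; simp

/-- One step. -/
def Step (d : ℕ) (a c : Multiset ℕ) (m : ℕ) : Prop :=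
  ∃ α σ : Perm (Fin d), fullCycleType α = a ∧ fullCycleType (α * σ) = c ∧ σ.IsCycle ∧
    σ.support.card = m + 1

theorem step_mk {d m : ℕ} (hm : 1 ≤ m) {X I J : Type} [Fintype X] [Fintype I] [Fintype J]
    {t1 t2 : Perm X} {f1 : X → I} {f2 : X → J} {s : Finset X} (h1 : IsLab t1 f1)
    (h2 : IsLab t2 f2) (hs : Cyc (t2 * t1) s) (hc : s.card = m + 1) (hd : (ty f1).sum = d) :
    ∃ (e : X ≃ Fin d) (α σ : Perm (Fin d)), fullCycleType α = ty f2 ∧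
      fullCycleType (α * σ) = ty f1 ∧ σ.IsCycle ∧ σ.support.card = m + 1 ∧
      Cyc σ (s.map e.toEmbedding) ∧ IsLab α (f2 ∘ e.symm) := by
  rw [ty_sum_eq] at hd
  have e : X ≃ Fin d := Fintype.equivFinOfCardEq hd
  have l1 := h1.congr e
  have l2 := h2.inverse.congr e
  have hQ := hs.congr e
  obtain ⟨c1, c2⟩ := hQ.isCycle (by simp; omega)
  refine ⟨e, e.permCongr t2⁻¹, e.permCongr (t2 * t1), ?_, ?_, c1, ?_, hQ, l2⟩
  · rw [l2.full, ty_congr]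
  · rw [← ty_congr f1 e, ← l1.full]
    congr 1
    ext x; simp
  · rw [c2]; simpa using hc

theorem Sol.step {d m : ℕ} {a c : Multiset ℕ} (hm : 1 ≤ m) (h : Sol a c (m + 1))
    (sa : c.sum = d) : Step d a c m := by
  obtain ⟨X, I, J, _, _, _, C, rfl, rfl, h3⟩ := h.symm
  obtain ⟨e, α, σ, r1, r2, r3, r4, -⟩ := step_mk hm C.h1 C.h2 C.cyc h3 sa
  exact ⟨α, σ, r1, r2, r3, r4⟩

theorem step_merge {d m : ℕ} {A C : Multiset ℕ} (hm : 1 ≤ m) (pA : PosM A) (pC : PosM C)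
    (hA : A.card = m + 1) (hs : (A + C).sum = d) : Step d (A + C) (A.sum ::ₘ C) m := by
  have hA0 : A ≠ 0 := by rintro rfl; simp at hA
  obtain ⟨X, I, J, _, _, _, D, h1, h2, h3⟩ := (sol_star A pA hA0).symm
  obtain ⟨Y, K, _, _, ρ, g, h4, h5⟩ := lab_exists C pC
  have hc : Cyc (Perm.sumCongr D.t2 ρ⁻¹ * Perm.sumCongr D.t1 ρ)
      (D.s.map (Function.Embedding.inl (β := Y))) := by
    rw [Perm.sumCongr_mul, inv_mul_cancel]
    exact D.cyc.sum
  obtain ⟨e, α, σ, r1, r2, r3, r4, -⟩ := step_mk (d := d) hm (D.h1.sum h4) (D.h2.sum h4.inverse) hc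
    (by rw [Finset.card_map, h3, hA]) (by rw [ty_sum, h1, h5, ← hs]; simp)
  refine ⟨α, σ, ?_, ?_, r3, r4⟩
  · rw [r1, ty_sum, h2, h5]
  · rw [r2, ty_sum, h1, h5]; simp

theorem Step.symm {d m : ℕ} {a c : Multiset ℕ} (h : Step d a c m) : Step d c a m := by
  obtain ⟨α, σ, h1, h2, h3, h4⟩ := h
  exact ⟨α * σ, σ⁻¹, h2, by simpa using h1, h3.inv, by rwa [support_inv]⟩

theorem mult_split (a : Multiset ℕ) {n : ℕ} (h : n ≤ a.card) :
    ∃ A C : Multiset ℕ, a = A + C ∧ A.card = n := by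
  induction a using Quotient.inductionOn with
  | _ l =>
    refine ⟨(l.take n : List ℕ), (l.drop n : List ℕ), ?_, ?_⟩
    · rw [Multiset.coe_add, List.take_append_drop]; rfl
    · simpa using h

/-- A sequence of cycles leading from cycle type `a` to cycle type `b`. -/
def Chain (d : ℕ) (a b : Multiset ℕ) (ms : List ℕ) : Prop :=
  ∃ (τ : Perm (Fin d)) (L : List (Perm (Fin d))), fullCycleType τ = a ∧
    List.Forall₂ (fun σ m => σ.IsCycle ∧ σ.support.card = m + 1) L ms ∧
    fullCycleType (τ * L.prod) = b ∧
    ∀ x y : Fin d, ∃ π ∈ Subgroup.closure ({τ} ∪ {σ | σ ∈ L}), π x = y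

theorem Chain.consStep {d m : ℕ} {a b c : Multiset ℕ} {ms : List ℕ} (h : Chain d c b ms)
    (hs : Step d a c m) : Chain d a b (m :: ms) := by
  obtain ⟨τ, L, h1, h2, h3, h4⟩ := h
  obtain ⟨α, σ, s1, s2, s3, s4⟩ := hs
  obtain ⟨k, hk⟩ := fct_isConj (s2.trans h1.symm)
  have e : k * α * k⁻¹ * (k * σ * k⁻¹) = τ := by rw [← hk]; group
  refine ⟨k * α * k⁻¹, (k * σ * k⁻¹) :: L, ?_, ?_, ?_, ?_⟩
  · rw [fct_conj, s1]
  · refine List.Forall₂.cons ⟨s3.conj, ?_⟩ h2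
    rw [card_support_conj, s4]
  · rw [List.prod_cons, ← mul_assoc, e, h3]
  · intro x y
    obtain ⟨π, hπ, hxy⟩ := h4 x y
    refine ⟨π, ?_, hxy⟩
    revert hπ
    apply (Subgroup.closure_le _).2
    rintro ρ (hρ | hρ)
    · rw [Set.mem_singleton_iff.1 hρ, ← e]
      exact Subgroup.mul_mem _ (Subgroup.subset_closure (Or.inl rfl))
        (Subgroup.subset_closure (Or.inr (List.mem_cons_self ..)))
    · exact Subgroup.subset_closure (Or.inr (List.mem_cons_of_mem _ hρ))

theorem Chain.snocStep {d m : ℕ} {a b c : Multiset ℕ} {ms : List ℕ} (h : Chain d a c ms)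
    (hs : Step d c b m) : Chain d a b (ms ++ [m]) := by
  obtain ⟨τ, L, h1, h2, h3, h4⟩ := h
  obtain ⟨α, σ, s1, s2, s3, s4⟩ := hs
  obtain ⟨k, hk⟩ := fct_isConj (s1.trans h3.symm)
  refine ⟨τ, L ++ [k * σ * k⁻¹], h1, ?_, ?_, ?_⟩
  · refine List.rel_append h2 (List.Forall₂.cons ⟨s3.conj, ?_⟩ List.Forall₂.nil)
    rw [card_support_conj, s4]
  · rw [List.prod_append, ← mul_assoc, ← hk, List.prod_singleton, ← s2, ← fct_conj (α * σ) k]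
    congr 1
    group
  · intro x y
    obtain ⟨π, hπ, hxy⟩ := h4 x y
    refine ⟨π, ?_, hxy⟩
    revert hπ
    apply Subgroup.closure_mono
    rintro ρ (hρ | hρ)
    · exact Or.inl hρ
    · exact Or.inr (List.mem_append_left _ hρ)

theorem Sol.chain {d m : ℕ} {a b : Multiset ℕ} (hm : 1 ≤ m) (h : Sol a b (m + 1))
    (sb : b.sum = d) : Chain d a b [m] := by
  obtain ⟨X, I, J, _, _, _, C, rfl, rfl, h3⟩ := h.symm
  obtain ⟨e, α, σ, r1, r2, r3, r4, r5, r6⟩ := step_mk hm C.h1 C.h2 C.cyc h3 sb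
  refine ⟨α, [σ], r1, List.Forall₂.cons ⟨r3, r4⟩ List.Forall₂.nil, by simpa using r2, ?_⟩
  have key : ∀ x : Fin d, ∃ z ∈ C.s.map e.toEmbedding, SameCycle α x z := by
    intro x
    obtain ⟨z, hz, hzx⟩ := C.m2 (C.f2 (e.symm x))
    refine ⟨e z, Finset.mem_map_of_mem _ hz, r6.same _ _ ?_⟩
    simp [hzx]
  intro x y
  obtain ⟨z, hz, i, hi⟩ := key x
  obtain ⟨w, hw, j, hj⟩ := key y
  obtain ⟨k, hk⟩ := r5.2 z hz w hw
  have hα : α ∈ Subgroup.closure ({α} ∪ {ρ | ρ ∈ [σ]}) := Subgroup.subset_closure (Or.inl rfl)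
  have hσ : σ ∈ Subgroup.closure ({α} ∪ {ρ | ρ ∈ [σ]}) :=
    Subgroup.subset_closure (Or.inr (List.mem_cons_self ..))
  refine ⟨(α ^ j)⁻¹ * (σ ^ k * α ^ i), ?_, ?_⟩
  · exact Subgroup.mul_mem _ (Subgroup.inv_mem _ (Subgroup.zpow_mem _ hα _))
      (Subgroup.mul_mem _ (Subgroup.zpow_mem _ hσ _) (Subgroup.zpow_mem _ hα _))
  · rw [Perm.mul_apply, Perm.mul_apply, hi, hk, ← hj]; simp

theorem chain_nil {d : ℕ} (hd : 0 < d) : Chain d {d} {d} [] := by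
  obtain ⟨Y, K, _, _, ρ, g, h1, h2⟩ := lab_exists {d} (fun x hx => by
    rw [Multiset.mem_singleton.1 hx]; exact hd)
  have hY : Fintype.card Y = d := by rw [← ty_sum_eq g, h2]; simp
  have hK : Fintype.card K = 1 := by
    have := congrArg Multiset.card h2
    simpa [ty] using this
  have : Subsingleton K := Fintype.card_le_one_iff_subsingleton.1 hK.le
  have e : Y ≃ Fin d := Fintype.equivFinOfCardEq hY
  have l := h1.congr e
  have hf : fullCycleType (e.permCongr ρ) = {d} := by rw [l.full, ty_congr, h2]
  refine ⟨e.permCongr ρ, [], hf, List.Forall₂.nil, by simpa using hf, ?_⟩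
  intro x y
  obtain ⟨k, hk⟩ := l.same x y (Subsingleton.elim _ _)
  exact ⟨e.permCongr ρ ^ k, Subgroup.zpow_mem _
    (Subgroup.subset_closure (Set.mem_union_left _ (Set.mem_singleton _))) k, hk⟩

theorem eq_single {a : Multiset ℕ} {d : ℕ} (h : a.card = 1) (hs : a.sum = d) : a = {d} := by
  obtain ⟨x, rfl⟩ := Multiset.card_eq_one.1 h
  simp at hs; rw [hs]

def Good (d : ℕ) (a b : Multiset ℕ) (g : ℕ) : Prop :=
  1 ≤ g ∨ a = {d} ∨ b = {d} ∨ a = {d - 1, 1} ∨ b = {d - 1, 1}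

theorem Good.symm {d : ℕ} {a b : Multiset ℕ} {g : ℕ} (h : Good d a b g) : Good d b a g := by
  unfold Good at *; tauto

theorem merge_all {d m g : ℕ} {a b : Multiset ℕ} (hm : 1 ≤ m) (pa : PosM a) (sa : a.sum = d)
    (hc : m + 1 ≤ a.card) (hG : Good d a b g) :
    ∃ a' : Multiset ℕ, PosM a' ∧ a'.sum = d ∧ a'.card + m = a.card ∧ Good d a' b g ∧
      Step d a a' m := by
  obtain ⟨A, C, rfl, hA⟩ := mult_split a hc
  have pA : PosM A := fun x hx => pa x (Multiset.mem_add.2 (Or.inl hx))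
  have pC : PosM C := fun x hx => pa x (Multiset.mem_add.2 (Or.inr hx))
  have hs := pA.card_le
  rw [Multiset.card_add] at hc
  have s' : (A.sum ::ₘ C).sum = d := by rw [← sa]; simp
  have c' : (A.sum ::ₘ C).card + m = (A + C).card := by simp; omega
  refine ⟨A.sum ::ₘ C, posM_cons.2 ⟨by omega, pC⟩, s', c', ?_, step_merge hm pA pC hA sa⟩
  rcases hG with h | h | h | h | h
  · exact Or.inl h
  · have := congrArg Multiset.card h
    simp at this; omega
  · exact Or.inr (Or.inr (Or.inl h))
  · refine Or.inr (Or.inl (eq_single ?_ s'))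
    have := congrArg Multiset.card h
    simp at this
    simp
    rw [← Multiset.card_eq_zero]
    omega
  · exact Or.inr (Or.inr (Or.inr (Or.inr h)))

theorem chain_one {d m g : ℕ} {a b : Multiset ℕ} (pa : PosM a) (pb : PosM b) (sa : a.sum = d)
    (sb : b.sum = d) (hm : 1 ≤ m) (hmd : m + 1 ≤ d) (hc : m + 2 = a.card + b.card + 2 * g)
    (ha : a.card ≤ m) (hb : b.card ≤ m) (hG : Good d a b g) : Chain d a b [m] := by
  have hook : ∀ {a b : Multiset ℕ}, PosM b → b.sum = d → m + 2 = a.card + b.card →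
      a = {d - 1, 1} → Sol a b (m + 1) := by
    intro a b pb sb hc h
    subst h
    simp at hc
    have := sol_hook pb sb (by omega)
    rw [show b.card = m by omega] at this
    exact this.symm
  by_cases hg : 1 ≤ g
  · exact ((one_adj d).1 a b g (m + 1) pa pb sa sb (by omega) hg (by omega) hmd).chain hm sb
  obtain rfl : g = 0 := by omega
  rcases hG with h | h | h | h | h
  · omega
  · subst h; simp at hc; omega
  · subst h; simp at hc; omega
  · exact (hook pb sb (by omega) h).chain hm sb
  · exact (hook pa sa (by omega) h).symm.chain hm sb

theorem chain_main {d : ℕ} (hd : 0 < d) (N : ℕ) : ∀ (ms : List ℕ) (a b : Multiset ℕ) (g : ℕ),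
    ms.length = N → PosM a → PosM b → a.sum = d → b.sum = d → (∀ m ∈ ms, 1 ≤ m ∧ m + 1 ≤ d) →
    ms.sum + 2 = a.card + b.card + 2 * g → Good d a b g → Chain d a b ms := by
  induction N with
  | zero =>
    intro ms a b g hN pa pb sa sb hms hc hG
    obtain rfl := List.length_eq_zero_iff.1 hN
    have ca : 0 < a.card := Multiset.card_pos.2 (by rintro rfl; simp at sa; omega)
    have cb : 0 < b.card := Multiset.card_pos.2 (by rintro rfl; simp at sb; omega)
    simp at hc
    rw [eq_single (by omega) sa, eq_single (by omega) sb]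
    exact chain_nil hd
  | succ N ih =>
    intro ms a b g hN pa pb sa sb hms hc hG
    obtain ⟨m, rest, rfl⟩ := List.exists_cons_of_length_eq_add_one hN
    obtain ⟨hm1, hmd⟩ := hms m (by simp)
    have hrest : ∀ x ∈ rest, 1 ≤ x ∧ x + 1 ≤ d := fun x hx => hms x (List.mem_cons_of_mem _ hx)
    simp only [List.length_cons, List.sum_cons] at hN hc
    by_cases hma : m + 1 ≤ a.card
    · obtain ⟨a', pa', sa', ca', hG', hst⟩ := merge_all hm1 pa sa hma hG
      exact (ih rest a' b g (by omega) pa' pb sa' sb hrest (by omega) hG').consStep hst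
    have ca : 0 < a.card := Multiset.card_pos.2 (by rintro rfl; simp at sa; omega)
    have cb : 0 < b.card := Multiset.card_pos.2 (by rintro rfl; simp at sb; omega)
    rcases List.eq_nil_or_concat rest with rfl | ⟨mid, l, rfl⟩
    · simp only [List.sum_nil] at hc
      by_cases hmb : m + 1 ≤ b.card
      · obtain ⟨b', pb', sb', cb', hG', hst⟩ := merge_all hm1 pb sb hmb hG.symm
        exact (ih [] a b' g (by simp at hN ⊢; omega) pa pb' sa sb' (by simp)
          (by simp; omega) hG'.symm).snocStep hst.symm
      · exact chain_one pa pb sa sb hm1 hmd (by omega) (by omega) (by omega) hG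
    obtain ⟨hl1, hld⟩ := hrest l (by simp)
    by_cases hlb : l + 1 ≤ b.card
    · obtain ⟨b', pb', sb', cb', hG', hst⟩ := merge_all hl1 pb sb hlb hG.symm
      have := (ih (m :: mid) a b' g (by simpa using hN) pa pb' sa sb'
        (fun x hx => hms x (by simp at hx ⊢; tauto))
        (by simp at hc ⊢; omega) hG'.symm).snocStep hst.symm
      simpa using this
    have hsl : l ≤ (mid ++ [l]).sum := by simp
    simp only [List.concat_eq_append] at *
    generalize mid ++ [l] = rest at *
    have p1 : PosM {d} := fun x hx => by rw [Multiset.mem_singleton.1 hx]; exact hd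
    have p2 : PosM {d - 1, 1} := fun x hx => by
      simp at hx; omega
    have t2 : Multiset.sum {d - 1, 1} = d := by simp; omega
    rcases Nat.mod_two_eq_zero_or_one (m + a.card) with hpar | hpar
    · have hst : Step d a {d - 1, 1} m := by
        by_cases hg1 : m = a.card
        · have := sol_hook pa sa (by omega)
          rw [← hg1] at this
          exact this.step hm1 t2
        · exact ((one_adj d).1 a {d - 1, 1} ((m - a.card) / 2) (m + 1) pa p2 sa t2 hd (by omega)
            (by simp; omega) hmd).step hm1 t2
      refine Chain.consStep (ih rest {d - 1, 1} b ((rest.sum - b.card) / 2) (by omega) p2 pb t2 sb hrest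
        (by simp; omega) (Or.inr (Or.inr (Or.inr (Or.inl rfl))))) hst
    · have hst : Step d a {d} m :=
        ((one_adj d).1 a {d} ((m + 1 - a.card) / 2) (m + 1) pa p1 sa (by simp) hd (by omega)
            (by simp; omega) hmd).step hm1 (by simp)
      refine Chain.consStep (ih rest {d} b ((rest.sum + 1 - b.card) / 2) (by omega) p1 pb (by simp) sb
        hrest (by simp; omega) (Or.inr (Or.inl rfl))) hst


end Helpers

/-- Proposition 1.4: for positive integers `d, ℓ, g`, partitions
`(a₁,…,a_p)`, `(b₁,…,b_q)` of `d` and a partition `(m₁,…,m_ℓ)` of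
`p + q - 2 + 2g` with each `mᵢ + 1 ≤ d`, there exist permutations
`τ₁, τ₂, σ₁, …, σ_ℓ ∈ S_d` with `τ₁ τ₂ σ₁ ⋯ σ_ℓ = id`, prescribed cycle
types, each `σᵢ` an `(mᵢ+1)`-cycle, generating a transitive subgroup. -/
theorem prop_1_4 (d ℓ g p q : ℕ) (hd : 0 < d) (hℓ : 0 < ℓ) (hg : 0 < g)
    (hp : 0 < p) (hq : 0 < q)
    (a : Fin p → ℕ) (b : Fin q → ℕ) (m : Fin ℓ → ℕ)
    (ha : ∀ i, 0 < a i) (hb : ∀ i, 0 < b i) (hm : ∀ i, 0 < m i)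
    (hsa : ∑ i, a i = d) (hsb : ∑ i, b i = d)
    (hsm : ∑ i, m i = p + q - 2 + 2 * g)
    (hmd : ∀ i, m i + 1 ≤ d) :
    ∃ (τ₁ τ₂ : Equiv.Perm (Fin d)) (σ : Fin ℓ → Equiv.Perm (Fin d)),
      τ₁ * τ₂ * (List.ofFn σ).prod = 1 ∧
      fullCycleType τ₁ = Finset.univ.val.map a ∧
      fullCycleType τ₂ = Finset.univ.val.map b ∧
      (∀ i, (σ i).IsCycle ∧ (σ i).support.card = m i + 1) ∧
      (∀ x y : Fin d,
        ∃ π ∈ Subgroup.closure ({τ₁, τ₂} ∪ Set.range σ), π x = y) := by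
  have pos : ∀ {k : ℕ} (c : Fin k → ℕ), (∀ i, 0 < c i) → PosM (Finset.univ.val.map c) := by
    intro k c hc x hx
    obtain ⟨i, -, rfl⟩ := Multiset.mem_map.1 hx
    exact hc i
  obtain ⟨τ, L, h1, h2, h3, h4⟩ := chain_main hd ℓ (List.ofFn m) (Finset.univ.val.map b)
    (Finset.univ.val.map a) g (by simp) (pos b hb) (pos a ha) hsb hsa
    (by
      intro x hx
      obtain ⟨i, rfl⟩ := List.mem_ofFn.1 hx
      exact ⟨hm i, hmd i⟩)
    (by rw [List.sum_ofFn, hsm]; simp; omega) (Or.inl hg)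
  have hL : L.length = ℓ := by simpa using h2.length_eq
  subst hL
  refine ⟨(τ * L.prod)⁻¹, τ, fun i => L.get i, ?_, ?_, h1, ?_, ?_⟩
  · rw [List.ofFn_get, mul_assoc, inv_mul_cancel]
  · rw [fct_inv, h3]
  · intro i
    have := (List.forall₂_iff_get.1 h2).2 i i.2 (by simp)
    simpa using this
  · intro x y
    obtain ⟨π, hπ, hxy⟩ := h4 x y
    refine ⟨π, ?_, hxy⟩
    revert hπ
    apply Subgroup.closure_mono
    rintro ρ (hρ | hρ)
    · exact Or.inl (Or.inr hρ)
    · obtain ⟨i, hi⟩ := List.get_of_mem hρ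
      exact Or.inr ⟨i, hi⟩
end

section
/- Let d and g be positive integers. Suppose a : {1,...,p} → ℤ>0 and b : {1,...,q} → ℤ>0 are partitions of d (i.e. a₁ + ⋯ + a_p = d and b₁ + ⋯ + b_q = d), and m₁ is a positive integer with m₁ = p + q − 2 + 2g and m₁ + 1 ≤ d. Then there exist permutations τ₁, τ₂, σ₁ in the symmetric group S_d such that: (1) τ₁ τ₂ σ₁ = id; (2) the cycle type of τ₁ (as a partition of d, counting each fixed point as a part equal to 1) is (a₁, …, a_p), the cycle type of τ₂ is (b₁, …, b_q), and σ₁ is a single cycle of length m₁ + 1; (3) the subgroup of S_d generated by τ₁, τ₂, σ₁ acts transitively on {1, 2, …, d}. -/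
namespace Boc

open Equiv Equiv.Perm

set_option linter.unusedSectionVars false

variable {Ω : Type} [Fintype Ω] [DecidableEq Ω]

theorem sc_of_rel (τ : Perm Ω) (r : Ω → Ω → Prop) (hr : Equivalence r)
    (h : ∀ u, r u (τ u)) {u v : Ω} (huv : SameCycle τ u v) : r u v := by
  obtain ⟨n, rfl⟩ := huv.exists_nat_pow_eq
  induction n with
  | zero => exact hr.refl _
  | succ n ih =>
    rw [pow_succ', Perm.mul_apply]
    exact hr.trans (ih ⟨n, by simp⟩) (h _)

/-- The second permutation has the cycles of `τ`, with those of `x` and `y` merged. -/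
def Mg (τ τ' : Perm Ω) (x y : Ω) : Prop :=
  ¬ SameCycle τ x y ∧ ∀ u v, SameCycle τ' u v ↔ SameCycle τ u v ∨
    ((SameCycle τ x u ∨ SameCycle τ y u) ∧ (SameCycle τ x v ∨ SameCycle τ y v))

theorem sc_apply (τ : Perm Ω) (u : Ω) : SameCycle τ u (τ u) := ⟨1, by simp⟩

theorem mg_right {τ : Perm Ω} {x y : Ω} (h : ¬ SameCycle τ x y) : Mg τ (τ * swap x y) x y := by
  refine ⟨h, fun u v => ⟨fun huv => ?_, ?_⟩⟩
  · refine sc_of_rel (τ * swap x y) (fun u v => SameCycle τ u v ∨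
      ((SameCycle τ x u ∨ SameCycle τ y u) ∧ (SameCycle τ x v ∨ SameCycle τ y v)))
      ⟨fun u => Or.inl (SameCycle.refl _ _), ?_, ?_⟩ ?_ huv
    · rintro a b (h1 | ⟨h1, h2⟩)
      · exact Or.inl h1.symm
      · exact Or.inr ⟨h2, h1⟩
    · rintro a b c (h1 | ⟨h1, h2⟩) (h3 | ⟨h3, h4⟩)
      · exact Or.inl (h1.trans h3)
      · exact Or.inr ⟨h3.imp (fun h => h.trans h1.symm) (fun h => h.trans h1.symm), h4⟩
      · exact Or.inr ⟨h1, h2.imp (fun h => h.trans h3) (fun h => h.trans h3)⟩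
      · exact Or.inr ⟨h1, h4⟩
    · intro a
      rw [Perm.mul_apply]
      by_cases hx : a = x
      · subst hx
        rw [swap_apply_left]
        exact Or.inr ⟨Or.inl (SameCycle.refl _ _), Or.inr (sc_apply _ _)⟩
      by_cases hy : a = y
      · subst hy
        rw [swap_apply_right]
        exact Or.inr ⟨Or.inr (SameCycle.refl _ _), Or.inl (sc_apply _ _)⟩
      rw [swap_apply_of_ne_of_ne hx hy]
      exact Or.inl (sc_apply _ _)
  · have h1 : (τ * swap x y) x = τ y := by simp
    have h2 : (τ * swap x y) y = τ x := by simp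
    have h3 : ∀ a, a ≠ x → a ≠ y → (τ * swap x y) a = τ a := by
      intro a hx hy
      rw [Perm.mul_apply, swap_apply_of_ne_of_ne hx hy]
    have key : ∀ k : ℕ, SameCycle (τ * swap x y) y ((τ ^ (k + 1)) x) := by
      intro k
      induction k with
      | zero => simpa [h2] using sc_apply (τ * swap x y) y
      | succ k ih =>
        rw [pow_succ', Perm.mul_apply]
        by_cases hx : (τ ^ (k + 1)) x = x
        · rw [hx, ← h2]; exact sc_apply _ _
        · rw [← h3 _ hx]
          · exact ih.trans (sc_apply _ _)
          · intro hy
            exact h ⟨(k + 1 : ℕ), by rw [zpow_natCast]; exact hy⟩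
    have hyx : SameCycle (τ * swap x y) y x := by
      have := key (orderOf τ - 1)
      rwa [Nat.sub_add_cancel (orderOf_pos τ), pow_orderOf_eq_one, Perm.one_apply] at this
    have step : ∀ a, SameCycle (τ * swap x y) a (τ a) := by
      intro a
      by_cases hx : a = x
      · subst hx
        rw [← h2]
        exact hyx.symm.trans (sc_apply _ _)
      by_cases hy : a = y
      · subst hy
        rw [← h1]
        exact hyx.trans (sc_apply _ _)
      rw [← h3 a hx hy]; exact sc_apply _ _
    have mono : ∀ a b, SameCycle τ a b → SameCycle (τ * swap x y) a b := fun a b hab =>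
      sc_of_rel τ (SameCycle (τ * swap x y))
        ⟨fun _ => SameCycle.refl _ _, fun h => h.symm, fun h h' => h.trans h'⟩ step hab
    have all : ∀ a, (SameCycle τ x a ∨ SameCycle τ y a) → SameCycle (τ * swap x y) x a := by
      rintro a (h | h)
      · exact mono _ _ h
      · exact hyx.symm.trans (mono _ _ h)
    rintro (h | ⟨h, h'⟩)
    · exact mono _ _ h
    · exact (all _ h).symm.trans (all _ h')

theorem mg_left {τ : Perm Ω} {x y : Ω} (h : ¬ SameCycle τ x y) : Mg τ (swap x y * τ) x y := by
  have h' : ¬ SameCycle τ⁻¹ x y := by rwa [sameCycle_inv]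
  have := mg_right h'
  refine ⟨h, fun u v => ?_⟩
  have h2 := this.2 u v
  rw [← sameCycle_inv] at h2
  simpa [mul_inv_rev] using h2

/-- cycle size -/
def S (τ : Perm Ω) (x : Ω) : ℕ := (Finset.univ.filter (fun y => SameCycle τ x y)).card

theorem S_congr {τ : Perm Ω} {x y : Ω} (h : SameCycle τ x y) : S τ x = S τ y := by
  unfold S
  congr 1
  ext u
  simp only [Finset.mem_filter, Finset.mem_univ, true_and]
  exact ⟨fun h' => h.symm.trans h', fun h' => h.trans h'⟩

theorem S_pos (τ : Perm Ω) (x : Ω) : 0 < S τ x :=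
  Finset.card_pos.2 ⟨x, by simp [SameCycle.refl]⟩

theorem S_inv (τ : Perm Ω) (x : Ω) : S τ⁻¹ x = S τ x := by
  unfold S
  congr 1
  ext u
  simp

namespace Mg
variable {τ τ' : Perm Ω} {x y : Ω}

theorem symm (h : Mg τ τ' x y) : Mg τ τ' y x := by
  refine ⟨fun h' => h.1 h'.symm, fun u v => ?_⟩
  rw [h.2]; tauto

theorem mono (h : Mg τ τ' x y) {u v : Ω} (huv : SameCycle τ u v) : SameCycle τ' u v := (h.2 u v).2 (Or.inl huv)

theorem sc (h : Mg τ τ' x y) : SameCycle τ' x y :=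
  (h.2 x y).2 (Or.inr ⟨Or.inl (SameCycle.refl _ _), Or.inr (SameCycle.refl _ _)⟩)

theorem sc_left (h : Mg τ τ' x y) {u : Ω} : SameCycle τ' x u ↔ SameCycle τ x u ∨ SameCycle τ y u := by
  rw [h.2]
  have := SameCycle.refl τ x
  tauto

theorem S_left (h : Mg τ τ' x y) : S τ' x = S τ x + S τ y := by
  unfold S
  rw [← Finset.card_union_of_disjoint]
  · congr 1
    ext u
    simp [h.sc_left]
  · rw [Finset.disjoint_filter]
    intro u _ h1 h2
    exact h.1 (h1.trans h2.symm)

theorem S_right (h : Mg τ τ' x y) : S τ' y = S τ x + S τ y := by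
  rw [← S_congr h.sc, h.S_left]

theorem sc_out (h : Mg τ τ' x y) {u v : Ω} (hu : ¬ SameCycle τ' x u) : SameCycle τ' u v ↔ SameCycle τ u v := by
  rw [h.sc_left] at hu
  rw [h.2]; tauto

theorem S_out (h : Mg τ τ' x y) {u : Ω} (hu : ¬ SameCycle τ' x u) : S τ' u = S τ u := by
  unfold S
  congr 1
  ext v
  simp [h.sc_out hu]

end Mg

/-- `τ` lives on `D` and has cycle type `A` there -/
def HasType (D : Finset Ω) (τ : Perm Ω) (A : Multiset ℕ) : Prop :=
  (∀ x ∉ D, ∀ u, SameCycle τ x u → u = x) ∧ 0 ∉ A ∧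
    ∀ k, (D.filter (fun x => S τ x = k)).card = k * A.count k

theorem HasType.mem_of_sc {D : Finset Ω} {τ : Perm Ω} {A : Multiset ℕ} (h : HasType D τ A)
    {x u : Ω} (hx : x ∈ D) (hu : SameCycle τ x u) : u ∈ D := by
  by_contra hc
  exact hc (h.1 u hc x hu.symm ▸ hx)

theorem HasType.not_sc {D : Finset Ω} {τ : Perm Ω} {A : Multiset ℕ} (h : HasType D τ A)
    {x u : Ω} (hx : x ∈ D) (hu : u ∉ D) : ¬ SameCycle τ x u :=
  fun hc => hu (h.mem_of_sc hx hc)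

theorem HasType.fix {D : Finset Ω} {τ : Perm Ω} {A : Multiset ℕ} (h : HasType D τ A)
    {x : Ω} (hx : x ∉ D) : τ x = x := h.1 x hx _ (sc_apply _ _)

theorem HasType.inv {D : Finset Ω} {τ : Perm Ω} {A : Multiset ℕ} (h : HasType D τ A) :
    HasType D τ⁻¹ A := by
  simpa only [HasType, S_inv, sameCycle_inv] using h

theorem HasType.S_out {D : Finset Ω} {τ : Perm Ω} {A : Multiset ℕ} (h : HasType D τ A)
    {x : Ω} (hx : x ∉ D) : S τ x = 1 := by
  rw [S, Finset.card_eq_one]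
  refine ⟨x, ?_⟩
  ext u
  simp only [Finset.mem_filter, Finset.mem_univ, true_and, Finset.mem_singleton]
  exact ⟨h.1 x hx u, fun h => h ▸ SameCycle.refl _ _⟩

theorem HasType.add_fixed {D : Finset Ω} {τ : Perm Ω} {A : Multiset ℕ} (h : HasType D τ A)
    {z : Ω} (hz : z ∉ D) : HasType (insert z D) τ (1 ::ₘ A) := by
  refine ⟨fun x hx => h.1 x (fun h' => hx (Finset.mem_insert_of_mem h')), ?_, fun k => ?_⟩
  · simp [h.2.1]
  · rw [Finset.filter_insert, h.S_out hz, Multiset.count_cons]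
    by_cases hk : k = 1
    · subst hk
      rw [if_pos rfl, Finset.card_insert_of_notMem (by simp [hz]), h.2.2]; simp
    · rw [if_neg (fun h => hk h.symm), h.2.2, if_neg hk]; simp

theorem HasType.exists_mem {D : Finset Ω} {τ : Perm Ω} {A : Multiset ℕ} {k : ℕ}
    (h : HasType D τ (k ::ₘ A)) : ∃ x ∈ D, S τ x = k := by
  have h1 := h.2.2 k
  have h2 : 0 < k := Nat.pos_of_ne_zero (fun h' => h.2.1 (by simp [h']))
  rw [Multiset.count_cons_self] at h1
  have : 0 < (D.filter (fun x => S τ x = k)).card := by rw [h1]; positivity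
  obtain ⟨x, hx⟩ := Finset.card_pos.1 this
  exact ⟨x, by simpa using hx⟩

theorem HasType.exists_mem2 {D : Finset Ω} {τ : Perm Ω} {A : Multiset ℕ} {k l : ℕ}
    (h : HasType D τ (k ::ₘ l ::ₘ A)) :
    ∃ x ∈ D, ∃ y ∈ D, S τ x = k ∧ S τ y = l ∧ ¬ SameCycle τ x y := by
  obtain ⟨x, hx, hxk⟩ := h.exists_mem
  by_cases hkl : k = l
  · subst hkl
    have h1 := h.2.2 k
    have h2 : 0 < k := Nat.pos_of_ne_zero (fun h' => h.2.1 (by simp [h']))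
    rw [Multiset.count_cons_self, Multiset.count_cons_self] at h1
    by_contra hc
    push Not at hc
    have : (D.filter (fun x => S τ x = k)).card ≤ S τ x := by
      apply Finset.card_le_card
      intro y
      simp only [Finset.mem_filter, Finset.mem_univ, true_and]
      exact fun hy => hc x hx y hy.1 hxk hy.2
    rw [h1, hxk] at this
    nlinarith
  · rw [Multiset.cons_swap] at h
    obtain ⟨y, hy, hyl⟩ := h.exists_mem
    exact ⟨x, hx, y, hy, hxk, hyl, fun h' => hkl (by rw [← hxk, ← hyl, S_congr h'])⟩

theorem Mg.count {D : Finset Ω} {τ τ' : Perm Ω} {x y : Ω} (h : Mg τ τ' x y)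
    (hx : ∀ u, SameCycle τ x u → u ∈ D) (hy : ∀ u, SameCycle τ y u → u ∈ D) (k : ℕ) :
    (D.filter (fun u => S τ' u = k)).card + (if k = S τ x then S τ x else 0)
      + (if k = S τ y then S τ y else 0)
    = (D.filter (fun u => S τ u = k)).card
      + (if k = S τ x + S τ y then S τ x + S τ y else 0) := by
  have e1 : ∀ f : Ω → ℕ, (D.filter (fun u => f u = k)).card =
      (D.filter (fun u => f u = k ∧ ¬ SameCycle τ' x u)).card +
      (Finset.univ.filter (fun u => SameCycle τ x u ∧ f u = k)).card
      + (Finset.univ.filter (fun u => SameCycle τ y u ∧ f u = k)).card := by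
    intro f
    rw [add_assoc, ← Finset.card_union_of_disjoint, ← Finset.card_union_of_disjoint]
    · congr 1
      ext u
      simp only [Finset.mem_filter, Finset.mem_union, Finset.mem_univ, true_and, h.sc_left]
      have := hx u
      have := hy u
      tauto
    · rw [Finset.disjoint_left]
      intro u
      simp only [Finset.mem_filter, Finset.mem_union, Finset.mem_univ, true_and, h.sc_left]
      tauto
    · rw [Finset.disjoint_filter]
      intro u _ h1 h2
      exact h.1 (h1.1.trans h2.1.symm)
  have e2 : ∀ (f : Ω → ℕ) (a : Ω) (c : ℕ), (∀ u, SameCycle τ a u → f u = c) →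
      (Finset.univ.filter (fun u => SameCycle τ a u ∧ f u = k)).card =
        if k = c then S τ a else 0 := by
    intro f a c hf
    split_ifs with hk
    · unfold S
      congr 1
      ext u
      simp only [Finset.mem_filter, Finset.mem_univ, true_and, and_iff_left_iff_imp]
      intro hu; rw [hf u hu, hk]
    · rw [Finset.card_eq_zero, Finset.filter_eq_empty_iff]
      rintro u - ⟨hu, hfu⟩
      exact hk (by rw [← hfu, hf u hu])
  have e3 : (D.filter (fun u => S τ' u = k ∧ ¬ SameCycle τ' x u)) =
      (D.filter (fun u => S τ u = k ∧ ¬ SameCycle τ' x u)) := by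
    ext u
    simp only [Finset.mem_filter]
    constructor
    · rintro ⟨a, b, c⟩; exact ⟨a, by rw [← h.S_out c, b], c⟩
    · rintro ⟨a, b, c⟩; exact ⟨a, by rw [h.S_out c, b], c⟩
  rw [e1 (S τ'), e1 (S τ), e3, e2 (S τ) x (S τ x) (fun u hu => (S_congr hu).symm),
    e2 (S τ) y (S τ y) (fun u hu => (S_congr hu).symm),
    e2 (S τ') x (S τ x + S τ y) (fun u hu => by rw [← S_congr (h.mono hu), h.S_left]),
    e2 (S τ') y (S τ x + S τ y) (fun u hu => by rw [← S_congr (h.mono hu), h.S_right])]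
  split_ifs <;> omega

theorem Mg.type {D : Finset Ω} {τ τ' : Perm Ω} {x y : Ω} (h : Mg τ τ' x y) {s t : ℕ}
    {A : Multiset ℕ} (hT : HasType D τ (s ::ₘ t ::ₘ A)) (hx : x ∈ D) (hy : y ∈ D)
    (hs : S τ x = s) (ht : S τ y = t) : HasType D τ' ((s + t) ::ₘ A) := by
  refine ⟨fun u hu v huv => ?_, ?_, fun k => ?_⟩
  · rcases (h.2 u v).1 huv with h1 | ⟨h1 | h1, _⟩
    · exact hT.1 u hu v h1
    · exact absurd (hT.mem_of_sc hx h1) hu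
    · exact absurd (hT.mem_of_sc hy h1) hu
  · have := hT.2.1
    simp only [Multiset.mem_cons, not_or] at this ⊢
    exact ⟨by omega, this.2.2⟩
  · have h1 := h.count (fun u => hT.mem_of_sc hx) (fun u => hT.mem_of_sc hy) k
    have h2 := hT.2.2 k
    rw [hs, ht] at h1
    simp only [Multiset.count_cons] at h2 ⊢
    rw [h2] at h1
    split_ifs at h1 ⊢ <;> simp only [mul_add, mul_one, mul_zero] at h1 ⊢ <;> omega

theorem Mg.type_rev {D : Finset Ω} {τ τ' : Perm Ω} {x y : Ω} (h : Mg τ τ' x y) {s t : ℕ}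
    {A : Multiset ℕ} (hT : HasType D τ' ((s + t) ::ₘ A)) (hx : x ∈ D) (hy : y ∈ D)
    (hs : S τ x = s) (ht : S τ y = t) : HasType D τ (s ::ₘ t ::ₘ A) := by
  refine ⟨fun u hu v huv => hT.1 u hu v (h.mono huv), ?_, fun k => ?_⟩
  · have := hT.2.1
    have h1 := S_pos τ x
    have h2 := S_pos τ y
    simp only [Multiset.mem_cons, not_or] at this ⊢
    exact ⟨by omega, by omega, this.2⟩
  · have h1 := h.count (fun u hu => hT.mem_of_sc hx (h.mono hu))
      (fun u hu => hT.mem_of_sc hy (h.mono hu)) k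
    have h2 := hT.2.2 k
    rw [hs, ht] at h1
    simp only [Multiset.count_cons] at h2 ⊢
    rw [h2] at h1
    split_ifs at h1 ⊢ <;> simp only [mul_add, mul_one, mul_zero] at h1 ⊢ <;> omega

/-- hooking a new point `z` next to `y` -/
theorem HasType.hook {D : Finset Ω} {τ τ' : Perm Ω} {k : ℕ} {A : Multiset ℕ}
    (h : HasType D τ (k ::ₘ A)) {y z : Ω} (hy : y ∈ D) (hz : z ∉ D) (hk : S τ y = k)
    (hm : Mg τ τ' y z) : HasType (insert z D) τ' ((k + 1) ::ₘ A) := by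
  have h1 := h.add_fixed hz
  rw [Multiset.cons_swap] at h1
  exact hm.type h1 (by simp [hy]) (by simp) hk (h.S_out hz)

/-- orbit description for a split -/
theorem split_aux (τ : Perm Ω) (x : Ω) (r : ℕ) (hr : 0 < r)
    (hret : ∀ i, 0 < i → i ≤ r → (τ ^ i) x ≠ x) :
    ¬ SameCycle (τ * swap x ((τ ^ r) x)) x ((τ ^ r) x) ∧
      S (τ * swap x ((τ ^ r) x)) ((τ ^ r) x) = r := by
  set y := (τ ^ r) x with hy
  set τ' := τ * swap x y with hτ'
  have inj : ∀ i j, i < j → j ≤ r → (τ ^ i) x ≠ (τ ^ j) x := by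
    intro i j hij hj he
    apply hret (j - i) (by omega) (by omega)
    have : (τ ^ j) x = (τ ^ i) ((τ ^ (j - i)) x) := by
      rw [← Perm.mul_apply, ← pow_add]; congr 2; omega
    rw [this] at he
    exact ((τ ^ i).injective he).symm
  have hpow : ∀ i, i < r → (τ' ^ (i + 1)) y = (τ ^ (i + 1)) x := by
    intro i
    induction i with
    | zero => intro _; simp [hτ']
    | succ i ih =>
      intro hi
      rw [pow_succ', Perm.mul_apply, ih (by omega), hτ', Perm.mul_apply,
        swap_apply_of_ne_of_ne (hret _ (by omega) (by omega)) (inj _ _ hi le_rfl),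
        pow_succ' τ (i + 1), Perm.mul_apply]
  have hclosed : ∀ n : ℕ, ∃ i, 0 < i ∧ i ≤ r ∧ (τ' ^ n) y = (τ ^ i) x := by
    intro n
    induction n with
    | zero => exact ⟨r, hr, le_rfl, rfl⟩
    | succ n ih =>
      obtain ⟨i, h0, hi, he⟩ := ih
      rw [pow_succ', Perm.mul_apply, he]
      rcases hi.lt_or_eq with hlt | rfl
      · refine ⟨i + 1, by omega, by omega, ?_⟩
        rw [hτ', Perm.mul_apply,
          swap_apply_of_ne_of_ne (hret _ h0 hi) (inj _ _ hlt le_rfl), pow_succ', Perm.mul_apply]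
      · exact ⟨1, by omega, by omega, by simp [hτ', hy]⟩
  have hiff : ∀ u, SameCycle τ' y u ↔ ∃ i, i < r ∧ (τ ^ (i + 1)) x = u := by
    intro u
    constructor
    · intro h
      obtain ⟨n, rfl⟩ := h.exists_nat_pow_eq
      obtain ⟨i, h0, hi, he⟩ := hclosed n
      exact ⟨i - 1, by omega, by rw [he]; congr 2; omega⟩
    · rintro ⟨i, hi, rfl⟩
      exact ⟨(i + 1 : ℕ), by rw [zpow_natCast]; exact hpow i hi⟩
  constructor
  · intro h
    obtain ⟨i, hi, he⟩ := (hiff x).1 h.symm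
    exact hret _ (by omega) (by omega) he
  · have : Finset.univ.filter (fun u => SameCycle τ' y u) =
        (Finset.range r).image (fun i => (τ ^ (i + 1)) x) := by
      ext u
      simp [hiff]
    rw [S, this, Finset.card_image_of_injOn, Finset.card_range]
    intro i hi j hj he
    simp only [Finset.coe_range, Set.mem_Iio] at hi hj
    by_contra hne
    rcases Nat.lt_or_gt_of_ne hne with hlt | hlt
    · exact inj _ _ (Nat.succ_lt_succ hlt) (by omega) he
    · exact inj _ _ (Nat.succ_lt_succ hlt) (by omega) he.symm

theorem split {τ : Perm Ω} {x y : Ω} (hxy : x ≠ y) (h : SameCycle τ x y) :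
    Mg (τ * swap x y) τ x y := by
  have hex : ∃ r : ℕ, (τ ^ r) x = y := h.exists_nat_pow_eq
  classical
  let r := Nat.find hex
  have hr : (τ ^ r) x = y := Nat.find_spec hex
  have h0 : 0 < r := by
    rcases Nat.eq_zero_or_pos r with h0 | h0
    · rw [h0] at hr; exact absurd hr hxy
    · exact h0
  have hns := (split_aux τ x r h0 (by
    intro i hi hir he
    apply Nat.find_min hex (m := r - i) (by omega)
    have : (τ ^ r) x = (τ ^ (r - i)) ((τ ^ i) x) := by
      rw [← Perm.mul_apply, ← pow_add]; congr 2; omega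
    rw [← hr, this, he])).1
  rw [hr] at hns
  have := mg_right hns
  simpa [mul_assoc] using this

theorem split_size {τ : Perm Ω} {x : Ω} {r s : ℕ} (hr : 0 < r) (hs : 0 < s)
    (h : S τ x = r + s) : ∃ y, x ≠ y ∧ SameCycle τ x y ∧
      S (τ * swap x y) x = r ∧ S (τ * swap x y) y = s := by
  have hret : ∀ i, 0 < i → i ≤ s → (τ ^ i) x ≠ x := by
    intro i h0 hi he
    have : Finset.univ.filter (fun u => SameCycle τ x u) ⊆
        (Finset.range i).image (fun j => (τ ^ j) x) := by
      intro u
      simp only [Finset.mem_filter, Finset.mem_univ, true_and, Finset.mem_image, Finset.mem_range]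
      intro hu
      obtain ⟨n, rfl⟩ := hu.exists_nat_pow_eq
      refine ⟨n % i, Nat.mod_lt _ h0, ?_⟩
      conv_rhs => rw [← Nat.mod_add_div n i, pow_add, pow_mul, Perm.mul_apply]
      congr 1
      have : ∀ m : ℕ, ((τ ^ i) ^ m) x = x := by
        intro m
        induction m with
        | zero => simp
        | succ m ih => rw [pow_succ', Perm.mul_apply, ih, he]
      rw [this]
    have h1 := (Finset.card_le_card this).trans Finset.card_image_le
    rw [Finset.card_range] at h1
    change S τ x ≤ i at h1
    omega
  have h1 := split_aux τ x s hs hret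
  have hne : x ≠ (τ ^ s) x := (hret s hs le_rfl).symm
  have hsc : SameCycle τ x ((τ ^ s) x) := ⟨s, by simp⟩
  refine ⟨(τ ^ s) x, hne, hsc, ?_, h1.2⟩
  have := (split hne hsc).S_left
  omega

theorem perm_apply_inv (c : Perm Ω) (x : Ω) : c (c⁻¹ x) = x := c.apply_symm_apply x

/-- every cycle of `τ` in `D` meets `P` -/
def Meets (D P : Finset Ω) (τ : Perm Ω) : Prop := ∀ x ∈ D, ∃ p ∈ P, SameCycle τ x p

theorem Meets.hook {D P P' : Finset Ω} {τ τ' : Perm Ω} {y z : Ω} (h : Meets D P τ)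
    (hm : Mg τ τ' y z) (hy : y ∈ D) (hP : P ⊆ P') : Meets (insert z D) P' τ' := by
  intro x hx
  rcases Finset.mem_insert.1 hx with rfl | hx
  · obtain ⟨p, hp, hyp⟩ := h y hy
    exact ⟨p, hP hp, hm.sc.symm.trans (hm.mono hyp)⟩
  · obtain ⟨p, hp, hyp⟩ := h x hx
    exact ⟨p, hP hp, hm.mono hyp⟩

theorem Meets.add {D P P' : Finset Ω} {τ : Perm Ω} {z : Ω} (h : Meets D P τ)
    (hz : z ∈ P') (hP : P ⊆ P') : Meets (insert z D) P' τ := by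
  intro x hx
  rcases Finset.mem_insert.1 hx with rfl | hx
  · exact ⟨x, hz, SameCycle.refl _ _⟩
  · obtain ⟨p, hp, hyp⟩ := h x hx
    exact ⟨p, hP hp, hyp⟩

/-- `c` is a cycle with support `P` (possibly a single point) -/
def Cyc (P : Finset Ω) (c : Perm Ω) : Prop :=
  (∀ x ∉ P, c x = x) ∧ ∀ x ∈ P, ∀ y ∈ P, SameCycle c x y

theorem Cyc.not_sc {P : Finset Ω} {c : Perm Ω} (h : Cyc P c) {y z : Ω} (hy : y ∈ P)
    (hz : z ∉ P) : ¬ SameCycle c y z := by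
  intro hs
  obtain ⟨n, hn⟩ := hs.symm.exists_nat_pow_eq
  have : ∀ n : ℕ, (c ^ n) z = z := by
    intro n
    induction n with
    | zero => simp
    | succ n ih => rw [pow_succ', Perm.mul_apply, ih, h.1 z hz]
  rw [this] at hn
  exact hz (hn ▸ hy)

theorem Cyc.hook {P : Finset Ω} {c : Perm Ω} (h : Cyc P c) {y z : Ω} (hy : y ∈ P)
    (hz : z ∉ P) : Cyc (insert z P) (c * swap y z) := by
  have hm := mg_right (h.not_sc hy hz)
  refine ⟨fun x hx => ?_, ?_⟩
  · have h1 : x ≠ z := fun h => hx (by simp [h])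
    have h2 : x ∉ P := fun h => hx (by simp [h])
    have h3 : x ≠ y := fun h => h2 (h ▸ hy)
    rw [Perm.mul_apply, swap_apply_of_ne_of_ne h3 h1, h.1 x h2]
  · have : ∀ x ∈ insert z P, SameCycle (c * swap y z) y x := by
      intro x hx
      rcases Finset.mem_insert.1 hx with rfl | hx
      · exact hm.sc
      · exact hm.mono (h.2 y hy x hx)
    intro x hx x' hx'
    exact (this x hx).symm.trans (this x' hx')

/-- The state of the construction. -/
structure St (D : Finset Ω) (τ₁ τ₂ : Perm Ω) (P : Finset Ω) (A B : Multiset ℕ) : Prop where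
  t1 : HasType D τ₁ A
  t2 : HasType D τ₂ B
  cy : Cyc P (τ₁ * τ₂)
  sub : P ⊆ D
  m1 : Meets D P τ₁
  m2 : Meets D P τ₂

section
variable {D P : Finset Ω} {τ₁ τ₂ : Perm Ω} {A B : Multiset ℕ}

theorem St.symm (h : St D τ₁ τ₂ P A B) : St D τ₂⁻¹ τ₁⁻¹ P B A := by
  refine ⟨h.t2.inv, h.t1.inv, ?_, h.sub, ?_, ?_⟩
  · rw [← mul_inv_rev]
    refine ⟨fun x hx => ?_, fun x hx y hy => ?_⟩
    · rw [Perm.inv_eq_iff_eq, h.cy.1 x hx]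
    · rw [sameCycle_inv]; exact h.cy.2 x hx y hy
  · intro x hx
    simpa only [sameCycle_inv] using h.m2 x hx
  · intro x hx
    simpa only [sameCycle_inv] using h.m1 x hx

theorem St.dup {k l : ℕ} (h : St D τ₁ τ₂ P (k ::ₘ A) (l ::ₘ B)) {y z : Ω} (hy : y ∈ D)
    (hk : S τ₁ y = k) (hl : S τ₂ y = l) (hz : z ∉ D) :
    St (insert z D) (τ₁ * swap y z) (swap y z * τ₂) P ((k + 1) ::ₘ A) ((l + 1) ::ₘ B) := by
  have m1 := mg_right (h.t1.not_sc hy hz)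
  have m2 := mg_left (h.t2.not_sc hy hz)
  refine ⟨h.t1.hook hy hz hk m1, h.t2.hook hy hz hl m2, ?_,
    h.sub.trans (Finset.subset_insert _ _), h.m1.hook m1 hy (Finset.Subset.refl _),
    h.m2.hook m2 hy (Finset.Subset.refl _)⟩
  have : τ₁ * swap y z * (swap y z * τ₂) = τ₁ * τ₂ := by simp [mul_assoc]
  rw [this]; exact h.cy

theorem St.addB {b : ℕ} (h : St D τ₁ τ₂ P A (b ::ₘ B)) {y z : Ω} (hy : y ∈ P)
    (hb : S τ₂ y = b) (hz : z ∉ D) :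
    St (insert z D) τ₁ (τ₂ * swap y z) (insert z P) (1 ::ₘ A) ((b + 1) ::ₘ B) := by
  have hyD := h.sub hy
  have m2 := mg_right (h.t2.not_sc hyD hz)
  refine ⟨h.t1.add_fixed hz, h.t2.hook hyD hz hb m2, ?_, Finset.insert_subset_insert _ h.sub,
    h.m1.add (by simp) (Finset.subset_insert _ _), h.m2.hook m2 hyD (Finset.subset_insert _ _)⟩
  rw [← mul_assoc]
  exact h.cy.hook hy (fun h' => hz (h.sub h'))

theorem idC (y w z₁ z₂ : Ω) (h : z₁ ≠ z₂) (hy1 : y ≠ z₁) (hy2 : y ≠ z₂) (hw1 : w ≠ z₁)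
    (hw2 : w ≠ z₂) :
    swap y z₂ * swap y z₁ * (swap w z₂ * swap w z₁) = swap y z₁ * swap w z₂ := by
  have e1 : swap y z₂ * swap y z₁ = swap y z₁ * swap z₁ z₂ := by
    ext u
    simp only [Perm.mul_apply, swap_apply_def]
    grind
  have e2 : swap w z₂ * swap w z₁ = swap z₁ z₂ * swap w z₂ := by
    ext u
    simp only [Perm.mul_apply, swap_apply_def]
    grind
  rw [e1, e2]
  simp [mul_assoc]

theorem idE (y w z₁ z₂ : Ω) (h : z₁ ≠ z₂) (hyw : y ≠ w) (hy1 : y ≠ z₁) (hy2 : y ≠ z₂)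
    (hw1 : w ≠ z₁) (hw2 : w ≠ z₂) :
    swap z₁ z₂ * (swap y w * swap y z₂ * swap w z₁) = swap y z₁ * swap w z₂ := by
  ext u
  simp only [Perm.mul_apply, swap_apply_def]
  grind

theorem HasType.hook2 {τ τ' τ'' : Perm Ω} {k : ℕ} {A : Multiset ℕ}
    (h : HasType D τ (k ::ₘ A)) {y w z₁ z₂ : Ω} (hy : y ∈ D) (hyw : SameCycle τ y w)
    (hz₁ : z₁ ∉ D) (hz₂ : z₂ ∉ D) (hz : z₁ ≠ z₂) (hk : S τ y = k)
    (hm : Mg τ τ' y z₁) (hm' : Mg τ' τ'' w z₂) :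
    HasType (insert z₂ (insert z₁ D)) τ'' ((k + 2) ::ₘ A) ∧
      S τ'' z₁ = k + 2 ∧ S τ'' z₂ = k + 2 := by
  have h1 := h.hook hy hz₁ hk hm
  have hw : w ∈ insert z₁ D := Finset.mem_insert_of_mem (h.mem_of_sc hy hyw)
  have hz2 : z₂ ∉ insert z₁ D := by simp [hz₂, hz.symm]
  have hs : S τ' w = k + 1 := by
    rw [← S_congr (hm.mono hyw), hm.S_left, hk, h.S_out hz₁]
  have hs2 : S τ'' w = k + 2 := by
    rw [hm'.S_left, hs, h1.S_out hz2]
  refine ⟨h1.hook hw hz2 hs hm', ?_, ?_⟩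
  · rw [← hs2]
    exact S_congr ((hm'.mono (hm.sc.symm.trans (hm.mono hyw))))
  · rw [← hs2]
    exact (S_congr hm'.sc).symm

theorem St.opC {a b : ℕ} (h : St D τ₁ τ₂ P (a ::ₘ A) (b ::ₘ B)) {y w z₁ z₂ : Ω} (hy : y ∈ P)
    (hw : w ∈ P) (ha : S τ₁ y = a) (hb : S τ₂ w = b) (hz₁ : z₁ ∉ D) (hz₂ : z₂ ∉ D)
    (hz : z₁ ≠ z₂) :
    ∃ τ₁' τ₂', St (insert z₂ (insert z₁ D)) τ₁' τ₂' (insert z₂ (insert z₁ P))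
      ((a + 2) ::ₘ A) ((b + 2) ::ₘ B) ∧ S τ₁' z₁ = a + 2 ∧ S τ₂' z₁ = b + 2 := by
  have hyD := h.sub hy
  have hwD := h.sub hw
  have hz1' : z₁ ∉ insert z₂ D := by simp [hz₁, hz]
  have hz2' : z₂ ∉ insert z₁ D := by simp [hz₂, hz.symm]
  have m1 := mg_left (h.t1.not_sc hyD hz₁)
  have m1' := mg_left ((h.t1.hook hyD hz₁ ha m1).not_sc (Finset.mem_insert_of_mem hyD) hz2')
  have m2 := mg_right (h.t2.not_sc hwD hz₂)
  have m2' := mg_right ((h.t2.hook hwD hz₂ hb m2).not_sc (Finset.mem_insert_of_mem hwD) hz1')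
  obtain ⟨T1, s1, -⟩ := h.t1.hook2 hyD (SameCycle.refl _ _) hz₁ hz₂ hz ha m1 m1'
  obtain ⟨T2, -, s2⟩ := h.t2.hook2 hwD (SameCycle.refl _ _) hz₂ hz₁ hz.symm hb m2 m2'
  rw [Finset.insert_comm] at T2
  have M2 := (h.m2.hook m2 hwD (Finset.Subset.refl _)).hook m2' (Finset.mem_insert_of_mem hwD)
    ((Finset.subset_insert z₁ P).trans (Finset.subset_insert z₂ _))
  rw [Finset.insert_comm] at M2
  refine ⟨_, _, ⟨T1, T2, ?_, ?_, ?_, M2⟩, s1, s2⟩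
  · set c := τ₁ * τ₂ with hc
    have hz1P : z₁ ∉ P := fun h' => hz₁ (h.sub h')
    have hz2P : z₂ ∉ P := fun h' => hz₂ (h.sub h')
    have hy' : c⁻¹ y ∈ P := by
      by_contra hcon
      have := h.cy.1 _ hcon
      rw [← hc, perm_apply_inv] at this
      exact hcon (this ▸ hy)
    have e : swap y z₂ * (swap y z₁ * τ₁) * (τ₂ * swap w z₂ * swap w z₁)
        = c * swap (c⁻¹ y) z₁ * swap w z₂ := by
      have e1 : swap y z₁ * c = c * swap (c⁻¹ y) z₁ := by
        rw [Equiv.mul_swap_eq_swap_mul, perm_apply_inv, h.cy.1 _ hz1P]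
      have e2 : swap y z₂ * c = c * swap (c⁻¹ y) z₂ := by
        rw [Equiv.mul_swap_eq_swap_mul, perm_apply_inv, h.cy.1 _ hz2P]
      have e3 := idC (c⁻¹ y) w z₁ z₂ hz (fun h' => hz1P (h' ▸ hy')) (fun h' => hz2P (h' ▸ hy'))
        (fun h' => hz1P (h' ▸ hw)) (fun h' => hz2P (h' ▸ hw))
      calc _ = swap y z₂ * (swap y z₁ * c) * (swap w z₂ * swap w z₁) := by
            simp only [hc, mul_assoc]
        _ = (swap y z₂ * c) * swap (c⁻¹ y) z₁ * (swap w z₂ * swap w z₁) := by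
            rw [e1]; simp only [mul_assoc]
        _ = c * (swap (c⁻¹ y) z₂ * swap (c⁻¹ y) z₁ * (swap w z₂ * swap w z₁)) := by
            rw [e2]; simp only [mul_assoc]
        _ = _ := by rw [e3]; simp only [mul_assoc]
    rw [e]
    exact (h.cy.hook hy' hz1P).hook (Finset.mem_insert_of_mem hw) (by simp [hz2P, hz.symm])
  · exact Finset.insert_subset_insert _ (Finset.insert_subset_insert _ h.sub)
  · exact (h.m1.hook m1 hyD (Finset.Subset.refl _)).hook m1' (Finset.mem_insert_of_mem hyD)
      ((Finset.subset_insert z₁ P).trans (Finset.subset_insert z₂ _))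

theorem St.coreE (h : St D τ₁ τ₂ P A B) {y w z₁ z₂ : Ω} (hy : y ∈ P) (hw : w ∈ P)
    (hyw : y ≠ w) (hz₁ : z₁ ∉ D) (hz₂ : z₂ ∉ D) (hz : z₁ ≠ z₂) {B' : Multiset ℕ}
    (hT : HasType (insert z₂ (insert z₁ D)) (τ₂ * swap y w * swap y z₂ * swap w z₁) B')
    (hM : Meets D P (τ₂ * swap y w * swap y z₂ * swap w z₁)) :
    St (insert z₂ (insert z₁ D)) (τ₁ * swap z₁ z₂) (τ₂ * swap y w * swap y z₂ * swap w z₁)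
      (insert z₂ (insert z₁ P)) (2 ::ₘ A) B' ∧ S (τ₁ * swap z₁ z₂) z₁ = 2 ∧
      SameCycle (τ₁ * swap z₁ z₂) z₁ z₂ := by
  have hz2' : z₂ ∉ insert z₁ D := by simp [hz₂, hz.symm]
  have hz1P : z₁ ∉ P := fun h' => hz₁ (h.sub h')
  have hz2P : z₂ ∉ P := fun h' => hz₂ (h.sub h')
  have T1 := h.t1.add_fixed hz₁
  have m1 := mg_right (T1.not_sc (Finset.mem_insert_self _ _) hz2')
  refine ⟨⟨T1.hook (Finset.mem_insert_self _ _) hz2' (h.t1.S_out hz₁) m1, hT, ?_, ?_, ?_, ?_⟩,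
    ?_, m1.sc⟩
  · have e0 : swap z₁ z₂ * τ₂ = τ₂ * swap z₁ z₂ := by
      rw [Equiv.mul_swap_eq_swap_mul, h.t2.fix hz₁, h.t2.fix hz₂]
    have e3 := idE y w z₁ z₂ hz hyw (fun h' => hz1P (h' ▸ hy)) (fun h' => hz2P (h' ▸ hy))
        (fun h' => hz1P (h' ▸ hw)) (fun h' => hz2P (h' ▸ hw))
    have e : τ₁ * swap z₁ z₂ * (τ₂ * swap y w * swap y z₂ * swap w z₁) =
        τ₁ * τ₂ * swap y z₁ * swap w z₂ := by
      calc _ = τ₁ * (swap z₁ z₂ * τ₂) * (swap y w * swap y z₂ * swap w z₁) := by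
            simp only [mul_assoc]
        _ = τ₁ * τ₂ * (swap z₁ z₂ * (swap y w * swap y z₂ * swap w z₁)) := by
            rw [e0]; simp only [mul_assoc]
        _ = _ := by rw [e3]; simp only [mul_assoc]
    rw [e]
    exact (h.cy.hook hy hz1P).hook (Finset.mem_insert_of_mem hw) (by simp [hz2P, hz.symm])
  · exact Finset.insert_subset_insert _ (Finset.insert_subset_insert _ h.sub)
  · exact (h.m1.add (P' := insert z₂ (insert z₁ P)) (by simp)
      ((Finset.subset_insert z₁ P).trans (Finset.subset_insert z₂ _))).hook m1
      (Finset.mem_insert_self _ _) (Finset.Subset.refl _)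
  · have hs : P ⊆ insert z₂ (insert z₁ P) :=
      (Finset.subset_insert z₁ P).trans (Finset.subset_insert z₂ _)
    exact (hM.add (P' := insert z₂ (insert z₁ P)) (by simp) hs).add (by simp)
      (Finset.Subset.refl _)
  · rw [m1.S_left, h.t1.S_out hz₁, h.t1.S_out hz₂]

/-- merging two cycles of `τ₂` -/
theorem St.opH {r s : ℕ} (h : St D τ₁ τ₂ P A (r ::ₘ s ::ₘ B)) {y w z₁ z₂ : Ω} (hy : y ∈ P)
    (hw : w ∈ P) (hyw : ¬ SameCycle τ₂ y w) (hr : S τ₂ y = r) (hs : S τ₂ w = s)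
    (hz₁ : z₁ ∉ D) (hz₂ : z₂ ∉ D) (hz : z₁ ≠ z₂) :
    ∃ τ₁' τ₂', St (insert z₂ (insert z₁ D)) τ₁' τ₂' (insert z₂ (insert z₁ P))
      (2 ::ₘ A) ((r + s + 2) ::ₘ B) ∧ S τ₁' z₁ = 2 ∧ S τ₂' z₁ = r + s + 2 := by
  have hyD := h.sub hy
  have hwD := h.sub hw
  have hz1' : z₁ ∉ insert z₂ D := by simp [hz₁, hz]
  have m := mg_right hyw
  have T := m.type h.t2 hyD hwD hr hs
  have m2 := mg_right (T.not_sc hyD hz₂)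
  have hS : S (τ₂ * swap y w) y = r + s := by rw [m.S_left, hr, hs]
  have m3 := mg_right ((T.hook hyD hz₂ hS m2).not_sc (Finset.mem_insert_of_mem hwD) hz1')
  obtain ⟨T2, -, s2⟩ := T.hook2 hyD m.sc hz₂ hz₁ hz.symm hS m2 m3
  rw [Finset.insert_comm] at T2
  obtain ⟨h1, h2, -⟩ := h.coreE hy hw (fun h' => hyw (h' ▸ SameCycle.refl _ _)) hz₁ hz₂ hz T2
    (fun x hx => by
      obtain ⟨p, hp, hxp⟩ := h.m2 x hx
      exact ⟨p, hp, m3.mono (m2.mono (m.mono hxp))⟩)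
  exact ⟨_, _, h1, h2, s2⟩

/-- splitting a cycle of `τ₂` -/
theorem St.opE {r s : ℕ} (h : St D τ₁ τ₂ P A ((r + s) ::ₘ B)) {y w z₁ z₂ : Ω} (hy : y ∈ P)
    (hw : w ∈ P) (hne : y ≠ w) (hyw : SameCycle τ₂ y w) (hr : S (τ₂ * swap y w) y = r)
    (hs : S (τ₂ * swap y w) w = s)
    (hz₁ : z₁ ∉ D) (hz₂ : z₂ ∉ D) (hz : z₁ ≠ z₂) :
    ∃ τ₁' τ₂', St (insert z₂ (insert z₁ D)) τ₁' τ₂' (insert z₂ (insert z₁ P))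
      (2 ::ₘ A) ((s + 1) ::ₘ (r + 1) ::ₘ B) ∧ S τ₁' z₁ = 2 ∧ SameCycle τ₁' z₁ z₂ ∧
      S τ₂' z₁ = s + 1 ∧ S τ₂' z₂ = r + 1 ∧ ¬ SameCycle τ₂' z₁ z₂ := by
  have hyD := h.sub hy
  have hwD := h.sub hw
  have hz1' : z₁ ∉ insert z₂ D := by simp [hz₁, hz]
  have m := split hne hyw
  have T := m.type_rev h.t2 hyD hwD hr hs
  have m2 := mg_right (T.not_sc hyD hz₂)
  have hz2w : ¬ SameCycle (τ₂ * swap y w) z₂ w := fun h' => T.not_sc hwD hz₂ h'.symm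
  have T1 := T.hook hyD hz₂ hr m2
  have hns : ¬ SameCycle (τ₂ * swap y w * swap y z₂) y w := by
    rw [m2.sc_left]
    exact fun h' => h'.elim m.1 hz2w
  have hS : S (τ₂ * swap y w * swap y z₂) w = s := by rw [m2.S_out hns, hs]
  rw [Multiset.cons_swap] at T1
  have m3 := mg_right (T1.not_sc (Finset.mem_insert_of_mem hwD) hz1')
  have T2 := T1.hook (Finset.mem_insert_of_mem hwD) hz1' hS m3
  have hns2 : ¬ SameCycle (τ₂ * swap y w * swap y z₂ * swap w z₁) w z₂ := by
    rw [m3.sc_left]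
    rintro (h' | h')
    · exact hns (m2.sc.trans h'.symm)
    · exact T1.not_sc (Finset.mem_insert_self _ _) hz1' h'.symm
  rw [Finset.insert_comm] at T2
  obtain ⟨h1, h2, h3⟩ := h.coreE hy hw hne hz₁ hz₂ hz T2 (fun x hx => by
      obtain ⟨p, hp, hxp⟩ := h.m2 x hx
      rcases (m.2 x p).1 hxp with h' | ⟨h' | h', -⟩
      · exact ⟨p, hp, m3.mono (m2.mono h')⟩
      · exact ⟨y, hy, (m3.mono (m2.mono h')).symm⟩
      · exact ⟨w, hw, (m3.mono (m2.mono h')).symm⟩)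
  refine ⟨_, _, h1, h2, h3, ?_, ?_, fun h' => hns2 (m3.sc.trans h')⟩
  · rw [m3.S_right, hS, T1.S_out hz1']
  · rw [m3.S_out hns2, m2.S_right, hr, T.S_out hz₂]

end

theorem fresh {D : Finset Ω} (h : D.card < Fintype.card Ω) : ∃ z, z ∉ D := by
  by_contra hc
  push Not at hc
  rw [Finset.eq_univ_of_forall hc, Finset.card_univ] at h
  exact lt_irrefl _ h

theorem fresh2 {D : Finset Ω} (h : D.card + 2 ≤ Fintype.card Ω) :
    ∃ z₁ z₂, z₁ ∉ D ∧ z₂ ∉ D ∧ z₁ ≠ z₂ ∧ (insert z₂ (insert z₁ D)).card = D.card + 2 := by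
  obtain ⟨z₁, h1⟩ := fresh (D := D) (by omega)
  obtain ⟨z₂, h2⟩ := fresh (D := insert z₁ D) (by rw [Finset.card_insert_of_notMem h1]; omega)
  refine ⟨z₁, z₂, h1, fun h => h2 (by simp [h]), fun h => h2 (by simp [h]), ?_⟩
  rw [Finset.card_insert_of_notMem h2, Finset.card_insert_of_notMem h1]

theorem card2 {P : Finset Ω} {z₁ z₂ : Ω} (h1 : z₁ ∉ P) (h2 : z₂ ∉ P) (h : z₁ ≠ z₂) :
    (insert z₂ (insert z₁ P)).card = P.card + 2 := by
  rw [Finset.card_insert_of_notMem (by simp [h2, h.symm]), Finset.card_insert_of_notMem h1]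

variable (Ω) in
/-- realizability of the pair of types `A`, `B` on `N` points of `Ω`, product an `n`-cycle -/
def R (n N : ℕ) (A B : Multiset ℕ) : Prop :=
  ∃ (D : Finset Ω) (τ₁ τ₂ : Perm Ω) (P : Finset Ω), St D τ₁ τ₂ P A B ∧ P.card = n ∧ D.card = N

variable (Ω) in
/-- pointed version -/
def PT (n N k l : ℕ) (A B : Multiset ℕ) : Prop :=
  ∃ (D : Finset Ω) (τ₁ τ₂ : Perm Ω) (P : Finset Ω) (z : Ω),
    St D τ₁ τ₂ P (k ::ₘ A) (l ::ₘ B) ∧ P.card = n ∧ D.card = N ∧ z ∈ D ∧ S τ₁ z = k ∧ S τ₂ z = l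

variable (Ω) in
/-- doubly pointed version -/
def PT2 (n N k r s : ℕ) (A B : Multiset ℕ) : Prop :=
  ∃ (D : Finset Ω) (τ₁ τ₂ : Perm Ω) (P : Finset Ω) (z w : Ω),
    St D τ₁ τ₂ P (k ::ₘ A) (r ::ₘ s ::ₘ B) ∧ P.card = n ∧ D.card = N ∧ z ∈ D ∧ w ∈ D ∧
      S τ₁ z = k ∧ SameCycle τ₁ z w ∧ S τ₂ z = r ∧ S τ₂ w = s ∧ ¬ SameCycle τ₂ z w

theorem R.symm {n N : ℕ} {A B : Multiset ℕ} (h : R Ω n N A B) : R Ω n N B A := by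
  obtain ⟨D, τ₁, τ₂, P, h, h1, h2⟩ := h
  exact ⟨D, _, _, P, h.symm, h1, h2⟩

theorem PT.iter {n N k l : ℕ} {A B : Multiset ℕ} (h : PT Ω n N k l A B) (j : ℕ)
    (hj : N + j ≤ Fintype.card Ω) : PT Ω n (N + j) (k + j) (l + j) A B := by
  induction j with
  | zero => exact h
  | succ j ih =>
    obtain ⟨D, τ₁, τ₂, P, y, h, h1, h2, h3, h4, h5⟩ := ih (by omega)
    obtain ⟨z, hz⟩ := fresh (D := D) (by omega)
    have m1 := mg_right (h.t1.not_sc h3 hz)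
    have m2 := mg_left (h.t2.not_sc h3 hz)
    refine ⟨_, _, _, _, y, h.dup h3 h4 h5 hz, h1, ?_, Finset.mem_insert_of_mem h3, ?_, ?_⟩
    · rw [Finset.card_insert_of_notMem hz, h2]; rfl
    · rw [m1.S_left, h4, h.t1.S_out hz]; rfl
    · rw [m2.S_left, h5, h.t2.S_out hz]; rfl

theorem PT.toR {n N k l : ℕ} {A B : Multiset ℕ} (h : PT Ω n N k l A B) :
    R Ω n N (k ::ₘ A) (l ::ₘ B) := by
  obtain ⟨D, τ₁, τ₂, P, y, h, h1, h2, -⟩ := h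
  exact ⟨D, τ₁, τ₂, P, h, h1, h2⟩

theorem PT2.symm {n N k r s : ℕ} {A B : Multiset ℕ} (h : PT2 Ω n N k r s A B) :
    PT2 Ω n N k s r A B := by
  obtain ⟨D, τ₁, τ₂, P, z, w, h, h1, h2, h3, h4, h5, h6, h7, h8, h9⟩ := h
  rw [Multiset.cons_swap] at h
  exact ⟨D, τ₁, τ₂, P, w, z, h, h1, h2, h4, h3, by rw [← S_congr h6, h5], h6.symm, h8, h7,
    fun h => h9 h.symm⟩

theorem PT2.iter {n N k r s : ℕ} {A B : Multiset ℕ} (h : PT2 Ω n N k r s A B) (j : ℕ)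
    (hj : N + j ≤ Fintype.card Ω) : PT2 Ω n (N + j) (k + j) (r + j) s A B := by
  induction j with
  | zero => exact h
  | succ j ih =>
    obtain ⟨D, τ₁, τ₂, P, y, w, h, h1, h2, h3, h3w, h4, hw, h5, h6, h7⟩ := ih (by omega)
    obtain ⟨z, hz⟩ := fresh (D := D) (by omega)
    have m1 := mg_right (h.t1.not_sc h3 hz)
    have m2 := mg_left (h.t2.not_sc h3 hz)
    have hn : ¬ SameCycle (swap y z * τ₂) y w := by
      rw [m2.sc_left]
      rintro (h' | h')
      · exact h7 h'
      · exact h.t2.not_sc h3w hz h'.symm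
    refine ⟨_, _, _, _, y, w, h.dup h3 h4 h5 hz, h1, ?_, Finset.mem_insert_of_mem h3,
      Finset.mem_insert_of_mem h3w, ?_, m1.mono hw, ?_, ?_, hn⟩
    · rw [Finset.card_insert_of_notMem hz, h2]; rfl
    · rw [m1.S_left, h4, h.t1.S_out hz]; rfl
    · rw [m2.S_left, h5, h.t2.S_out hz]; rfl
    · rw [m2.S_out hn, h6]

theorem PT2.toR {n N k r s : ℕ} {A B : Multiset ℕ} (h : PT2 Ω n N k r s A B) :
    R Ω n N (k ::ₘ A) (r ::ₘ s ::ₘ B) := by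
  obtain ⟨D, τ₁, τ₂, P, y, w, h, h1, h2, -⟩ := h
  exact ⟨D, τ₁, τ₂, P, h, h1, h2⟩

theorem R.base (h : 0 < Fintype.card Ω) : R Ω 1 1 {1} {1} := by
  obtain ⟨x⟩ := Fintype.card_pos_iff.1 h
  have hS : ∀ y : Ω, S (1 : Perm Ω) y = 1 := by
    intro y
    rw [S, Finset.card_eq_one]
    exact ⟨y, by ext u; simp [eq_comm]⟩
  have hT : HasType {x} (1 : Perm Ω) {1} := by
    refine ⟨fun y _ u hu => ?_, by simp, fun k => ?_⟩
    · simpa [eq_comm] using hu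
    · simp only [hS]
      by_cases hk : k = 1
      · subst hk; simp
      · rw [Multiset.count_eq_zero.2 (by simpa using hk), Finset.filter_false_of_mem]
        · simp
        · intro _ _ h'; exact hk h'.symm
  have hM : Meets {x} {x} (1 : Perm Ω) := fun y hy => ⟨y, hy, SameCycle.refl _ _⟩
  refine ⟨{x}, 1, 1, {x}, ⟨hT, hT, ⟨fun _ _ => by simp, ?_⟩, Finset.Subset.refl _, hM, hM⟩,
    by simp, by simp⟩
  intro u hu v hv
  rw [Finset.mem_singleton] at hu hv
  rw [hu, hv]

theorem R.opG {n N a b : ℕ} {A B : Multiset ℕ} (h : R Ω n N A (b ::ₘ B)) (ha : 0 < a)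
    (hN : N + a ≤ Fintype.card Ω) : R Ω (n + 1) (N + a) (a ::ₘ A) ((b + a) ::ₘ B) := by
  obtain ⟨D, τ₁, τ₂, P, h, h1, h2⟩ := h
  obtain ⟨z, hz⟩ := fresh (D := D) (by omega)
  obtain ⟨w, hw, hwb⟩ := h.t2.exists_mem
  obtain ⟨y, hy, hwy⟩ := h.m2 w hw
  have hyb : S τ₂ y = b := by rw [← S_congr hwy, hwb]
  have m2 := mg_right (h.t2.not_sc (h.sub hy) hz)
  have : PT Ω (n + 1) (N + 1) 1 (b + 1) A B := by
    refine ⟨_, _, _, _, z, h.addB hy hyb hz, ?_, ?_, Finset.mem_insert_self _ _,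
      h.t1.S_out hz, ?_⟩
    · rw [Finset.card_insert_of_notMem (fun h' => hz (h.sub h')), h1]
    · rw [Finset.card_insert_of_notMem hz, h2]
    · rw [m2.S_right, hyb, h.t2.S_out hz]
  have := (this.iter (a - 1) (by omega)).toR
  have e1 : N + 1 + (a - 1) = N + a := by omega
  have e2 : 1 + (a - 1) = a := by omega
  have e3 : b + 1 + (a - 1) = b + a := by omega
  rwa [e1, e2, e3] at this

theorem R.opC {n N a b : ℕ} {A B : Multiset ℕ} (h : R Ω n N (a ::ₘ A) (b ::ₘ B)) (e : ℕ)
    (hN : N + (2 + e) ≤ Fintype.card Ω) :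
    R Ω (n + 2) (N + (2 + e)) ((a + (2 + e)) ::ₘ A) ((b + (2 + e)) ::ₘ B) := by
  obtain ⟨D, τ₁, τ₂, P, h, h1, h2⟩ := h
  obtain ⟨z₁, z₂, hz1, hz2, hz, hc⟩ := fresh2 (D := D) (by omega)
  obtain ⟨w', hw', hwb⟩ := h.t2.exists_mem
  obtain ⟨w, hw, hww⟩ := h.m2 w' hw'
  obtain ⟨y', hy', hya⟩ := h.t1.exists_mem
  obtain ⟨y, hy, hyy⟩ := h.m1 y' hy'
  rw [S_congr hww] at hwb
  rw [S_congr hyy] at hya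
  obtain ⟨τ₁', τ₂', h', s1, s2⟩ := h.opC hy hw hya hwb hz1 hz2 hz
  have : PT Ω (n + 2) (N + 2) (a + 2) (b + 2) A B := by
    refine ⟨_, _, _, _, z₁, h', ?_, ?_, by simp, s1, s2⟩
    · rw [card2 (fun h' => hz1 (h.sub h')) (fun h' => hz2 (h.sub h')) hz, h1]
    · rw [hc, h2]
  have := (this.iter e (by omega)).toR
  simpa only [add_assoc] using this

theorem R.opH {n N k r s : ℕ} {A B : Multiset ℕ} (h : R Ω n N A (r ::ₘ s ::ₘ B)) (hk : 2 ≤ k)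
    (hN : N + k ≤ Fintype.card Ω) :
    R Ω (n + 2) (N + k) (k ::ₘ A) ((r + s + k) ::ₘ B) := by
  obtain ⟨D, τ₁, τ₂, P, h, h1, h2⟩ := h
  obtain ⟨z₁, z₂, hz1, hz2, hz, hc⟩ := fresh2 (D := D) (by omega)
  obtain ⟨y', hy', w', hw', hyr, hws, hns⟩ := h.t2.exists_mem2
  obtain ⟨w, hw, hww⟩ := h.m2 w' hw'
  obtain ⟨y, hy, hyy⟩ := h.m2 y' hy'
  rw [S_congr hww] at hws
  rw [S_congr hyy] at hyr
  obtain ⟨τ₁', τ₂', h', s1, s2⟩ := h.opH hy hw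
    (fun h' => hns ((hyy.trans h').trans hww.symm)) hyr hws hz1 hz2 hz
  have : PT Ω (n + 2) (N + 2) 2 (r + s + 2) A B := by
    refine ⟨_, _, _, _, z₁, h', ?_, ?_, by simp, s1, s2⟩
    · rw [card2 (fun h' => hz1 (h.sub h')) (fun h' => hz2 (h.sub h')) hz, h1]
    · rw [hc, h2]
  have := (this.iter (k - 2) (by omega)).toR
  have e1 : N + 2 + (k - 2) = N + k := by omega
  have e2 : 2 + (k - 2) = k := by omega
  have e3 : r + s + 2 + (k - 2) = r + s + k := by omega
  rwa [e1, e2, e3] at this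

theorem St.opE' {D P : Finset Ω} {τ₁ τ₂ : Perm Ω} {n N r s u v : ℕ} {A B : Multiset ℕ}
    (h : St D τ₁ τ₂ P A ((r + s) ::ₘ B))
    (h1 : P.card = n) (h2 : D.card = N) {y w : Ω} (hy : y ∈ P)
    (hw : w ∈ P) (hne : y ≠ w) (hyw : SameCycle τ₂ y w) (hr : S (τ₂ * swap y w) y = r)
    (hs : S (τ₂ * swap y w) w = s) (hu : 0 < u) (hv : 0 < v)
    (hN : N + (u + v) ≤ Fintype.card Ω) :
    R Ω (n + 2) (N + (u + v)) ((u + v) ::ₘ A) ((r + u) ::ₘ (s + v) ::ₘ B) := by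
  obtain ⟨z₁, z₂, hz1, hz2, hz, hc⟩ := fresh2 (D := D) (by omega)
  obtain ⟨τ₁', τ₂', h', s1, s2, s3, s4, s5⟩ := h.opE hy hw hne hyw hr hs hz1 hz2 hz
  have : PT2 Ω (n + 2) (N + 2) 2 (s + 1) (r + 1) A B := by
    refine ⟨_, _, _, _, z₁, z₂, h', ?_, ?_, by simp, by simp, s1, s2, s3, s4, s5⟩
    · rw [card2 (fun h' => hz1 (h.sub h')) (fun h' => hz2 (h.sub h')) hz, h1]
    · rw [hc, h2]
  have := ((this.iter (v - 1) (by omega)).symm.iter (u - 1) (by omega)).toR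
  have e1 : N + 2 + (v - 1) + (u - 1) = N + (u + v) := by omega
  have e2 : 2 + (v - 1) + (u - 1) = u + v := by omega
  have e3 : s + 1 + (v - 1) = s + v := by omega
  have e4 : r + 1 + (u - 1) = r + u := by omega
  rwa [e1, e2, e3, e4] at this

theorem R.opE {N r s u v : ℕ} {A B : Multiset ℕ} (h : R Ω N N A ((r + s) ::ₘ B))
    (hr : 0 < r) (hs : 0 < s) (hu : 0 < u) (hv : 0 < v)
    (hN : N + (u + v) ≤ Fintype.card Ω) :
    R Ω (N + 2) (N + (u + v)) ((u + v) ::ₘ A) ((r + u) ::ₘ (s + v) ::ₘ B) := by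
  obtain ⟨D, τ₁, τ₂, P, h, h1, h2⟩ := h
  have hPD : P = D := Finset.eq_of_subset_of_card_le h.sub (by omega)
  obtain ⟨y, hy, hys⟩ := h.t2.exists_mem
  obtain ⟨w, hne, hsc, e1, e2⟩ := split_size hr hs hys
  exact h.opE' h1 h2 (hPD ▸ hy) (hPD ▸ h.t2.mem_of_sc hy hsc) hne hsc e1 e2 hu hv hN

theorem HasType.S_mem {D : Finset Ω} {τ : Perm Ω} {A : Multiset ℕ} (h : HasType D τ A) {x : Ω}
    (hx : x ∈ D) : S τ x ∈ A := by
  have h1 : 0 < (D.filter (fun u => S τ u = S τ x)).card :=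
    Finset.card_pos.2 ⟨x, by simp [hx]⟩
  rw [h.2.2] at h1
  exact Multiset.count_pos.1 (Nat.pos_of_mul_pos_left h1)

/-- pigeonhole on the cycles of `τ` -/
theorem exists_two {D P : Finset Ω} {τ : Perm Ω} {q M : ℕ}
    (h : HasType D τ (Multiset.replicate q M)) (hP : P ⊆ D) (hq : q < P.card) :
    ∃ y ∈ P, ∃ w ∈ P, y ≠ w ∧ SameCycle τ y w := by
  have hDM : D.filter (fun x => S τ x = M) = D := by
    rw [Finset.filter_true_of_mem]
    intro x hx
    exact Multiset.eq_of_mem_replicate (h.S_mem hx)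
  have hD : D.card = M * q := by
    have := h.2.2 M
    rwa [hDM, Multiset.count_replicate_self] at this
  by_contra hc
  push Not at hc
  have hle : ∑ p ∈ P, S τ p ≤ D.card := by
    unfold S
    rw [← Finset.card_biUnion]
    · apply Finset.card_le_card
      intro u hu
      simp only [Finset.mem_biUnion, Finset.mem_filter, Finset.mem_univ, true_and] at hu
      obtain ⟨p, hp, hpu⟩ := hu
      exact h.mem_of_sc (hP hp) hpu
    · intro p hp p' hp' hne
      refine Finset.disjoint_filter.2 ?_
      intro u _ h1 h2
      exact hc p hp p' hp' hne (h1.trans h2.symm)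
  rw [Finset.sum_congr rfl (g := fun _ => M)
    (fun p hp => Multiset.eq_of_mem_replicate (h.S_mem (hP hp))), Finset.sum_const, smul_eq_mul,
    hD] at hle
  have hM : 0 < M := by
    obtain ⟨p, hp⟩ := Finset.card_pos.1 (by omega : 0 < P.card)
    rw [← Multiset.eq_of_mem_replicate (h.S_mem (hP hp))]
    exact S_pos _ _
  nlinarith

theorem R.opE_eq {n N q M : ℕ} {A : Multiset ℕ} (h : R Ω n N A (Multiset.replicate q M))
    (hq : q < n) (hN : N + M ≤ Fintype.card Ω) :
    R Ω (n + 2) (N + M) (M ::ₘ A) (Multiset.replicate (q + 1) M) := by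
  obtain ⟨D, τ₁, τ₂, P, h, h1, h2⟩ := h
  obtain ⟨y, hy, w, hw, hne, hsc⟩ := exists_two h.t2 h.sub (by omega)
  have hS : S τ₂ y = M := Multiset.eq_of_mem_replicate (h.t2.S_mem (h.sub hy))
  have m := split hne hsc
  have hs := m.S_left
  have hq0 : q ≠ 0 := by
    rintro rfl
    have := h.t2.S_mem (h.sub hy)
    simp at this
  obtain ⟨q', rfl⟩ := Nat.exists_eq_succ_of_ne_zero hq0
  have hr0 := S_pos (τ₂ * swap y w) y
  have hs0 := S_pos (τ₂ * swap y w) w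
  have hh : St D τ₁ τ₂ P A ((S (τ₂ * swap y w) y + S (τ₂ * swap y w) w) ::ₘ
      Multiset.replicate q' M) := by
    rw [← hs, hS, ← Multiset.replicate_succ]; exact h
  have := hh.opE' h1 h2 hy hw hne hsc rfl rfl hs0 hr0 (by omega)
  rw [add_comm (S (τ₂ * swap y w) w), ← hs, hS] at this
  rw [Multiset.replicate_succ, Multiset.replicate_succ]
  exact this

variable (Ω) in
/-- the inductive claim -/
def Claim (N : ℕ) : Prop := ∀ (A B : Multiset ℕ) (g e : ℕ), 0 ∉ A → 0 ∉ B → A.sum = N →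
  B.sum = N → 0 < N → A.card + B.card + 2 * g + e = N + 1 → (g = 0 → e = 0) → R Ω (N - e) N A B

theorem card_le_sum {A : Multiset ℕ} (k : ℕ) (h : ∀ a ∈ A, k ≤ a) : A.card * k ≤ A.sum := by
  have := Multiset.card_nsmul_le_sum h
  simpa using this

theorem stepG {N : ℕ} (IH : ∀ N' < N, Claim Ω N') (hN : N ≤ Fintype.card Ω) {A B : Multiset ℕ}
    {g e : ℕ} (hA : 0 ∉ A) (hB : 0 ∉ B) (sA : A.sum = N) (sB : B.sum = N)
    (hc : A.card + B.card + 2 * g + e = N + 1) (hg : g = 0 → e = 0) {a b : ℕ} (ha : a ∈ A)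
    (hb : b ∈ B) (hae : a ≤ e + 1) (hab : a < b) : R Ω (N - e) N A B := by
  obtain ⟨A, rfl⟩ := Multiset.exists_cons_of_mem ha
  obtain ⟨B, rfl⟩ := Multiset.exists_cons_of_mem hb
  simp only [Multiset.mem_cons, not_or, Multiset.sum_cons, Multiset.card_cons] at *
  have h1 := IH (N - a) (by omega) A ((b - a) ::ₘ B) g (e - (a - 1)) hA.2
    (by simp only [Multiset.mem_cons, not_or]; exact ⟨by omega, hB.2⟩) (by omega)
    (by rw [Multiset.sum_cons]; omega) (by omega) (by rw [Multiset.card_cons]; omega)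
    (by intro h; have := hg h; omega)
  have h2 := h1.opG (a := a) (by omega) (by omega)
  have cl := card_le_sum (A := A) 1 (fun x hx => Nat.pos_of_ne_zero (fun h => hA.2 (h ▸ hx)))
  have cl' := card_le_sum (A := B) 1 (fun x hx => Nat.pos_of_ne_zero (fun h => hB.2 (h ▸ hx)))
  have e1 : N - a - (e - (a - 1)) + 1 = N - e := by omega
  have e2 : N - a + a = N := by omega
  have e3 : b - a + a = b := by omega
  rwa [e1, e2, e3] at h2

theorem stepC {N : ℕ} (IH : ∀ N' < N, Claim Ω N') (hN : N ≤ Fintype.card Ω) {A B : Multiset ℕ}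
    {g e : ℕ} (hA : 0 ∉ A) (hB : 0 ∉ B) (sA : A.sum = N) (sB : B.sum = N)
    (hc : A.card + B.card + 2 * g + e = N + 1) (hg : 0 < g) {a b : ℕ} (ha : a ∈ A)
    (hb : b ∈ B) (hae : e + 3 ≤ a) (hbe : e + 3 ≤ b) : R Ω (N - e) N A B := by
  obtain ⟨A, rfl⟩ := Multiset.exists_cons_of_mem ha
  obtain ⟨B, rfl⟩ := Multiset.exists_cons_of_mem hb
  simp only [Multiset.mem_cons, not_or, Multiset.sum_cons, Multiset.card_cons] at *
  have h1 := IH (N - (2 + e)) (by omega) ((a - (2 + e)) ::ₘ A) ((b - (2 + e)) ::ₘ B) (g - 1) 0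
    (by simp only [Multiset.mem_cons, not_or]; exact ⟨by omega, hA.2⟩)
    (by simp only [Multiset.mem_cons, not_or]; exact ⟨by omega, hB.2⟩)
    (by rw [Multiset.sum_cons]; omega)
    (by rw [Multiset.sum_cons]; omega) (by omega) (by simp only [Multiset.card_cons]; omega)
    (by intro _; rfl)
  have h2 := h1.opC e (by omega)
  have e1 : N - (2 + e) - 0 + 2 = N - e := by omega
  have e2 : N - (2 + e) + (2 + e) = N := by omega
  have e3 : b - (2 + e) + (2 + e) = b := by omega
  have e4 : a - (2 + e) + (2 + e) = a := by omega
  rwa [e1, e2, e3, e4] at h2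

/-- all parts of `A` equal `e + 2`, those of `B` are at least `e + 2`, one is larger -/
theorem stepK {N : ℕ} (IH : ∀ N' < N, Claim Ω N') (hN : N ≤ Fintype.card Ω) {A B : Multiset ℕ}
    {g e : ℕ} (sA : A.sum = N) (sB : B.sum = N)
    (hc : A.card + B.card + 2 * g + e = N + 1) (hg : 0 < g) (hA : ∀ a ∈ A, a = e + 2)
    (hB : ∀ b ∈ B, e + 2 ≤ b) {b : ℕ} (hb : b ∈ B) (hbe : e + 2 < b) : R Ω (N - e) N A B := by
  have hA' := Multiset.eq_replicate_card.2 hA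
  obtain ⟨B, rfl⟩ := Multiset.exists_cons_of_mem hb
  have sA' := sA
  rw [hA', Multiset.sum_replicate, smul_eq_mul] at sA'
  rw [Multiset.sum_cons] at sB
  obtain ⟨p, hp⟩ : ∃ p, A.card = p + 2 := by
    rcases hcase : A.card with _ | _ | p
    · rw [hcase] at sA'; omega
    · rw [hcase] at sA'; omega
    · exact ⟨p, rfl⟩
  rw [hp] at hc sA'
  rw [hp, Multiset.replicate_succ] at hA'
  have hA0 : 0 ∉ Multiset.replicate (p + 1) (e + 2) := by
    intro h; have := Multiset.eq_of_mem_replicate h; omega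
  have sA0 : (Multiset.replicate (p + 1) (e + 2)).sum = N - (e + 2) := by
    rw [Multiset.sum_replicate, smul_eq_mul, ← sA']
    have : (p + 2) * (e + 2) = (p + 1) * (e + 2) + (e + 2) := by ring
    omega
  rw [hA']
  rw [Multiset.card_cons] at hc
  have hN2 : 2 * (e + 2) ≤ N := by rw [← sA']; nlinarith
  rcases Multiset.empty_or_exists_mem B with rfl | ⟨b', hb'⟩
  · simp only [Multiset.sum_zero, Multiset.card_zero] at sB hc
    have h1 := IH (N - (e + 2)) (by omega) (Multiset.replicate (p + 1) (e + 2))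
      (1 ::ₘ (b - (e + 2) - 1) ::ₘ 0) (g - 1) 0 hA0
      (by
        intro h
        rcases Multiset.mem_cons.1 h with h | h
        · omega
        rcases Multiset.mem_cons.1 h with h | h
        · omega
        · exact absurd h (Multiset.notMem_zero _))
      sA0
      (by simp only [Multiset.sum_cons, Multiset.sum_zero]; omega) (by omega)
      (by simp only [Multiset.card_replicate, Multiset.card_cons, Multiset.card_zero]; omega)
      (by intro _; rfl)
    have h2 := h1.opH (k := e + 2) (by omega) (by omega)
    have e1 : N - (e + 2) - 0 + 2 = N - e := by omega
    have e2 : N - (e + 2) + (e + 2) = N := by omega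
    have e3 : 1 + (b - (e + 2) - 1) + (e + 2) = b := by omega
    rwa [e1, e2, e3] at h2
  · have hbb := hB b' (Multiset.mem_cons_of_mem hb')
    obtain ⟨B, rfl⟩ := Multiset.exists_cons_of_mem hb'
    rw [Multiset.sum_cons] at sB
    rw [Multiset.card_cons] at hc
    have h1 := IH (N - (e + 2)) (by omega) (Multiset.replicate (p + 1) (e + 2))
      ((b - (e + 1) + (b' - 1)) ::ₘ B) g 0 hA0
      (by
        simp only [Multiset.mem_cons, not_or]
        refine ⟨by omega, fun h0 => ?_⟩
        have := hB 0 (Multiset.mem_cons_of_mem (Multiset.mem_cons_of_mem h0))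
        omega)
      sA0
      (by simp only [Multiset.sum_cons]; omega) (by omega)
      (by simp only [Multiset.card_replicate, Multiset.card_cons]; omega)
      (by intro _; rfl)
    rw [Nat.sub_zero] at h1
    have h2 := h1.opE (u := e + 1) (v := 1) (by omega) (by omega) (by omega) (by omega) (by omega)
    have e1 : N - (e + 2) + 2 = N - e := by omega
    have e2 : N - (e + 2) + (e + 1 + 1) = N := by omega
    have e3 : b - (e + 1) + (e + 1) = b := by omega
    have e4 : b' - 1 + 1 = b' := by omega
    rwa [e1, e2, e3, e4] at h2

theorem stepM {N : ℕ} (IH : ∀ N' < N, Claim Ω N') (hN : N ≤ Fintype.card Ω) {p M : ℕ}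
    {g e : ℕ} (s : p * M = N) (hc : p + p + 2 * g + e = N + 1) (hg : 0 < g) (hM : M ≤ e + 2)
    (hN0 : 0 < N) :
    R Ω (N - e) N (Multiset.replicate p M) (Multiset.replicate p M) := by
  have hM2 : 2 ≤ M := by
    by_contra h
    have : M = 0 ∨ M = 1 := by omega
    rcases this with rfl | rfl <;> omega
  obtain ⟨p, rfl⟩ : ∃ p', p = p' + 2 := by
    rcases p with _ | _ | p
    · omega
    · omega
    · exact ⟨p, rfl⟩
  have s' : (p + 1) * M = N - M := by
    rw [← s]
    have : (p + 2) * M = (p + 1) * M + M := by ring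
    omega
  have hMN : 2 * M ≤ N := by rw [← s]; nlinarith
  have hA0 : 0 ∉ Multiset.replicate (p + 1) M := by
    intro h; have := Multiset.eq_of_mem_replicate h; omega
  have sA0 : (Multiset.replicate (p + 1) M).sum = N - M := by
    rw [Multiset.sum_replicate, smul_eq_mul, s']
  have h1 := IH (N - M) (by omega) (Multiset.replicate (p + 1) M) (Multiset.replicate (p + 1) M)
    g (e - (M - 2)) hA0 hA0 sA0 sA0 (by omega) (by simp only [Multiset.card_replicate]; omega)
    (by omega)
  have h2 := h1.opE_eq (by omega) (by omega)
  have e1 : N - M - (e - (M - 2)) + 2 = N - e := by omega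
  have e2 : N - M + M = N := by omega
  rwa [e1, e2, ← Multiset.replicate_succ] at h2

theorem claim (N : ℕ) (hN : N ≤ Fintype.card Ω) : Claim Ω N := by
  induction N using Nat.strong_induction_on with
  | _ N IH0 =>
  have IH : ∀ N' < N, Claim Ω N' := fun N' h => IH0 N' h (by omega)
  clear IH0
  intro A B g e hA hB sA sB hN0 hc hg
  have hc' : B.card + A.card + 2 * g + e = N + 1 := by omega
  -- case G
  by_cases hG : ∃ a ∈ A, ∃ b ∈ B, a ≤ e + 1 ∧ a < b
  · obtain ⟨a, ha, b, hb, h1, h2⟩ := hG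
    exact stepG IH hN hA hB sA sB hc hg ha hb h1 h2
  by_cases hG' : ∃ a ∈ A, ∃ b ∈ B, b ≤ e + 1 ∧ b < a
  · obtain ⟨a, ha, b, hb, h1, h2⟩ := hG'
    exact (stepG IH hN hB hA sB sA hc' hg hb ha h1 h2).symm
  push Not at hG hG'
  have posA : ∀ a ∈ A, 1 ≤ a := fun x hx => Nat.pos_of_ne_zero (fun h => hA (h ▸ hx))
  have posB : ∀ b ∈ B, 1 ≤ b := fun x hx => Nat.pos_of_ne_zero (fun h => hB (h ▸ hx))
  obtain ⟨a₀, ha₀⟩ : ∃ a, a ∈ A := by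
    rcases Multiset.empty_or_exists_mem A with rfl | h
    · simp at sA; omega
    · exact h
  obtain ⟨b₀, hb₀⟩ : ∃ b, b ∈ B := by
    rcases Multiset.empty_or_exists_mem B with rfl | h
    · simp at sB; omega
    · exact h
  rcases Nat.eq_zero_or_pos g with rfl | hg0
  · -- genus zero
    obtain rfl := hg rfl
    have hone : ∀ {A B : Multiset ℕ}, A.sum = N → B.sum = N → A.card + B.card = N + 1 →
        (∀ a ∈ A, 1 ≤ a) → (∀ b ∈ B, 1 ≤ b) →
        (∀ a ∈ A, ∀ b ∈ B, a ≤ 0 + 1 → b ≤ a) → 1 ∈ A → N = 1 ∧ A = {1} ∧ B = {1} := by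
      intro A B sA sB hc pA pB hG h1
      have hB1 : ∀ b ∈ B, b = 1 := fun b hb => by
        have := hG 1 h1 b hb (by omega)
        have := pB b hb
        omega
      have hB2 := Multiset.eq_replicate_card.2 hB1
      have sB' := sB
      rw [hB2, Multiset.sum_replicate, smul_eq_mul, mul_one] at sB'
      have cA : A.card = 1 := by omega
      obtain ⟨x, rfl⟩ := Multiset.card_eq_one.1 cA
      rw [Multiset.mem_singleton] at h1
      subst h1
      rw [Multiset.sum_singleton] at sA
      refine ⟨sA.symm, rfl, ?_⟩
      rw [hB2, sB', ← sA]; rfl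
    by_cases h1 : 1 ∈ A
    · obtain ⟨rfl, rfl, rfl⟩ := hone sA sB (by omega) posA posB hG h1
      exact R.base (by omega)
    by_cases h2 : 1 ∈ B
    · obtain ⟨rfl, rfl, rfl⟩ := hone sB sA (by omega) posB posA
        (fun b hb a ha => hG' a ha b hb) h2
      exact R.base (by omega)
    have k1 := card_le_sum (A := A) 2 (fun x hx => by
      have := posA x hx
      have : x ≠ 1 := fun h => h1 (h ▸ hx)
      omega)
    have k2 := card_le_sum (A := B) 2 (fun x hx => by
      have := posB x hx
      have : x ≠ 1 := fun h => h2 (h ▸ hx)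
      omega)
    omega
  -- case C
  by_cases hC : ∃ a ∈ A, ∃ b ∈ B, e + 3 ≤ a ∧ e + 3 ≤ b
  · obtain ⟨a, ha, b, hb, h1, h2⟩ := hC
    exact stepC IH hN hA hB sA sB hc hg0 ha hb h1 h2
  push Not at hC
  by_cases hK : ∃ a ∈ A, ∃ b ∈ B, a < b
  · obtain ⟨a, ha, b, hb, hab⟩ := hK
    have q1 := hG a ha b hb
    have q2 := hC a ha b hb
    refine stepK IH hN sA sB hc hg0 (fun a' ha' => ?_) (fun b' hb' => ?_) hb (by omega)
    · have := hG a' ha' b hb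
      have := hC a' ha' b hb
      omega
    · have := hG' a ha b' hb'
      omega
  by_cases hK' : ∃ a ∈ A, ∃ b ∈ B, b < a
  · obtain ⟨a, ha, b, hb, hab⟩ := hK'
    have q1 := hG' a ha b hb
    have q2 := hC a ha b hb
    refine (stepK IH hN sB sA hc' hg0 (fun b' hb' => ?_) (fun a' ha' => ?_) ha (by omega)).symm
    · have := hG' a ha b' hb'
      have := hC a ha b' hb'
      omega
    · have := hG a' ha' b hb
      omega
  push Not at hK hK'
  have hAll : ∀ a ∈ A, a = b₀ := fun a ha => le_antisymm (hK' a ha b₀ hb₀) (hK a ha b₀ hb₀)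
  have hBll : ∀ b ∈ B, b = b₀ := fun b hb => by
    rw [← hAll a₀ ha₀]
    exact le_antisymm (hK a₀ ha₀ b hb) (hK' a₀ ha₀ b hb)
  have hA2 := Multiset.eq_replicate_card.2 hAll
  have hB2 := Multiset.eq_replicate_card.2 hBll
  have sA' := sA
  have sB' := sB
  rw [hA2, Multiset.sum_replicate, smul_eq_mul] at sA'
  rw [hB2, Multiset.sum_replicate, smul_eq_mul] at sB'
  have hb0 := posB b₀ hb₀
  have hcard : B.card = A.card := Nat.eq_of_mul_eq_mul_right hb0 (by rw [sA', sB'])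
  have q := hC a₀ ha₀ b₀ hb₀
  have q' := hAll a₀ ha₀
  rw [hcard] at hB2 hc
  rw [hA2, hB2]
  exact stepM IH hN sA' hc hg0 (by omega) hN0

/-- link with the cycle type of Mathlib -/
theorem cycleType_of_hasType {τ : Perm Ω} {A : Multiset ℕ} (h : HasType Finset.univ τ A) :
    τ.cycleType + Multiset.replicate (Fintype.card Ω - τ.support.card) 1 = A := by
  have hfix : ∀ x, τ x = x → S τ x = 1 := by
    intro x hx
    rw [S, Finset.card_eq_one]
    refine ⟨x, ?_⟩
    ext u
    simp only [Finset.mem_filter, Finset.mem_univ, true_and, Finset.mem_singleton]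
    constructor
    · intro hu
      exact (hu.eq_of_left hx).symm
    · rintro rfl; exact SameCycle.refl _ _
  have hS : ∀ x, τ x ≠ x → S τ x = (τ.cycleOf x).support.card := by
    intro x hx
    unfold S
    congr 1
    ext u
    rw [mem_support_cycleOf_iff]
    simp [hx]
  ext k
  rcases Nat.eq_zero_or_pos k with rfl | hk
  · rw [Multiset.count_eq_zero.2 h.2.1, Multiset.count_eq_zero]
    intro h0
    rcases Multiset.mem_add.1 h0 with h0 | h0
    · exact absurd (two_le_of_mem_cycleType h0) (by omega)
    · exact absurd (Multiset.eq_of_mem_replicate h0) (by omega)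
  apply Nat.eq_of_mul_eq_mul_left hk
  rw [← h.2.2 k, Multiset.count_add]
  by_cases hk1 : k = 1
  · subst hk1
    have e0 : Multiset.count 1 τ.cycleType = 0 := by
      rw [Multiset.count_eq_zero]
      intro h0
      exact absurd (two_le_of_mem_cycleType h0) (by omega)
    rw [e0, Multiset.count_replicate_self, zero_add, one_mul, ← Finset.card_compl]
    congr 1
    ext x
    simp only [Finset.mem_compl, mem_support, not_not, Finset.mem_filter, Finset.mem_univ,
      true_and]
    refine ⟨hfix x, fun h1 => ?_⟩
    by_contra hx
    rw [hS x hx] at h1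
    have := (isCycle_cycleOf τ hx).two_le_card_support
    omega
  · have e0 : Multiset.count k (Multiset.replicate (Fintype.card Ω - τ.support.card) 1) = 0 := by
      rw [Multiset.count_eq_zero]
      intro h0
      exact hk1 (Multiset.eq_of_mem_replicate h0)
    rw [e0, add_zero, cycleType_def, Multiset.count_map]
    have hmaps : ∀ x ∈ Finset.univ.filter (fun x => S τ x = k),
        τ.cycleOf x ∈ τ.cycleFactorsFinset.filter (fun c => k = c.support.card) := by
      intro x hx
      simp only [Finset.mem_filter, Finset.mem_univ, true_and] at hx
      have hx' : τ x ≠ x := fun h' => hk1 (by rw [← hx, hfix x h'])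
      rw [Finset.mem_filter, cycleOf_mem_cycleFactorsFinset_iff, mem_support, ← hS x hx']
      exact ⟨hx', hx.symm⟩
    rw [Finset.card_eq_sum_card_fiberwise hmaps, Finset.sum_congr rfl (g := fun _ => k)]
    · rw [Finset.sum_const, smul_eq_mul, mul_comm]
      rfl
    · intro c hc
      rw [Finset.mem_filter] at hc
      rw [hc.2]
      congr 1
      ext x
      simp only [Finset.mem_filter, Finset.mem_univ, true_and]
      constructor
      · rintro ⟨h1, rfl⟩
        have hx' : τ x ≠ x := fun h' => hk1 (by rw [hc.2, ← h1, hfix x h'])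
        rw [mem_support_cycleOf_iff]
        exact ⟨SameCycle.refl _ _, by simpa using hx'⟩
      · intro hx
        have hx2 := cycle_is_cycleOf hx hc.1
        refine ⟨?_, hx2.symm⟩
        have hx' : τ x ≠ x := by
          have := mem_cycleFactorsFinset_support_le hc.1 hx
          simpa using this
        rw [hS x hx', ← hx2]

end Boc

theorem prop_2_1 (d g p q m₁ : ℕ) (hd : 0 < d) (hg : 0 < g)
    (hp : 0 < p) (hq : 0 < q)
    (a : Fin p → ℕ) (b : Fin q → ℕ)
    (ha : ∀ i, 0 < a i) (hb : ∀ i, 0 < b i) (hm : 0 < m₁)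
    (hsa : ∑ i, a i = d) (hsb : ∑ i, b i = d)
    (hsm : m₁ = p + q - 2 + 2 * g)
    (hmd : m₁ + 1 ≤ d) :
    ∃ (τ₁ τ₂ σ₁ : Equiv.Perm (Fin d)),
      τ₁ * τ₂ * σ₁ = 1 ∧
      fullCycleType τ₁ = Finset.univ.val.map a ∧
      fullCycleType τ₂ = Finset.univ.val.map b ∧
      σ₁.IsCycle ∧ σ₁.support.card = m₁ + 1 ∧
      (∀ x y : Fin d,
        ∃ π ∈ Subgroup.closure ({τ₁, τ₂, σ₁} : Set (Equiv.Perm (Fin d))),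
          π x = y) := by
  have hA : 0 ∉ Finset.univ.val.map a := by
    intro h
    obtain ⟨i, -, hi⟩ := Multiset.mem_map.1 h
    exact absurd (ha i) (by omega)
  have hB : 0 ∉ Finset.univ.val.map b := by
    intro h
    obtain ⟨i, -, hi⟩ := Multiset.mem_map.1 h
    exact absurd (hb i) (by omega)
  obtain ⟨D, τ₁, τ₂, P, h, h1, h2⟩ := Boc.claim (Ω := Fin d) d (by simp)
    (Finset.univ.val.map a) (Finset.univ.val.map b) g (d - (m₁ + 1)) hA hB hsa hsb hd
    (by simp; omega) (by omega)
  have hD : D = Finset.univ := by rw [← Finset.card_eq_iff_eq_univ, h2, Fintype.card_fin]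
  subst hD
  have hP : P.card = m₁ + 1 := by omega
  have hmove : ∀ x ∈ P, (τ₁ * τ₂) x ≠ x := by
    intro x hx hfix
    obtain ⟨y, hy, hyx⟩ := Finset.exists_mem_ne (by omega : 1 < P.card) x
    exact hyx ((h.cy.2 x hx y hy).eq_of_left hfix).symm
  have hsupp : (τ₁ * τ₂)⁻¹.support = P := by
    ext x
    rw [Equiv.Perm.support_inv, Equiv.Perm.mem_support]
    refine ⟨fun hx => ?_, hmove x⟩
    by_contra hc
    exact hx (h.cy.1 x hc)
  refine ⟨τ₁, τ₂, (τ₁ * τ₂)⁻¹, mul_inv_cancel _, ?_, ?_, ?_, by rw [hsupp, hP], ?_⟩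
  · have := Boc.cycleType_of_hasType h.t1
    rwa [Fintype.card_fin] at this
  · have := Boc.cycleType_of_hasType h.t2
    rwa [Fintype.card_fin] at this
  · apply Equiv.Perm.IsCycle.inv
    obtain ⟨x, hx⟩ := Finset.card_pos.1 (by omega : 0 < P.card)
    refine ⟨x, hmove x hx, fun y hy => h.cy.2 x hx y ?_⟩
    by_contra hc
    exact hy (h.cy.1 y hc)
  · set G := Subgroup.closure ({τ₁, τ₂, (τ₁ * τ₂)⁻¹} : Set (Equiv.Perm (Fin d)))
    have g1 : τ₁ ∈ G := Subgroup.subset_closure (by simp)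
    have g2 : τ₂ ∈ G := Subgroup.subset_closure (by simp)
    intro x y
    obtain ⟨x', hx', i, hi⟩ := h.m1 x (Finset.mem_univ _)
    obtain ⟨y', hy', j, hj⟩ := h.m1 y (Finset.mem_univ _)
    obtain ⟨k, hk⟩ := h.cy.2 x' hx' y' hy'
    refine ⟨(τ₁ ^ j)⁻¹ * (τ₁ * τ₂) ^ k * τ₁ ^ i, ?_, ?_⟩
    · exact mul_mem (mul_mem (inv_mem (zpow_mem g1 j)) (zpow_mem (mul_mem g1 g2) k))
        (zpow_mem g1 i)
    · rw [Equiv.Perm.mul_apply, Equiv.Perm.mul_apply, hi, hk, ← hj]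
      exact (τ₁ ^ j).symm_apply_apply y
end

section
/- Let d be a positive integer and p a positive integer with p + 1 ≤ d. Suppose a : {1,...,p} → ℤ>0 and b : {1,...,p} → ℤ>0 are partitions of d, each with exactly p parts (i.e. a₁ + ⋯ + a_p = d and b₁ + ⋯ + b_p = d). Then there exist permutations τ₁, τ₂, σ₁, σ₂ in the symmetric group S_d such that: (1) τ₁ τ₂ σ₁ σ₂ = id; (2) the cycle type of τ₁ (as a partition of d, counting each fixed point as a part equal to 1) is (a₁, …, a_p), the cycle type of τ₂ is (b₁, …, b_p), and σ₁ and σ₂ are each a single cycle of length p + 1; (3) the subgroup of S_d generated by τ₁, τ₂, σ₁, σ₂ acts transitively on {1, 2, …, d}. -/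
open Equiv Equiv.Perm

section aux
variable {α : Type*} [Fintype α] [DecidableEq α]

theorem aux_sameCycle_imp {g : Perm α} (R : α → α → Prop) (hr : ∀ u, R u u)
    (ht : ∀ u v w, R u v → R v w → R u w) (hg : ∀ u, R u (g u)) {u v : α}
    (h : g.SameCycle u v) : R u v := by
  obtain ⟨n, rfl⟩ := h.exists_nat_pow_eq
  clear h
  induction n with
  | zero => simpa using hr u
  | succ n ih =>
    rw [pow_succ', Perm.mul_apply]
    exact ht _ _ _ ih (hg _)

theorem aux_merge0 {f : Perm α} {x y : α} (h : ¬ f.SameCycle x y) {u : α}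
    (hu : f.SameCycle x u) : (f * swap x y).SameCycle y u := by
  have key : ∀ i : ℕ, (f * swap x y).SameCycle y ((f ^ (i + 1)) x) := by
    intro i
    have h0 : (f * swap x y).SameCycle y (f x) := by
      have : (f * swap x y) y = f x := by simp
      rw [← this]; exact sameCycle_apply_right.2 (SameCycle.refl _ _)
    induction i with
    | zero => simpa using h0
    | succ i ih =>
      rw [pow_succ', Perm.mul_apply]
      set w := (f ^ (i + 1)) x with hw
      have hxw : f.SameCycle x w := ⟨(i + 1 : ℕ), by rw [zpow_natCast]⟩
      by_cases h1 : w = x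
      · rw [h1]; exact h0
      · have h2 : w ≠ y := fun e => h (e ▸ hxw)
        have : (f * swap x y) w = f w := by
          rw [Perm.mul_apply, swap_apply_of_ne_of_ne h1 h2]
        rw [← this]
        exact sameCycle_apply_right.2 ih
  obtain ⟨i, hi, -, rfl⟩ := hu.exists_pow_eq''
  obtain ⟨j, rfl⟩ : ∃ j, i = j + 1 := ⟨i - 1, by omega⟩
  exact key j

theorem aux_merge2 {f : Perm α} {x y : α} (h : ¬ f.SameCycle x y) :
    (f * swap x y).SameCycle x y :=
  (aux_merge0 h (SameCycle.refl _ _)).symm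

theorem aux_merge1 {f : Perm α} {x y : α} (h : ¬ f.SameCycle x y) {u v : α}
    (huv : f.SameCycle u v) : (f * swap x y).SameCycle u v := by
  refine aux_sameCycle_imp (fun u v => (f * swap x y).SameCycle u v) (fun u => SameCycle.refl _ _)
    (fun _ _ _ => SameCycle.trans) (fun u => ?_) huv
  by_cases h1 : u = x
  · subst h1
    have : (f * swap u y) y = f u := by simp
    rw [← this]; exact sameCycle_apply_right.2 (aux_merge2 h)
  by_cases h2 : u = y
  · subst h2
    have : (f * swap x u) x = f u := by simp
    rw [← this]; exact sameCycle_apply_right.2 (aux_merge2 h).symm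
  have : (f * swap x y) u = f u := by
    rw [Perm.mul_apply, swap_apply_of_ne_of_ne h1 h2]
  rw [← this]; exact sameCycle_apply_right.2 (SameCycle.refl _ _)

theorem aux_merge3 {f : Perm α} {x y : α} {u v : α}
    (huv : (f * swap x y).SameCycle u v) : f.SameCycle u v ∨
      ((f.SameCycle x u ∨ f.SameCycle y u) ∧ (f.SameCycle x v ∨ f.SameCycle y v)) := by
  refine aux_sameCycle_imp (fun u v => f.SameCycle u v ∨
      ((f.SameCycle x u ∨ f.SameCycle y u) ∧ (f.SameCycle x v ∨ f.SameCycle y v)))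
      (fun u => Or.inl (SameCycle.refl _ _)) ?_ (fun u => ?_) huv
  · intro u v w h1 h2
    rcases h1 with h1 | ⟨h1, h1'⟩ <;> rcases h2 with h2 | ⟨h2, h2'⟩
    · exact Or.inl (h1.trans h2)
    · exact Or.inr ⟨h2.imp (fun h => h.trans h1.symm) (fun h => h.trans h1.symm), h2'⟩
    · exact Or.inr ⟨h1, h1'.imp (fun h => h.trans h2) (fun h => h.trans h2)⟩
    · exact Or.inr ⟨h1, h2'⟩
  · rw [Perm.mul_apply]
    by_cases h1 : u = x
    · subst h1
      right; exact ⟨Or.inl (SameCycle.refl _ _), Or.inr (by simp [SameCycle.refl])⟩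
    by_cases h2 : u = y
    · subst h2
      right; exact ⟨Or.inr (SameCycle.refl _ _), Or.inl (by simp [SameCycle.refl])⟩
    left
    rw [swap_apply_of_ne_of_ne h1 h2]
    exact sameCycle_apply_right.2 (SameCycle.refl _ _)

theorem aux_join (l : List α) : ∀ (f : Perm α) (y : α),
    (y :: l).Pairwise (fun s t => ¬ f.SameCycle s t) →
    (∀ u v, f.SameCycle u v → (f * (y :: l).formPerm).SameCycle u v) ∧
    ∀ z ∈ l, (f * (y :: l).formPerm).SameCycle y z := by
  induction l with
  | nil => intro f y _; simp
  | cons z l ih =>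
    intro f y hp
    rw [List.formPerm_cons_cons, ← mul_assoc]
    rw [List.pairwise_cons, List.pairwise_cons] at hp
    obtain ⟨hy, hz, hl⟩ := hp
    have hyz := hy z (by simp)
    have hp' : (z :: l).Pairwise (fun s t => ¬ (f * swap y z).SameCycle s t) := by
      rw [List.pairwise_cons]
      constructor
      · intro w hw hs
        rcases aux_merge3 hs with h | ⟨-, h | h⟩
        · exact hz w hw h
        · exact hy w (by simp [hw]) h
        · exact hz w hw h
      · refine hl.imp_of_mem ?_
        intro s t hs ht hst h
        rcases aux_merge3 h with h | ⟨-, h | h⟩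
        · exact hst h
        · exact hy t (by simp [ht]) h
        · exact hz t ht h
    obtain ⟨h1, h2⟩ := ih (f * swap y z) z hp'
    have hyz' := h1 _ _ (aux_merge2 hyz)
    refine ⟨fun u v h => h1 _ _ (aux_merge1 hyz h), fun w hw => ?_⟩
    rcases List.mem_cons.1 hw with rfl | hw
    · exact hyz'
    · exact hyz'.trans (h2 w hw)

theorem aux_transversal [Nonempty α] (f : Perm α) : ∃ T : Finset α,
    T.card = Multiset.card f.cycleType + (Fintype.card α - f.support.card) ∧
    (∀ s ∈ T, ∀ t ∈ T, f.SameCycle s t → s = t) ∧ ∀ u, ∃ t ∈ T, f.SameCycle t u := by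
  have hex : ∀ c : Perm α, ∃ x, c ∈ f.cycleFactorsFinset → x ∈ c.support := by
    intro c
    by_cases hc : c ∈ f.cycleFactorsFinset
    · obtain ⟨x, hx⟩ := (mem_cycleFactorsFinset_iff.1 hc).1.nonempty_support
      exact ⟨x, fun _ => hx⟩
    · exact ⟨Classical.arbitrary α, fun h => absurd h hc⟩
  choose r hr using hex
  have hcyc : ∀ c ∈ f.cycleFactorsFinset, c = f.cycleOf (r c) :=
    fun c hc => cycle_is_cycleOf (hr c hc) hc
  have hsup : ∀ c ∈ f.cycleFactorsFinset, r c ∈ f.support :=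
    fun c hc => mem_cycleFactorsFinset_support_le hc (hr c hc)
  refine ⟨f.cycleFactorsFinset.image r ∪ f.supportᶜ, ?_, ?_, ?_⟩
  · rw [Finset.card_union_of_disjoint, Finset.card_compl, Finset.card_image_of_injOn]
    · rw [cycleType_def]; simp
    · intro c hc c' hc' h
      rw [hcyc c hc, hcyc c' hc', h]
    · rw [Finset.disjoint_left]
      intro x hx hx'
      obtain ⟨c, hc, rfl⟩ := Finset.mem_image.1 hx
      exact (Finset.mem_compl.1 hx') (hsup c hc)
  · intro s hs t ht hst
    by_cases hf : s ∈ f.support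
    · have hf' : t ∈ f.support := hst.mem_support_iff.1 hf
      simp only [Finset.mem_union, Finset.mem_image, Finset.mem_compl, hf, hf', not_true,
        or_false] at hs ht
      obtain ⟨c, hc, rfl⟩ := hs
      obtain ⟨c', hc', rfl⟩ := ht
      have := hst.cycleOf_eq
      rw [← hcyc c hc, ← hcyc c' hc'] at this
      rw [this]
    · exact hst.eq_of_left (notMem_support.1 hf)
  · intro u
    by_cases hu : u ∈ f.support
    · have hc := cycleOf_mem_cycleFactorsFinset_iff.2 hu
      refine ⟨r (f.cycleOf u), ?_, ?_⟩
      · exact Finset.mem_union_left _ (Finset.mem_image_of_mem _ hc)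
      · have := hcyc _ hc
        exact ((sameCycle_iff_cycleOf_eq_of_mem_support hu (hsup _ hc)).2 this).symm
    · exact ⟨u, Finset.mem_union_right _ (Finset.mem_compl.2 hu), SameCycle.refl _ _⟩

theorem aux_core [Nonempty α] (f : Perm α) (hf : f ≠ 1) : ∃ (s : Perm α) (x : α),
    s.IsCycle ∧
    s.support.card = Multiset.card f.cycleType + (Fintype.card α - f.support.card) + 1 ∧
    (f * s) x = x ∧ s x ≠ x ∧ ∀ y z, y ≠ x → z ≠ x → (f * s).SameCycle y z := by
  obtain ⟨T, hT, hinj, hsurj⟩ := aux_transversal f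
  obtain ⟨z, hz⟩ : ∃ z, f z ≠ z := by
    by_contra! h
    exact hf (Equiv.ext h)
  obtain ⟨x2, hx2, hs⟩ := hsurj z
  have hfx : f x2 ≠ x2 := fun h => hz (hs.apply_eq_self_iff.1 h)
  obtain ⟨x1, hx1⟩ : ∃ x1, x1 = f x2 := ⟨_, rfl⟩
  have hne : x1 ≠ x2 := hx1 ▸ hfx
  have hx1T : x1 ∉ T := by
    intro h
    apply hne
    refine hinj _ h _ hx2 ?_
    rw [hx1]; simp [SameCycle.refl]
  obtain ⟨f', hf'⟩ : ∃ f', f' = f * swap x1 x2 := ⟨_, rfl⟩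
  have hff' : f = f' * swap x1 x2 := by rw [hf', mul_assoc, swap_mul_self, mul_one]
  have hfix : f' x1 = x1 := by rw [hf']; simp [hx1]
  have hfixe : ∀ u, f'.SameCycle x1 u → u = x1 := fun u h => (h.eq_of_left hfix).symm
  have hns : ¬ f'.SameCycle x1 x2 := fun h => hne (hfixe _ h).symm
  have hup : ∀ u v, f'.SameCycle u v → f.SameCycle u v := by
    intro u v h; rw [hff']; exact aux_merge1 hns h
  have hdown : ∀ u v, u ≠ x1 → v ≠ x1 → f.SameCycle u v → f'.SameCycle u v := by
    intro u v hu hv h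
    rw [hff'] at h
    rcases aux_merge3 h with h | ⟨h1, h2⟩
    · exact h
    · have h1 := h1.resolve_left (fun h => hu (hfixe _ h))
      have h2 := h2.resolve_left (fun h => hv (hfixe _ h))
      exact h1.symm.trans h2
  obtain ⟨l, hl⟩ : ∃ l, l = (T.erase x2).toList := ⟨_, rfl⟩
  have hmem : ∀ t, t ∈ x2 :: l ↔ t ∈ T := by
    intro t
    rw [List.mem_cons, hl, Finset.mem_toList, Finset.mem_erase]
    by_cases h : t = x2
    · simp [h, hx2]
    · simp [h]
  have hnd : (x2 :: l).Nodup := by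
    rw [List.nodup_cons, hl]
    exact ⟨by simp, Finset.nodup_toList _⟩
  have hlen : (x2 :: l).length = T.card := by
    rw [List.length_cons, hl, Finset.length_toList, Finset.card_erase_add_one hx2]
  have hpw : (x2 :: l).Pairwise (fun s t => ¬ f'.SameCycle s t) := by
    refine hnd.imp_of_mem ?_
    intro s t hs ht hst h
    exact hst (hinj s ((hmem s).1 hs) t ((hmem t).1 ht) (hup _ _ h))
  have hx1l : x1 ∉ x2 :: l := fun h => hx1T ((hmem _).1 h)
  have hnd' : (x1 :: x2 :: l).Nodup := List.nodup_cons.2 ⟨hx1l, hnd⟩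
  obtain ⟨j1, j2⟩ := aux_join l f' x2 hpw
  have hg : f * (x1 :: x2 :: l).formPerm = f' * (x2 :: l).formPerm := by
    rw [List.formPerm_cons_cons, ← mul_assoc, hf']
  have hsupp : (x1 :: x2 :: l).formPerm.support = (x1 :: x2 :: l).toFinset :=
    List.support_formPerm_of_nodup _ hnd' (by simp)
  refine ⟨(x1 :: x2 :: l).formPerm, x1, List.isCycle_formPerm hnd' (by simp), ?_, ?_, ?_, ?_⟩
  · rw [hsupp, List.toFinset_card_of_nodup hnd', List.length_cons, hlen, hT]
  · rw [hg, Perm.mul_apply, List.formPerm_apply_of_notMem hx1l, hfix]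
  · rw [← mem_support, hsupp]; simp
  · rw [hg]
    have key : ∀ y, y ≠ x1 → (f' * (x2 :: l).formPerm).SameCycle x2 y := by
      intro y hy
      obtain ⟨t, ht, hty⟩ := hsurj y
      have htx : t ≠ x1 := fun h => hx1T (h ▸ ht)
      have h1 := j1 _ _ (hdown _ _ htx hy hty)
      rcases List.mem_cons.1 ((hmem t).2 ht) with rfl | h
      · exact h1
      · exact (j2 t h).trans h1
    intro y z hy hz
    exact (key y hy).symm.trans (key z hz)

theorem aux_type {g : Perm α} {x : α} (hx : g x = x)
    (h : ∀ y z, y ≠ x → z ≠ x → g.SameCycle y z) :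
    g.cycleType = if 3 ≤ Fintype.card α then {Fintype.card α - 1} else 0 := by
  split_ifs with hc
  · have hmv : ∀ y, y ≠ x → g y ≠ y := by
      intro y hy hfix
      have : Finset.univ ⊆ ({x, y} : Finset α) := by
        intro z _
        by_cases hz : z = x
        · simp [hz]
        · have := (h y z hy hz).eq_of_left hfix
          simp [this]
      have := Finset.card_le_card this
      have h2 := Finset.card_le_two (a := x) (b := y)
      rw [Finset.card_univ] at this
      omega
    have hsupp : g.support = Finset.univ.erase x := by
      ext y
      rw [mem_support]
      by_cases hy : y = x
      · simp [hy, hx]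
      · simp [hy, hmv y hy]
    obtain ⟨y, hy⟩ : ∃ y, y ≠ x := by
      have : Nontrivial α := Fintype.one_lt_card_iff_nontrivial.1 (by omega)
      exact exists_ne x
    have hcyc : g.IsCycle := ⟨y, hmv y hy, fun z hz => h y z hy (fun e => hz (e ▸ hx))⟩
    rw [hcyc.cycleType, hsupp, Finset.card_erase_of_mem (Finset.mem_univ _), Finset.card_univ]
  · rw [cycleType_eq_zero, ← support_eq_empty_iff]
    by_contra hne
    have h2 := two_le_card_support_of_ne_one (fun e => hne (support_eq_empty_iff.2 e))
    have : g.support ⊆ Finset.univ.erase x := by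
      intro y hy
      rw [mem_support] at hy
      simp only [Finset.mem_erase, Finset.mem_univ, and_true]
      rintro rfl
      exact hy hx
    have := Finset.card_le_card this
    rw [Finset.card_erase_of_mem (Finset.mem_univ _), Finset.card_univ] at this
    omega

end aux

theorem aux_exists (d p : ℕ) (hpd : p + 1 ≤ d) (a : Fin p → ℕ) (ha : ∀ i, 0 < a i)
    (hsa : ∑ i, a i = d) : ∃ (t s : Perm (Fin d)) (x : Fin d),
    fullCycleType t = Finset.univ.val.map a ∧ s.IsCycle ∧ s.support.card = p + 1 ∧
    (t * s) x = x ∧ s x ≠ x ∧ ∀ y z, y ≠ x → z ≠ x → (t * s).SameCycle y z := by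
  obtain ⟨m, hm⟩ : ∃ m : Multiset ℕ, m = Finset.univ.val.map a := ⟨_, rfl⟩
  have hmsum : m.sum = d := by rw [hm, ← hsa]; rfl
  have hmcard : Multiset.card m = p := by rw [hm]; simp
  have hmpos : ∀ i ∈ m, 0 < i := by
    intro i hi
    rw [hm, Multiset.mem_map] at hi
    obtain ⟨j, -, rfl⟩ := hi
    exact ha j
  rw [← hm]
  have hsplit := Multiset.filter_add_not (fun i => 2 ≤ i) m
  have hones : m.filter (fun i => ¬ 2 ≤ i) =
      Multiset.replicate (Multiset.card (m.filter (fun i => ¬ 2 ≤ i))) 1 := by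
    rw [Multiset.eq_replicate]
    refine ⟨rfl, fun b hb => ?_⟩
    rw [Multiset.mem_filter] at hb
    have := hmpos b hb.1
    omega
  obtain ⟨k, hk⟩ : ∃ k, k = Multiset.card (m.filter (fun i => ¬ 2 ≤ i)) := ⟨_, rfl⟩
  rw [← hk] at hones
  have hsum : (m.filter (fun i => 2 ≤ i)).sum + k = d := by
    rw [← hmsum]
    conv_rhs => rw [← hsplit, Multiset.sum_add, hones]
    simp
  obtain ⟨t, ht⟩ := (Equiv.Perm.exists_with_cycleType_iff (Fin d)
    (m := m.filter (fun i => 2 ≤ i))).2 ⟨by rw [Fintype.card_fin]; omega, by simp⟩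
  have hsup : t.support.card = (m.filter (fun i => 2 ≤ i)).sum := by
    rw [← sum_cycleType, ht]
  have hfull : fullCycleType t = m := by
    unfold fullCycleType
    rw [ht, hsup, show d - (m.filter (fun i => 2 ≤ i)).sum = k by omega, ← hones, hsplit]
  have : Nonempty (Fin d) := ⟨⟨0, by omega⟩⟩
  have hcard : Multiset.card t.cycleType + (d - t.support.card) = p := by
    rw [← hmcard, ← hfull]; simp [fullCycleType]
  have hne : t ≠ 1 := by
    rintro rfl
    simp at hcard
    omega
  obtain ⟨s, x, h1, h2, h3⟩ := aux_core t hne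
  rw [Fintype.card_fin, hcard] at h2
  exact ⟨t, s, x, hfull, h1, h2, h3⟩

theorem aux_full_conj {d : ℕ} (t g : Perm (Fin d)) :
    fullCycleType (g * t * g⁻¹) = fullCycleType t := by
  unfold fullCycleType
  rw [cycleType_conj, card_support_conj]

/-- Lemma 2.3 (case `ℓ = 2`, `p = q = m₁ = m₂` of Proposition 1.4):
for a positive integer `d` and partitions `(a₁,…,a_p)`, `(b₁,…,b_p)` of `d`,
each with exactly `p` parts, with `p + 1 ≤ d`, there exist permutations
`τ₁, τ₂, σ₁, σ₂ ∈ S_d` with `τ₁ τ₂ σ₁ σ₂ = id`, prescribed cycle types,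
`σ₁, σ₂` cycles of length `p + 1`, generating a transitive subgroup. -/
theorem lem_2_3 (d p : ℕ) (hd : 0 < d) (hp : 0 < p) (hpd : p + 1 ≤ d)
    (a : Fin p → ℕ) (b : Fin p → ℕ)
    (ha : ∀ i, 0 < a i) (hb : ∀ i, 0 < b i)
    (hsa : ∑ i, a i = d) (hsb : ∑ i, b i = d) :
    ∃ (τ₁ τ₂ σ₁ σ₂ : Equiv.Perm (Fin d)),
      τ₁ * τ₂ * σ₁ * σ₂ = 1 ∧
      fullCycleType τ₁ = Finset.univ.val.map a ∧
      fullCycleType τ₂ = Finset.univ.val.map b ∧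
      σ₁.IsCycle ∧ σ₁.support.card = p + 1 ∧
      σ₂.IsCycle ∧ σ₂.support.card = p + 1 ∧
      (∀ x y : Fin d,
        ∃ π ∈ Subgroup.closure ({τ₁, τ₂, σ₁, σ₂} : Set (Equiv.Perm (Fin d))),
          π x = y) := by
  obtain ⟨t1, s1, x1, ft1, cs1, ns1, fx1, mx1, sc1⟩ := aux_exists d p hpd a ha hsa
  obtain ⟨t2, s2, x2, ft2, cs2, ns2, fx2, mx2, sc2⟩ := aux_exists d p hpd b hb hsb
  have hconj : IsConj (t1 * s1) (t2 * s2)⁻¹ := by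
    rw [isConj_iff_cycleType_eq, cycleType_inv, aux_type fx1 sc1, aux_type fx2 sc2]
  obtain ⟨g, hg⟩ := isConj_iff.1 hconj
  refine ⟨g * t1 * g⁻¹, t2, t2⁻¹ * (g * s1 * g⁻¹) * t2⁻¹⁻¹, s2, ?_, ?_, ft2, ?_, ?_, cs2, ns2, ?_⟩
  · calc g * t1 * g⁻¹ * t2 * (t2⁻¹ * (g * s1 * g⁻¹) * t2⁻¹⁻¹) * s2
        = (g * (t1 * s1) * g⁻¹) * (t2 * s2) := by group
      _ = 1 := by rw [hg, inv_mul_cancel]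
  · rw [aux_full_conj, ft1]
  · exact (cs1.conj).conj
  · rw [card_support_conj, card_support_conj, ns1]
  · set G := Subgroup.closure ({g * t1 * g⁻¹, t2, t2⁻¹ * (g * s1 * g⁻¹) * t2⁻¹⁻¹, s2} :
      Set (Equiv.Perm (Fin d))) with hG
    have ht : t2 ∈ G := Subgroup.subset_closure (by simp)
    have hs : s2 ∈ G := Subgroup.subset_closure (by simp)
    have key : ∀ y, ∃ π ∈ G, π (s2 x2) = y := by
      intro y
      by_cases hy : y = x2
      · exact ⟨s2⁻¹, inv_mem hs, by simp [hy]⟩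
      · obtain ⟨n, hn⟩ := sc2 _ y mx2 hy
        exact ⟨_, zpow_mem (mul_mem ht hs) n, hn⟩
    intro x y
    obtain ⟨π, hπ, h1⟩ := key x
    obtain ⟨π', hπ', h2⟩ := key y
    refine ⟨π' * π⁻¹, mul_mem hπ' (inv_mem hπ), ?_⟩
    rw [← h1, ← h2]
    simp
end
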